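/- arXiv:1401.6843 — 2 statements merged into one kernel-verified Lean document; each statement's English description precedes it below -/
import Mathlib

section
/- For every 1 ≤ i ≤ n²/2, the endomorphism algebra End_u(P_{2i,0} ⊕ P_{n²−2i+2,1}) of the left u-module P_{2i,0} ⊕ P_{n²−2i+2,1} is isomorphic, as a k-algebra, to the 8-dimensional algebra Λ := k⟨g,x,y⟩/(x², y², g²−1, gx+xg, gy+yg, xy−yx). -/
noncomputable section

open scoped TensorProduct

namespace QFL

/-- The defining relations of the quasi-Frobenius-Lusztig kernel `ũ_q(sl₂)`,
on the free algebra on four generators `K = ι 0`, `K̂ = ι 1`, `E = ι 2`, `F = ι 3`. -/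
inductive Rel (k : Type) [Field k] (n : ℕ) (q : k) :
    FreeAlgebra k (Fin 4) → FreeAlgebra k (Fin 4) → Prop
  | Kord : Rel k n q (FreeAlgebra.ι k (0 : Fin 4) ^ n) 1
  | Khord : Rel k n q (FreeAlgebra.ι k (1 : Fin 4) ^ n)
      ((FreeAlgebra.ι k (0 : Fin 4) ^ (n - 1)) ^ 2)
  | KKh : Rel k n q (FreeAlgebra.ι k (0 : Fin 4) * FreeAlgebra.ι k (1 : Fin 4))
      (FreeAlgebra.ι k (1 : Fin 4) * FreeAlgebra.ι k (0 : Fin 4))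
  | KE : Rel k n q
      (FreeAlgebra.ι k (0 : Fin 4) * FreeAlgebra.ι k (2 : Fin 4) *
        FreeAlgebra.ι k (0 : Fin 4) ^ (n - 1))
      (q ^ n • FreeAlgebra.ι k (2 : Fin 4))
  | KF : Rel k n q
      (FreeAlgebra.ι k (0 : Fin 4) * FreeAlgebra.ι k (3 : Fin 4) *
        FreeAlgebra.ι k (0 : Fin 4) ^ (n - 1))
      ((q ^ n)⁻¹ • FreeAlgebra.ι k (3 : Fin 4))
  | KhE : Rel k n q
      (FreeAlgebra.ι k (1 : Fin 4) * FreeAlgebra.ι k (2 : Fin 4) *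
        FreeAlgebra.ι k (1 : Fin 4) ^ (n ^ 2 - 1))
      ((q ^ n * (q ^ 2)⁻¹) • FreeAlgebra.ι k (2 : Fin 4))
  | KhF : Rel k n q
      (FreeAlgebra.ι k (1 : Fin 4) * FreeAlgebra.ι k (3 : Fin 4) *
        FreeAlgebra.ι k (1 : Fin 4) ^ (n ^ 2 - 1))
      (((q ^ n)⁻¹ * q ^ 2) • FreeAlgebra.ι k (3 : Fin 4))
  | Enil : Rel k n q (FreeAlgebra.ι k (2 : Fin 4) ^ n ^ 2) 0
  | Fnil : Rel k n q (FreeAlgebra.ι k (3 : Fin 4) ^ n ^ 2) 0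
  | EF : Rel k n q
      (FreeAlgebra.ι k (3 : Fin 4) * FreeAlgebra.ι k (2 : Fin 4) -
        q⁻¹ • (FreeAlgebra.ι k (2 : Fin 4) * FreeAlgebra.ι k (3 : Fin 4)))
      (1 - FreeAlgebra.ι k (0 : Fin 4) ^ (n - 1) * FreeAlgebra.ι k (1 : Fin 4))

/-- The algebra `ũ_q(sl₂)` as the quotient of the free algebra by the defining relations. -/
abbrev U (k : Type) [Field k] (n : ℕ) (q : k) := RingQuot (Rel k n q)

variable (k : Type) [Field k] (n : ℕ) (q : k)

def K : U k n q := RingQuot.mkAlgHom k (Rel k n q) (FreeAlgebra.ι k (0 : Fin 4))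
def Kh : U k n q := RingQuot.mkAlgHom k (Rel k n q) (FreeAlgebra.ι k (1 : Fin 4))
def E : U k n q := RingQuot.mkAlgHom k (Rel k n q) (FreeAlgebra.ι k (2 : Fin 4))
def F : U k n q := RingQuot.mkAlgHom k (Rel k n q) (FreeAlgebra.ι k (3 : Fin 4))

/-- `K⁻¹ = K^(n-1)`. -/
def Kinv : U k n q := K k n q ^ (n - 1)
/-- `K̂⁻¹ = K̂^(n²-1)`. -/
def Khinv : U k n q := Kh k n q ^ (n ^ 2 - 1)

/-- `φ_{2i} = (2/n²) Σ_{t<n²/2} q^{-2it} (K⁻¹K̂)^t`. -/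
def phi (i : ℕ) : U k n q :=
  ((n ^ 2 : k)⁻¹ * 2) • ∑ t ∈ Finset.range (n ^ 2 / 2),
    (q⁻¹ ^ (2 * i * t)) • (Kinv k n q * Kh k n q) ^ t

/-- `𝟙₀ = (1/2)(1 + KK̂^(n/2))` and `𝟙₁ = (1/2)(1 - KK̂^(n/2))`. -/
def oneJ (j : ℕ) : U k n q :=
  if j = 0 then (2 : k)⁻¹ • (1 + K k n q * Kh k n q ^ (n / 2))
  else (2 : k)⁻¹ • (1 - K k n q * Kh k n q ^ (n / 2))

/-- The idempotent `e_{2i,j} = φ_{2i} 𝟙_j`. -/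
def eIdem (i j : ℕ) : U k n q := phi k n q i * oneJ k n q j

/-- `α_{2i,j} = F^(n²-1) e_{2i,j}`. -/
def alpha (i j : ℕ) : U k n q := F k n q ^ (n ^ 2 - 1) * eIdem k n q i j

/-- `β_{2i,j} = E^(2i-2) α_{2i,j}`. -/
def beta (i j : ℕ) : U k n q := E k n q ^ (2 * i - 2) * alpha k n q i j

/-- The Gaussian number `s_q = 1 + q + ⋯ + q^(s-1)`. -/
def gauss (x : k) (s : ℕ) : k := ∑ t ∈ Finset.range s, x ^ t

/-- The span of the PBW-type monomials `F^a K^c K̂^d E^b` with `a ≤ n²-2`, `b ≤ n²-1`,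
`c ≤ n-1`, `d ≤ n²-1`. -/
def pbw : Submodule k (U k n q) :=
  Submodule.span k {x | ∃ a b c d : ℕ, a ≤ n ^ 2 - 2 ∧ b ≤ n ^ 2 - 1 ∧ c ≤ n - 1 ∧
    d ≤ n ^ 2 - 1 ∧ x = F k n q ^ a * K k n q ^ c * Kh k n q ^ d * E k n q ^ b}

/-- `γ_{2i,j}`: the unique element of the PBW span with `F·γ = β_{2i,j}`. -/
def gam (i j : ℕ) : U k n q :=
  @dite _ (∃! x, x ∈ pbw k n q ∧ F k n q * x = beta k n q i j)
    (Classical.propDecidable _) (fun h => h.choose) (fun _ => 0)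

/-- The left ideal `P_{2i,j} = u·γ_{2i,j}`. -/
def P (i j : ℕ) : Submodule (U k n q) (U k n q) :=
  Submodule.span (U k n q) {gam k n q i j}

/-- `S_{2i,j} = Soc(P_{2i,j})`, the sum of all simple submodules of `P_{2i,j}`. -/
def S (i j : ℕ) : Submodule (U k n q) (U k n q) :=
  sSup {N : Submodule (U k n q) (U k n q) | N ≤ P k n q i j ∧ IsSimpleModule (U k n q) N}

end QFL

namespace QFL

/-- The defining relations of the 8-dimensional algebra
`Λ = k⟨g,x,y⟩/(x², y², g²-1, gx+xg, gy+yg, xy-yx)`, with `g = ι 0`, `x = ι 1`, `y = ι 2`. -/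
inductive LambdaRel (k : Type) [Field k] :
    FreeAlgebra k (Fin 3) → FreeAlgebra k (Fin 3) → Prop
  | x2 : LambdaRel k (FreeAlgebra.ι k (1 : Fin 3) ^ 2) 0
  | y2 : LambdaRel k (FreeAlgebra.ι k (2 : Fin 3) ^ 2) 0
  | g2 : LambdaRel k (FreeAlgebra.ι k (0 : Fin 3) ^ 2) 1
  | gx : LambdaRel k (FreeAlgebra.ι k (0 : Fin 3) * FreeAlgebra.ι k (1 : Fin 3))
      (-(FreeAlgebra.ι k (1 : Fin 3) * FreeAlgebra.ι k (0 : Fin 3)))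
  | gy : LambdaRel k (FreeAlgebra.ι k (0 : Fin 3) * FreeAlgebra.ι k (2 : Fin 3))
      (-(FreeAlgebra.ι k (2 : Fin 3) * FreeAlgebra.ι k (0 : Fin 3)))
  | xy : LambdaRel k (FreeAlgebra.ι k (1 : Fin 3) * FreeAlgebra.ι k (2 : Fin 3))
      (FreeAlgebra.ι k (2 : Fin 3) * FreeAlgebra.ι k (1 : Fin 3))

/-- The basic algebra `Λ`. -/
abbrev Lambda (k : Type) [Field k] := RingQuot (LambdaRel k)

end QFL

/-!
Besides `E` and `F`, the algebra `u` is generated by two torus elements: `L = K⁻¹ * K̂`, with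
`L ^ (n ^ 2 / 2) = 1`, and an involution `Z` anticommuting with `E` and `F`. Acting on a torus
eigenvector `v` with `F v = 0`, the vector `F (E ^ s v)` is an explicit multiple of `E ^ (s - 1) v`,
and when `v` has `L`-weight `q ^ (r - 1)` this multiple vanishes for exactly one `0 < s < n ^ 2`,
namely `s = r`.

Hence `P_{2i,j}` has a basis made of two strings `E ^ s α`, `E ^ s γ`, and homomorphisms out of it
are determined by the image of `γ`, which may be any vector `g` having the torus weight of `γ` such
that `F g = E ^ (r - 1) a` for a lowest weight vector `a` of the weight of `α`. The kernel of `F` is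
spanned by `α` and `E ^ r α`, so for a pair of projectives `V`, `V'` of the same block each of the
four spaces of homomorphisms is two-dimensional. They give a double quiver `X, Y : V → V'`,
`X', Y' : V' → V` with relations `X' X = 0 = Y' Y`, `X' Y = Y' X` and symmetrically on `V'`, whose
path algebra is `Λ` with `g` acting by `1` on `V` and by `-1` on `V'`.

Explicit induced modules, with basis `F ^ a * E ^ b ⊗ 1`, show that `E ^ (n ^ 2 - 1) α ≠ 0` and that
`γ` is unique; it exists because `F` divides `E ^ (2 i - 2) * F ^ (n ^ 2 - 1)` on the left.
-/

namespace QFL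

section SkewCommute

variable {k A V : Type*} [CommRing k] [Ring A] [Algebra k A]
  [AddCommGroup V] [Module k V] [Module A V] [IsScalarTower k A V]
  {c c' l p : k} {x x' y L : A} {v : V}

/-- Commutation of `x` and `y` up to the scalar `c`. -/
def SkewCommute (c : k) (x y : A) : Prop := x * y = c • (y * x)

namespace SkewCommute

theorem mul_left (h : SkewCommute c x y) (h' : SkewCommute c' x' y) :
    SkewCommute (c * c') (x * x') y := by
  unfold SkewCommute at *
  rw [mul_assoc, h', mul_smul_comm, ← mul_assoc, h, smul_mul_assoc, smul_smul, mul_comm c',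
    mul_assoc]

theorem pow_left (h : SkewCommute c x y) : ∀ m : ℕ, SkewCommute (c ^ m) (x ^ m) y
  | 0 => by simp [SkewCommute]
  | m + 1 => by simpa only [pow_succ] using (h.pow_left m).mul_left h

theorem mul_right (h : SkewCommute c x y) (h' : SkewCommute c' x x') :
    SkewCommute (c * c') x (y * x') := by
  unfold SkewCommute at *
  rw [← mul_assoc, h, smul_mul_assoc, mul_assoc, h', mul_smul_comm, smul_smul, mul_assoc]

theorem pow_right (h : SkewCommute c x y) : ∀ m : ℕ, SkewCommute (c ^ m) x (y ^ m)
  | 0 => by simp [SkewCommute]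
  | m + 1 => by simpa only [pow_succ] using (h.pow_right m).mul_right h

theorem smul_smul (h : SkewCommute c x y) (hv : x • v = l • v) :
    x • y • v = (c * l) • y • v := by
  rw [← mul_smul, h, smul_assoc, mul_smul, hv, smul_comm y l v, ← mul_smul]

theorem smul_pow_smul (h : SkewCommute c x y) (hv : x • v = l • v) (s : ℕ) :
    x • y ^ s • v = (c ^ s * l) • y ^ s • v :=
  (h.pow_right s).smul_smul hv

end SkewCommute

theorem pow_smul_eq_of_smul_eq (hv : x • v = l • v) (s : ℕ) : x ^ s • v = l ^ s • v := by
  induction s with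
  | zero => simp
  | succ s ih => rw [pow_succ, mul_smul, hv, smul_comm, ih, ← mul_smul, pow_succ']

/-- The scalar by which `x` lowers `y ^ s • v` in `smul_pow_smul_of_commutator`: with
`[s] = 1 + p + ⋯ + p ^ (s - 1)` it is `c [s] (1 - p ^ (s - 1) l)`. -/
def commCoeff (c p l : k) (s : ℕ) : k :=
  c * (∑ t ∈ Finset.range s, p ^ t) * (1 - p ^ (s - 1) * l)

@[simp]
theorem commCoeff_zero (c p l : k) : commCoeff c p l 0 = 0 := by simp [commCoeff]

theorem commCoeff_succ (c p l : k) (s : ℕ) :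
    commCoeff c p l (s + 1) = p * commCoeff c p l s + c * (1 - (p ^ 2) ^ s * l) := by
  have left := geom_sum_succ (x := p) (n := s)
  have right := geom_sum_succ' (x := p) (n := s)
  cases s with
  | zero => simp [commCoeff]
  | succ s =>
    simp only [commCoeff, Nat.add_sub_cancel]
    linear_combination (c - c * p ^ (s + 1) * l) * left
      + c * p ^ (s + 1) * l * (left - right)

theorem smul_pow_smul_of_commutator (h : x * y = p • (y * x) + c • (1 - L))
    (hL : SkewCommute (p ^ 2) L y) (hv : L • v = l • v) (s : ℕ) :
    x • y ^ s • v = p ^ s • y ^ s • x • v + commCoeff c p l s • y ^ (s - 1) • v := by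
  have step (u : V) : x • y • u = p • y • x • u + c • (u - L • u) := by
    rw [← mul_smul, h, add_smul, smul_assoc, mul_smul, smul_assoc, sub_smul, one_smul]
  induction s with
  | zero => simp
  | succ s ih =>
    have lower : commCoeff c p l s • y • y ^ (s - 1) • v = commCoeff c p l s • y ^ s • v := by
      cases s with
      | zero => simp
      | succ s => rw [Nat.add_sub_cancel, pow_succ' y s, mul_smul]
    rw [pow_succ' y s, mul_smul, step, ih, hL.smul_pow_smul hv, smul_add, smul_comm y (p ^ s),
      smul_comm y (commCoeff c p l s), lower, commCoeff_succ, pow_succ' p s, Nat.add_sub_cancel,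
      mul_smul y (y ^ s) (x • v)]
    generalize y • y ^ s • x • v = u
    generalize y ^ s • v = w
    module

end SkewCommute

theorem SkewCommute.symm {k A : Type*} [Field k] [Ring A] [Algebra k A] {c : k} {x y : A}
    (hc : c ≠ 0) (h : SkewCommute c x y) : SkewCommute c⁻¹ y x := by
  rw [SkewCommute, h, inv_smul_smul₀ hc]

section Generation

variable {k A V V' : Type*} [CommRing k] [Ring A] [Algebra k A]
  [AddCommGroup V] [Module k V] [AddCommGroup V'] [Module k V'] {s : Set A}

theorem map_mem_of_adjoin_eq_top (hs : Algebra.adjoin k s = ⊤) (ρ : A →ₐ[k] Module.End k V)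
    {S : Submodule k V} (hS : ∀ a ∈ s, ∀ v ∈ S, ρ a v ∈ S) (a : A) {v : V} (hv : v ∈ S) :
    ρ a v ∈ S := by
  have ha : a ∈ Algebra.adjoin k s := hs ▸ Algebra.mem_top
  induction ha using Algebra.adjoin_induction generalizing v with
  | mem a ha => exact hS a ha v hv
  | algebraMap c => simpa using S.smul_mem c hv
  | add a b _ _ iha ihb => simpa using S.add_mem (iha hv) (ihb hv)
  | mul a b _ _ iha ihb => simpa using iha (ihb hv)

theorem intertwines_of_adjoin_eq_top (hs : Algebra.adjoin k s = ⊤) (ρ : A →ₐ[k] Module.End k V)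
    (ρ' : A →ₐ[k] Module.End k V') {f : V →ₗ[k] V'} (hf : ∀ a ∈ s, f ∘ₗ ρ a = ρ' a ∘ₗ f) (a : A) :
    f ∘ₗ ρ a = ρ' a ∘ₗ f := by
  have ha : a ∈ Algebra.adjoin k s := hs ▸ Algebra.mem_top
  induction ha using Algebra.adjoin_induction with
  | mem a ha => exact hf a ha
  | algebraMap c => ext v; simp
  | add a b _ _ iha ihb => rw [map_add, map_add, LinearMap.comp_add, iha, ihb, LinearMap.add_comp]
  | mul a b _ _ iha ihb =>
    rw [map_mul, map_mul, Module.End.mul_eq_comp, Module.End.mul_eq_comp, ← LinearMap.comp_assoc,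
      iha, LinearMap.comp_assoc, ihb, LinearMap.comp_assoc]

end Generation

section QuantumRelations

variable {k A V : Type*} [Field k] [Ring A] [Algebra k A] [AddCommGroup V] [Module A V]

/-- A presentation of `ũ_q(sl₂)`, with `N = n²`, in which `K` and `K̂` are replaced by the torus
elements `L = K⁻¹K̂` and `Z = KK̂^(n/2)`. Only `L` enters the relation between `E` and `F`, while
`Z` is a grading involution. -/
structure QuantumRelations (N : ℕ) (q : k) (L Z E F : A) : Prop where
  L_pow : L ^ (N / 2) = 1
  Z_sq : Z ^ 2 = 1
  commute : Commute L Z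
  L_E : SkewCommute (q⁻¹ ^ 2) L E
  L_F : SkewCommute (q ^ 2) L F
  Z_E : SkewCommute (-1 : k) Z E
  Z_F : SkewCommute (-1 : k) Z F
  E_pow : E ^ N = 0
  F_pow : F ^ N = 0
  F_mul_E : F * E = q⁻¹ • (E * F) + (1 - L)

namespace QuantumRelations

variable {N : ℕ} {q l : k} {L Z E F : A} {v : V}

theorem E_pow_smul_eq_zero (Q : QuantumRelations N q L Z E F) {s : ℕ} (h : N ≤ s) (v : V) :
    E ^ s • v = 0 := by
  rw [pow_eq_zero_of_le h Q.E_pow, zero_smul]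

variable [Module k V] [IsScalarTower k A V]

theorem E_mul_F (Q : QuantumRelations N q L Z E F) (hq : q ≠ 0) :
    E * F = q • (F * E) + (-q) • (1 - L) := by
  rw [Q.F_mul_E, smul_add, smul_smul, mul_inv_cancel₀ hq]
  module

theorem F_smul_E_pow_smul (Q : QuantumRelations N q L Z E F) (hv : L • v = l • v) (s : ℕ) :
    F • E ^ s • v = q⁻¹ ^ s • E ^ s • F • v + commCoeff 1 q⁻¹ l s • E ^ (s - 1) • v :=
  smul_pow_smul_of_commutator (by rw [one_smul, Q.F_mul_E]) Q.L_E hv s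

theorem E_smul_F_pow_smul (Q : QuantumRelations N q L Z E F) (hq : q ≠ 0) (hv : L • v = l • v)
    (a : ℕ) :
    E • F ^ a • v = q ^ a • F ^ a • E • v + commCoeff (-q) q l a • F ^ (a - 1) • v :=
  smul_pow_smul_of_commutator (Q.E_mul_F hq) Q.L_F hv a

end QuantumRelations

end QuantumRelations

/-- The coordinate space of the module induced from a character of the torus generated by `L`
and `Z`; its basis vector `w k N a b` stands for `F ^ a * E ^ b ⊗ 1`. -/
abbrev Induced (k : Type*) [Field k] (N : ℕ) := Fin N × Fin N → k

namespace Induced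

variable {k V : Type*} [Field k] [AddCommGroup V] [Module k V] {N : ℕ}

/-- The monomial basis of `Induced k N`, extended by zero to all pairs of exponents. -/
def w (k : Type*) [Field k] (N a b : ℕ) : Induced k N :=
  if h : a < N ∧ b < N then Pi.single (⟨a, h.1⟩, ⟨b, h.2⟩) 1 else 0

theorem w_of_lt {a b : ℕ} (ha : a < N) (hb : b < N) :
    w k N a b = Pi.basisFun k (Fin N × Fin N) (⟨a, ha⟩, ⟨b, hb⟩) := by
  rw [w, dif_pos ⟨ha, hb⟩, Pi.basisFun_apply]

theorem w_eq_zero {a b : ℕ} (h : N ≤ a ∨ N ≤ b) : w k N a b = 0 := dif_neg (by omega)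

theorem hom_ext {f g : Induced k N →ₗ[k] V} (h : ∀ a b, f (w k N a b) = g (w k N a b)) : f = g :=
  (Pi.basisFun k (Fin N × Fin N)).ext fun x => by
    simpa only [← w_of_lt x.1.2 x.2.2] using h x.1 x.2

/-- The linear map with prescribed values on the basis vectors. -/
def ofMonomials (N : ℕ) (f : ℕ → ℕ → V) : Induced k N →ₗ[k] V :=
  (Pi.basisFun k (Fin N × Fin N)).constr k fun x => f x.1 x.2

theorem ofMonomials_w {f : ℕ → ℕ → V} (hf : ∀ a b, N ≤ a ∨ N ≤ b → f a b = 0) (a b : ℕ) :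
    ofMonomials N f (w k N a b) = f a b := by
  by_cases h : a < N ∧ b < N
  · rw [w_of_lt h.1 h.2, ofMonomials, Module.Basis.constr_basis]
  · have h : N ≤ a ∨ N ≤ b := by omega
    rw [hf a b h, w_eq_zero h, map_zero]

/-- The operator scaling the basis vectors by `c`. -/
def diag (N : ℕ) (c : ℕ → ℕ → k) : Module.End k (Induced k N) :=
  ofMonomials N fun a b => c a b • w k N a b

/-- Multiplication by `F`. -/
def opF (k : Type*) [Field k] (N : ℕ) : Module.End k (Induced k N) :=
  ofMonomials N fun a b => w k N (a + 1) b

/-- Multiplication by `E` when `L` has eigenvalue `l` on the generator. -/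
def opE (N : ℕ) (q l : k) : Module.End k (Induced k N) :=
  ofMonomials N fun a b =>
    q ^ a • w k N a (b + 1) + commCoeff (-q) q ((q⁻¹ ^ 2) ^ b * l) a • w k N (a - 1) b

/-- The eigenvalue on `w k N a b` of a torus element that commutes with `E` and `F` up to `d` and
`d'` and has eigenvalue `l` on the generator. -/
def weight (d d' l : k) (a b : ℕ) : k := d' ^ a * (d ^ b * l)

@[simp]
theorem diag_w (c : ℕ → ℕ → k) (a b : ℕ) : diag N c (w k N a b) = c a b • w k N a b :=
  ofMonomials_w (fun _ _ h => by rw [w_eq_zero h, smul_zero]) a b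

@[simp]
theorem opF_w (a b : ℕ) : opF k N (w k N a b) = w k N (a + 1) b :=
  ofMonomials_w (fun _ _ _ => w_eq_zero (by omega)) a b

theorem opF_pow_w (s a b : ℕ) : (opF k N ^ s) (w k N a b) = w k N (a + s) b := by
  induction s with
  | zero => simp
  | succ s ih => rw [pow_succ', Module.End.mul_apply, ih, opF_w, add_assoc]

theorem commCoeff_eq_zero_of_isPrimitiveRoot {q : k} (hN : 1 < N) (hq : IsPrimitiveRoot q N)
    (c l : k) : commCoeff c q l N = 0 := by
  rw [commCoeff, hq.geom_sum_eq_zero hN, mul_zero, zero_mul]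

variable {q l z : k}

theorem opE_w (hN : 1 < N) (hq : IsPrimitiveRoot q N) (a b : ℕ) :
    opE N q l (w k N a b) =
      q ^ a • w k N a (b + 1) + commCoeff (-q) q ((q⁻¹ ^ 2) ^ b * l) a • w k N (a - 1) b := by
  refine ofMonomials_w (fun a b h => ?_) a b
  rw [w_eq_zero (b := b + 1) (by omega), smul_zero, zero_add]
  obtain rfl | h : a = N ∨ (N ≤ a - 1 ∨ N ≤ b) := by omega
  · rw [commCoeff_eq_zero_of_isPrimitiveRoot hN hq, zero_smul]
  · rw [w_eq_zero h, smul_zero]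

theorem opE_pow_w_zero (hN : 1 < N) (hq : IsPrimitiveRoot q N) (s b : ℕ) :
    (opE N q l ^ s) (w k N 0 b) = w k N 0 (b + s) := by
  induction s with
  | zero => simp
  | succ s ih => simp [pow_succ', Module.End.mul_apply, ih, opE_w hN hq, add_assoc]

theorem diag_commute (c c' : ℕ → ℕ → k) : Commute (diag N c) (diag N c') :=
  hom_ext fun a b => by
    simp only [Module.End.mul_apply, diag_w, map_smul, smul_smul, mul_comm]

variable {d d' m : k}

theorem diag_weight_pow_eq_one {s : ℕ} (hd : d ^ s = 1) (hd' : d' ^ s = 1) (hm : m ^ s = 1) :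
    diag N (weight d d' m) ^ s = 1 :=
  hom_ext fun a b => by
    have h := pow_smul_eq_of_smul_eq (V := Induced k N) (x := diag N (weight d d' m))
      (diag_w _ a b) s
    rw [weight, mul_pow, mul_pow, pow_right_comm, hd', pow_right_comm, hd, hm, one_pow, one_pow,
      one_mul, one_mul, one_smul] at h
    exact h

theorem diag_weight_skewCommute_opF : SkewCommute d' (diag N (weight d d' m)) (opF k N) :=
  hom_ext fun a b => by
    simp only [Module.End.mul_apply, LinearMap.smul_apply, diag_w, opF_w, map_smul, smul_smul,
      weight, pow_succ', mul_assoc]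

theorem diag_weight_skewCommute_opE (hN : 1 < N) (hq : IsPrimitiveRoot q N) (h : d * d' = 1) :
    SkewCommute d (diag N (weight d d' m)) (opE N q l) :=
  hom_ext fun a b => by
    simp only [Module.End.mul_apply, LinearMap.smul_apply, diag_w, opE_w hN hq, map_smul, map_add,
      weight]
    cases a with
    | zero => simp [pow_succ', mul_smul]
    | succ a =>
      rw [Nat.add_sub_cancel]
      match_scalars
      · ring
      · linear_combination
          -(d' ^ a * d ^ b * m * commCoeff (-q) q ((q⁻¹ ^ 2) ^ b * l) (a + 1)) * h

theorem opF_mul_opE (hN : 1 < N) (hq : IsPrimitiveRoot q N) :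
    opF k N * opE N q l = q⁻¹ • (opE N q l * opF k N) + (1 - diag N (weight (q⁻¹ ^ 2) (q ^ 2) l)) :=
  hom_ext fun a b => by
    have hinv : q * q⁻¹ = 1 := mul_inv_cancel₀ (hq.ne_zero (by omega))
    have raise : commCoeff (-q) q ((q⁻¹ ^ 2) ^ b * l) a • w k N (a - 1 + 1) b =
        commCoeff (-q) q ((q⁻¹ ^ 2) ^ b * l) a • w k N a b := by
      cases a <;> simp
    simp only [Module.End.mul_apply, LinearMap.add_apply, LinearMap.smul_apply,
      LinearMap.sub_apply, Module.End.one_apply, diag_w, opF_w, opE_w hN hq, map_smul, map_add,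
      Nat.add_sub_cancel, raise, commCoeff_succ, weight]
    match_scalars
    · linear_combination -q ^ a * hinv
    · linear_combination
        (1 - commCoeff (-q) q ((q⁻¹ ^ 2) ^ b * l) a - (q ^ 2) ^ a * ((q⁻¹ ^ 2) ^ b * l)) * hinv

theorem opE_pow_eq_zero (hN : 1 < N) (hq : IsPrimitiveRoot q N) : opE N q l ^ N = 0 := by
  have hq0 : q ≠ 0 := hq.ne_zero (by omega)
  have skew : SkewCommute (q⁻¹ ^ 2) (diag N (weight (q⁻¹ ^ 2) (q ^ 2) l)) (opE N q l) :=
    diag_weight_skewCommute_opE hN hq (by field_simp)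
  have comm (a b : ℕ) :
      opF k N ((opE N q l ^ N) (w k N a b)) = (opE N q l ^ N) (opF k N (w k N a b)) := by
    have h := smul_pow_smul_of_commutator (V := Induced k N) (c := (1 : k))
      (by rw [one_smul, opF_mul_opE hN hq]) skew (diag_w (weight (q⁻¹ ^ 2) (q ^ 2) l) a b) N
    rwa [commCoeff_eq_zero_of_isPrimitiveRoot hN hq.inv, zero_smul, add_zero, inv_pow,
      hq.pow_eq_one, inv_one, one_smul] at h
  refine hom_ext fun a b => ?_
  induction a with
  | zero => rw [opE_pow_w_zero hN hq, w_eq_zero (by omega), LinearMap.zero_apply]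
  | succ a ih => rw [← opF_w, ← comm, ih, LinearMap.zero_apply, LinearMap.zero_apply, map_zero]

theorem quantumRelations (hN : 1 < N) (hN2 : Even N) (hq : IsPrimitiveRoot q N)
    (hl : l ^ (N / 2) = 1) (hz : z ^ 2 = 1) :
    QuantumRelations N q (diag N (weight (q⁻¹ ^ 2) (q ^ 2) l)) (diag N (weight (-1) (-1) z))
      (opE N q l) (opF k N) where
  L_pow := diag_weight_pow_eq_one
    (by rw [← pow_mul, Nat.two_mul_div_two_of_even hN2, hq.inv.pow_eq_one])
    (by rw [← pow_mul, Nat.two_mul_div_two_of_even hN2, hq.pow_eq_one]) hl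
  Z_sq := diag_weight_pow_eq_one neg_one_sq neg_one_sq hz
  commute := diag_commute _ _
  L_E := diag_weight_skewCommute_opE hN hq
    (by rw [← mul_pow, inv_mul_cancel₀ (hq.ne_zero (by omega)), one_pow])
  L_F := diag_weight_skewCommute_opF
  Z_E := diag_weight_skewCommute_opE hN hq (by norm_num)
  Z_F := diag_weight_skewCommute_opF
  E_pow := opE_pow_eq_zero hN hq
  F_pow := hom_ext fun a b => by rw [opF_pow_w, w_eq_zero (by omega), LinearMap.zero_apply]
  F_mul_E := opF_mul_opE hN hq

section Lift

variable {A : Type*} [Ring A] [Algebra k A] [Module A V] {L Z E F : A} {v : V}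

/-- The linear map to a module that sends the generator to `v` and is multiplicative on
monomials. -/
def lift (N : ℕ) (E F : A) (v : V) : Induced k N →ₗ[k] V :=
  ofMonomials N fun a b => F ^ a • E ^ b • v

theorem lift_w (Q : QuantumRelations N q L Z E F) (v : V) (a b : ℕ) :
    lift N E F v (w k N a b) = F ^ a • E ^ b • v :=
  ofMonomials_w (fun a b h => by
    obtain h | h := h
    · rw [pow_eq_zero_of_le h Q.F_pow, zero_smul]
    · rw [Q.E_pow_smul_eq_zero h, smul_zero]) a b

variable [IsScalarTower k A V]

theorem lift_diag (Q : QuantumRelations N q L Z E F) {x : A} {d d' : k}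
    (hE : SkewCommute d x E) (hF : SkewCommute d' x F) (hv : x • v = l • v) :
    lift N E F v ∘ₗ diag N (weight d d' l) =
      Algebra.lsmul k k V x ∘ₗ lift N E F v :=
  hom_ext fun a b => by
    simp only [LinearMap.comp_apply, diag_w, map_smul, lift_w Q, Algebra.lsmul_coe, weight]
    rw [hF.smul_pow_smul (hE.smul_pow_smul hv b)]

theorem lift_opF (Q : QuantumRelations N q L Z E F) :
    lift N E F v ∘ₗ opF k N = Algebra.lsmul k k V F ∘ₗ lift N E F v :=
  hom_ext fun a b => by
    simp only [LinearMap.comp_apply, opF_w, lift_w Q, Algebra.lsmul_coe, pow_succ', mul_smul]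

theorem lift_opE (hN : 1 < N) (hq : IsPrimitiveRoot q N) (Q : QuantumRelations N q L Z E F)
    (hv : L • v = l • v) :
    lift N E F v ∘ₗ opE N q l = Algebra.lsmul k k V E ∘ₗ lift N E F v :=
  hom_ext fun a b => by
    simp only [LinearMap.comp_apply, opE_w hN hq, map_add, map_smul, lift_w Q, Algebra.lsmul_coe]
    rw [Q.E_smul_F_pow_smul (hq.ne_zero (by omega)) (Q.L_E.smul_pow_smul hv b), pow_succ',
      mul_smul]

end Lift

end Induced

section Torus

variable {k A : Type*} [CommRing k] [Ring A] [Algebra k A] {c : k} {x y : A} {m n : ℕ}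

theorem skewCommute_iff_mul_mul_pow (hm : m ≠ 0) (hx : x ^ m = 1) :
    SkewCommute c x y ↔ x * y * x ^ (m - 1) = c • y := by
  have right_inv : x * x ^ (m - 1) = 1 := by rw [mul_pow_sub_one hm, hx]
  have left_inv : x ^ (m - 1) * x = 1 := by rw [pow_sub_one_mul hm, hx]
  constructor
  · intro h
    rw [h, smul_mul_assoc, mul_assoc, right_inv, mul_one]
  · intro h
    rw [SkewCommute, ← smul_mul_assoc, ← h, mul_assoc _ _ x, left_inv, mul_one]

theorem half_sq_four_mul (m : ℕ) : (4 * m) ^ 2 / 2 = 8 * m ^ 2 :=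
  Nat.div_eq_of_eq_mul_left two_pos (by ring)

/-- The exponent `n (n - 2) / 4` for which `K = Z * L ^ torusExp n`, where `4 ∣ n`. -/
def torusExp (n : ℕ) : ℕ := n / 4 * (n - 2)

theorem torusExp_four_mul_succ (m : ℕ) : torusExp (4 * (m + 1)) = (m + 1) * (4 * m + 2) := by
  rw [torusExp, Nat.mul_div_cancel_left _ four_pos, show 4 * (m + 1) - 2 = 4 * m + 2 by omega]

theorem exists_eq_four_mul_succ (h4 : 4 ∣ n) (hn : n ≠ 0) : ∃ m, n = 4 * (m + 1) := by
  obtain ⟨m, rfl⟩ := h4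
  exact ⟨m - 1, by omega⟩

theorem two_mul_torusExp_add (h4 : 4 ∣ n) (hn : n ≠ 0) : 2 * torusExp n + n = n ^ 2 / 2 := by
  obtain ⟨m, rfl⟩ := exists_eq_four_mul_succ h4 hn
  rw [torusExp_four_mul_succ, half_sq_four_mul]
  ring

section Monoid

variable {M : Type*} [Monoid M] {K L Z : M}

theorem pow_half_sq_eq_one (h4 : 4 ∣ n) (h : Commute K L) (hK : K ^ n = 1)
    (hKL : K ^ 2 * L ^ n = 1) : L ^ (n ^ 2 / 2) = 1 := by
  obtain ⟨m, rfl⟩ := h4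
  have hpow := congrArg (· ^ (2 * m)) hKL
  simp only [one_pow, (h.pow_pow _ _).mul_pow, ← pow_mul] at hpow
  rwa [show 2 * (2 * m) = 4 * m by ring, hK, one_mul,
    show 4 * m * (2 * m) = (4 * m) ^ 2 / 2 by rw [half_sq_four_mul]; ring] at hpow

theorem sq_mul_mul_pow_half_eq_one (h4 : 4 ∣ n) (h : Commute K L) (hK : K ^ n = 1)
    (hKL : K ^ 2 * L ^ n = 1) : (K * (K * L) ^ (n / 2)) ^ 2 = 1 := by
  have hn2 : n / 2 * 2 = n := Nat.div_mul_cancel (dvd_trans (by norm_num) h4)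
  have hcomm : Commute K ((K * L) ^ (n / 2)) := ((Commute.refl K).mul_right h).pow_right _
  rw [hcomm.mul_pow, ← pow_mul, hn2, h.mul_pow, hK, one_mul, hKL]

theorem mul_mul_pow_half_mul_pow_torusExp (h4 : 4 ∣ n) (hn : n ≠ 0) (h : Commute K L)
    (hK : K ^ n = 1) (hKL : K ^ 2 * L ^ n = 1) :
    K * (K * L) ^ (n / 2) * L ^ torusExp n = K := by
  obtain ⟨m, rfl⟩ := exists_eq_four_mul_succ h4 hn
  have hpow : (K ^ 2 * L ^ (4 * (m + 1))) ^ (m + 1) = 1 := by rw [hKL, one_pow]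
  rw [(h.pow_pow _ _).mul_pow, ← pow_mul, ← pow_mul] at hpow
  rw [h.mul_pow, mul_assoc, mul_assoc, ← pow_add, torusExp_four_mul_succ,
    show 4 * (m + 1) / 2 = 2 * (m + 1) by omega,
    show 2 * (m + 1) + (m + 1) * (4 * m + 2) = 4 * (m + 1) * (m + 1) by ring, hpow, mul_one]

theorem torus_pow_eq_one (h4 : 4 ∣ n) (hn : n ≠ 0) (h : Commute L Z) (hL : L ^ (n ^ 2 / 2) = 1)
    (hZ : Z ^ 2 = 1) : (Z * L ^ torusExp n) ^ n = 1 := by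
  obtain ⟨m, rfl⟩ := exists_eq_four_mul_succ h4 hn
  rw [half_sq_four_mul] at hL
  rw [(h.symm.pow_right _).mul_pow, ← pow_mul, torusExp_four_mul_succ,
    show (m + 1) * (4 * m + 2) * (4 * (m + 1)) = 8 * (m + 1) ^ 2 * (2 * m + 1) by ring,
    pow_mul L, hL, one_pow, mul_one, show 4 * (m + 1) = 2 * (2 * (m + 1)) by ring, pow_mul, hZ,
    one_pow]

theorem torus_sq_mul_pow_eq_one (h4 : 4 ∣ n) (hn : n ≠ 0) (h : Commute L Z)
    (hL : L ^ (n ^ 2 / 2) = 1) (hZ : Z ^ 2 = 1) : (Z * L ^ torusExp n) ^ 2 * L ^ n = 1 := by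
  rw [(h.symm.pow_right _).mul_pow, hZ, one_mul, ← pow_mul, ← pow_add, mul_comm,
    two_mul_torusExp_add h4 hn, hL]

theorem torus_mul_pow_half (h4 : 4 ∣ n) (hn : n ≠ 0) (h : Commute L Z)
    (hL : L ^ (n ^ 2 / 2) = 1) (hZ : Z ^ 2 = 1) :
    Z * L ^ torusExp n * (Z * L ^ torusExp n * L) ^ (n / 2) = Z := by
  obtain ⟨m, rfl⟩ := exists_eq_four_mul_succ h4 hn
  rw [half_sq_four_mul] at hL
  rw [mul_assoc Z _ L, ← pow_succ, (h.symm.pow_right _).mul_pow, ← pow_mul, ← mul_assoc,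
    mul_assoc Z, ((h.pow_left _).pow_right _).eq, mul_assoc, mul_assoc, ← pow_add,
    torusExp_four_mul_succ, show 4 * (m + 1) / 2 = 2 * (m + 1) by omega, pow_mul Z, hZ, one_pow,
    one_mul, show (m + 1) * (4 * m + 2) + ((m + 1) * (4 * m + 2) + 1) * (2 * (m + 1))
      = 8 * (m + 1) ^ 2 * (m + 1) by ring, pow_mul, hL, one_pow, mul_one]

theorem mul_pow_eq_pow_sub_one_sq_iff (hn : n ≠ 0) (h : Commute K L) (hK : K ^ n = 1) :
    (K * L) ^ n = (K ^ (n - 1)) ^ 2 ↔ K ^ 2 * L ^ n = 1 := by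
  have hinv : K ^ 2 * (K ^ (n - 1)) ^ 2 = 1 := by
    rw [← (Commute.self_pow K _).mul_pow, mul_pow_sub_one hn, hK, one_pow]
  have hinv' : (K ^ (n - 1)) ^ 2 * K ^ 2 = 1 := by
    rw [← (Commute.pow_self K _).mul_pow, pow_sub_one_mul hn, hK, one_pow]
  rw [h.mul_pow, hK, one_mul]
  constructor
  · rintro h; rw [h, hinv]
  · intro h; rw [← one_mul (L ^ n), ← hinv', mul_assoc, h, mul_one]

end Monoid

end Torus

section PrimitiveRoot

variable {k : Type*} [Field k] {n : ℕ} {q : k}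

theorem pow_half_eq_neg_one {N : ℕ} (hN : N ≠ 0) (hN2 : Even N) (hq : IsPrimitiveRoot q N) :
    q ^ (N / 2) = -1 :=
  (hq.pow (Nat.pos_of_ne_zero hN) (Nat.div_two_mul_two_of_even hN2).symm).eq_neg_one_of_two_right

theorem even_sq_of_four_dvd (h4 : 4 ∣ n) : Even (n ^ 2) :=
  (even_iff_two_dvd.mpr (dvd_trans (by norm_num) h4)).pow_of_ne_zero two_ne_zero

theorem one_lt_sq_of_four_dvd (h4 : 4 ∣ n) (hn : n ≠ 0) : 1 < n ^ 2 :=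
  Nat.one_lt_pow two_ne_zero (by omega)

theorem neg_inv_sq_pow_torusExp (h4 : 4 ∣ n) (hn : n ≠ 0) (hq : IsPrimitiveRoot q (n ^ 2)) :
    -1 * (q⁻¹ ^ 2) ^ torusExp n = q ^ n := by
  have hpow : (q ^ 2) ^ torusExp n * q ^ n = -1 := by
    rw [← pow_mul, ← pow_add, two_mul_torusExp_add h4 hn,
      pow_half_eq_neg_one (by positivity) (even_sq_of_four_dvd h4) hq]
  have hq0 : q ≠ 0 := hq.ne_zero (by positivity)
  rw [inv_pow, inv_pow, ← hpow]
  field_simp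

theorem neg_sq_pow_torusExp (h4 : 4 ∣ n) (hn : n ≠ 0) (hq : IsPrimitiveRoot q (n ^ 2)) :
    -1 * (q ^ 2) ^ torusExp n = (q ^ n)⁻¹ := by
  rw [← neg_inv_sq_pow_torusExp h4 hn hq, inv_pow, inv_pow, mul_inv, inv_inv, inv_neg, inv_one]

theorem mul_pow_half_eq_neg_one (h4 : 4 ∣ n) (hn : n ≠ 0) (hq : IsPrimitiveRoot q (n ^ 2)) :
    q ^ n * (q ^ n * (q ^ 2)⁻¹) ^ (n / 2) = -1 := by
  have hn2 : 2 * (n / 2) = n := Nat.mul_div_cancel' (dvd_trans (by norm_num) h4)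
  have hexp : n * (n / 2) = n ^ 2 / 2 := by
    rw [sq, Nat.mul_div_assoc n (dvd_trans (by norm_num) h4)]
  have hq0 : q ≠ 0 := hq.ne_zero (by positivity)
  rw [mul_pow, ← pow_mul, hexp, pow_half_eq_neg_one (by positivity) (even_sq_of_four_dvd h4) hq,
    inv_pow, ← pow_mul, hn2]
  field_simp

end PrimitiveRoot

section Presentation

variable {k : Type} [Field k] {n : ℕ} {q : k}

theorem K_pow : K k n q ^ n = 1 := by
  simpa only [K, map_pow, map_one] using
    RingQuot.mkAlgHom_rel k (Rel.Kord (k := k) (n := n) (q := q))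

theorem Kh_pow : Kh k n q ^ n = (K k n q ^ (n - 1)) ^ 2 := by
  simpa only [K, Kh, map_pow] using RingQuot.mkAlgHom_rel k (Rel.Khord (k := k) (n := n) (q := q))

theorem commute_K_Kh : Commute (K k n q) (Kh k n q) := by
  simpa only [Commute, SemiconjBy, K, Kh, map_mul] using
    RingQuot.mkAlgHom_rel k (Rel.KKh (k := k) (n := n) (q := q))

theorem Kh_pow_sq : Kh k n q ^ n ^ 2 = 1 := by
  rw [sq, pow_mul, Kh_pow, pow_right_comm, pow_right_comm _ (n - 1), K_pow, one_pow, one_pow]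

theorem K_skewCommute_E (hn : n ≠ 0) : SkewCommute (q ^ n) (K k n q) (E k n q) :=
  (skewCommute_iff_mul_mul_pow hn K_pow).mpr <| by
    simpa only [K, E, map_mul, map_pow, map_smul] using
      RingQuot.mkAlgHom_rel k (Rel.KE (k := k) (n := n) (q := q))

theorem K_skewCommute_F (hn : n ≠ 0) : SkewCommute (q ^ n)⁻¹ (K k n q) (F k n q) :=
  (skewCommute_iff_mul_mul_pow hn K_pow).mpr <| by
    simpa only [K, F, map_mul, map_pow, map_smul] using
      RingQuot.mkAlgHom_rel k (Rel.KF (k := k) (n := n) (q := q))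

theorem Kh_skewCommute_E (hn : n ≠ 0) :
    SkewCommute (q ^ n * (q ^ 2)⁻¹) (Kh k n q) (E k n q) :=
  (skewCommute_iff_mul_mul_pow (pow_ne_zero 2 hn) Kh_pow_sq).mpr <| by
    simpa only [Kh, E, map_mul, map_pow, map_smul] using
      RingQuot.mkAlgHom_rel k (Rel.KhE (k := k) (n := n) (q := q))

theorem Kh_skewCommute_F (hn : n ≠ 0) :
    SkewCommute ((q ^ n)⁻¹ * q ^ 2) (Kh k n q) (F k n q) :=
  (skewCommute_iff_mul_mul_pow (pow_ne_zero 2 hn) Kh_pow_sq).mpr <| by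
    simpa only [Kh, F, map_mul, map_pow, map_smul] using
      RingQuot.mkAlgHom_rel k (Rel.KhF (k := k) (n := n) (q := q))

theorem E_pow_sq : E k n q ^ n ^ 2 = 0 := by
  simpa only [E, map_pow, map_zero] using
    RingQuot.mkAlgHom_rel k (Rel.Enil (k := k) (n := n) (q := q))

theorem F_pow_sq : F k n q ^ n ^ 2 = 0 := by
  simpa only [F, map_pow, map_zero] using
    RingQuot.mkAlgHom_rel k (Rel.Fnil (k := k) (n := n) (q := q))

theorem adjoin_generators : Algebra.adjoin k {K k n q, Kh k n q, E k n q, F k n q} = ⊤ := by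
  have hrange : RingQuot.mkAlgHom k (Rel k n q) '' Set.range (FreeAlgebra.ι k) =
      {K k n q, Kh k n q, E k n q, F k n q} := by
    rw [← Set.range_comp]
    ext x
    simp only [Set.mem_range, Function.comp_apply, Fin.exists_fin_succ, Set.mem_insert_iff,
      Set.mem_singleton_iff, K, Kh, E, F, eq_comm (a := x)]
    simp
  rw [← hrange, ← AlgHom.map_adjoin, FreeAlgebra.adjoin_range_ι, Algebra.map_top,
    AlgHom.range_eq_top]
  exact RingQuot.mkAlgHom_surjective k (Rel k n q)

variable (k n q) in
/-- The torus element `L = K⁻¹K̂`. -/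
def torusL : U k n q := Kinv k n q * Kh k n q

variable (k n q) in
/-- The grading involution `Z = KK̂^(n/2)`. -/
def torusZ : U k n q := K k n q * Kh k n q ^ (n / 2)

theorem F_mul_E : F k n q * E k n q = q⁻¹ • (E k n q * F k n q) + (1 - torusL k n q) := by
  rw [← sub_eq_iff_eq_add']
  simpa only [torusL, Kinv, K, Kh, E, F, map_sub, map_mul, map_smul, map_pow, map_one] using
    RingQuot.mkAlgHom_rel k (Rel.EF (k := k) (n := n) (q := q))

theorem K_mul_torusL (hn : n ≠ 0) : K k n q * torusL k n q = Kh k n q := by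
  rw [torusL, Kinv, ← mul_assoc, mul_pow_sub_one hn, K_pow, one_mul]

theorem commute_K_torusL : Commute (K k n q) (torusL k n q) :=
  (Commute.self_pow _ _).mul_right commute_K_Kh

theorem K_sq_mul_torusL_pow (hn : n ≠ 0) : K k n q ^ 2 * torusL k n q ^ n = 1 :=
  (mul_pow_eq_pow_sub_one_sq_iff hn commute_K_torusL K_pow).mp <| by
    rw [K_mul_torusL hn, Kh_pow]

theorem torusZ_eq (hn : n ≠ 0) :
    torusZ k n q = K k n q * (K k n q * torusL k n q) ^ (n / 2) := by
  rw [K_mul_torusL hn, torusZ]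

theorem K_eq_torus (h4 : 4 ∣ n) (hn : n ≠ 0) :
    K k n q = torusZ k n q * torusL k n q ^ torusExp n := by
  rw [torusZ_eq hn, mul_mul_pow_half_mul_pow_torusExp h4 hn commute_K_torusL K_pow
    (K_sq_mul_torusL_pow hn)]

theorem quantumRelations (h4 : 4 ∣ n) (hn : n ≠ 0) (hq : IsPrimitiveRoot q (n ^ 2)) :
    QuantumRelations (n ^ 2) q (torusL k n q) (torusZ k n q) (E k n q) (F k n q) where
  L_pow := pow_half_sq_eq_one h4 commute_K_torusL K_pow (K_sq_mul_torusL_pow hn)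
  Z_sq := by
    rw [torusZ_eq hn]
    exact sq_mul_mul_pow_half_eq_one h4 commute_K_torusL K_pow (K_sq_mul_torusL_pow hn)
  commute := by
    rw [torusZ_eq hn]
    have h := (commute_K_torusL (k := k) (n := n) (q := q)).symm
    exact h.mul_right ((h.mul_right (Commute.refl _)).pow_right _)
  L_E := by
    have scalar : (q ^ n) ^ (n - 1) * (q ^ n * (q ^ 2)⁻¹) = q⁻¹ ^ 2 := by
      rw [← mul_assoc, pow_sub_one_mul hn, ← pow_mul, ← sq, hq.pow_eq_one, one_mul, inv_pow]
    rw [← scalar]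
    exact ((K_skewCommute_E hn).pow_left _).mul_left (Kh_skewCommute_E hn)
  L_F := by
    have scalar : (q ^ n)⁻¹ ^ (n - 1) * ((q ^ n)⁻¹ * q ^ 2) = q ^ 2 := by
      rw [← mul_assoc, pow_sub_one_mul hn, inv_pow, ← pow_mul, ← sq, hq.pow_eq_one, inv_one,
        one_mul]
    rw [← scalar]
    exact ((K_skewCommute_F hn).pow_left _).mul_left (Kh_skewCommute_F hn)
  Z_E := by
    rw [← mul_pow_half_eq_neg_one h4 hn hq]
    exact (K_skewCommute_E hn).mul_left ((Kh_skewCommute_E hn).pow_left _)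
  Z_F := by
    have scalar : (q ^ n)⁻¹ * ((q ^ n)⁻¹ * q ^ 2) ^ (n / 2) = -1 := by
      rw [← inv_neg_one, ← mul_pow_half_eq_neg_one h4 hn hq, mul_inv, ← inv_pow (q ^ n * _),
        mul_inv (q ^ n), inv_inv]
    rw [← scalar]
    exact (K_skewCommute_F hn).mul_left ((Kh_skewCommute_F hn).pow_left _)
  E_pow := E_pow_sq
  F_pow := F_pow_sq
  F_mul_E := F_mul_E

theorem adjoin_torus (h4 : 4 ∣ n) (hn : n ≠ 0) :
    Algebra.adjoin k {torusL k n q, torusZ k n q, E k n q, F k n q} = ⊤ := by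
  set S := Algebra.adjoin k {torusL k n q, torusZ k n q, E k n q, F k n q}
  have mem {x} (hx : x ∈ ({torusL k n q, torusZ k n q, E k n q, F k n q} : Set (U k n q))) :
      x ∈ S := Algebra.subset_adjoin hx
  have hK : K k n q ∈ S := by
    rw [K_eq_torus h4 hn]
    exact S.mul_mem (mem (by simp)) (S.pow_mem (mem (by simp)) _)
  have hKh : Kh k n q ∈ S := by
    rw [← K_mul_torusL hn]
    exact S.mul_mem hK (mem (by simp))
  rw [eq_top_iff, ← adjoin_generators, Algebra.adjoin_le_iff]
  rintro x (rfl | rfl | rfl | rfl)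
  exacts [hK, hKh, mem (by simp), mem (by simp)]

section LiftAlgHom

variable {A : Type*} [Ring A] [Algebra k A] {L' Z' E' F' : A}

theorem lift_rel (h4 : 4 ∣ n) (hn : n ≠ 0) (hq : IsPrimitiveRoot q (n ^ 2))
    (Q : QuantumRelations (n ^ 2) q L' Z' E' F') ⦃x y : FreeAlgebra k (Fin 4)⦄
    (h : Rel k n q x y) :
    FreeAlgebra.lift k ![Z' * L' ^ torusExp n, Z' * L' ^ torusExp n * L', E', F'] x =
      FreeAlgebra.lift k ![Z' * L' ^ torusExp n, Z' * L' ^ torusExp n * L', E', F'] y := by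
  set K' := Z' * L' ^ torusExp n
  have comm : Commute K' L' := (Q.commute.symm.mul_left (Commute.pow_self L' _))
  have hK : K' ^ n = 1 := torus_pow_eq_one h4 hn Q.commute Q.L_pow Q.Z_sq
  have hKh : (K' * L') ^ n = (K' ^ (n - 1)) ^ 2 :=
    (mul_pow_eq_pow_sub_one_sq_iff hn comm hK).mpr
      (torus_sq_mul_pow_eq_one h4 hn Q.commute Q.L_pow Q.Z_sq)
  have hKh_sq : (K' * L') ^ n ^ 2 = 1 := by
    rw [sq, pow_mul, hKh, pow_right_comm, pow_right_comm _ (n - 1), hK, one_pow, one_pow]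
  have K_E : SkewCommute (q ^ n) K' E' :=
    neg_inv_sq_pow_torusExp h4 hn hq ▸ Q.Z_E.mul_left (Q.L_E.pow_left _)
  have K_F : SkewCommute (q ^ n)⁻¹ K' F' :=
    neg_sq_pow_torusExp h4 hn hq ▸ Q.Z_F.mul_left (Q.L_F.pow_left _)
  have conj_K {c : k} {y : A} (h : SkewCommute c K' y) : K' * y * K' ^ (n - 1) = c • y :=
    (skewCommute_iff_mul_mul_pow hn hK).mp h
  have conj_Kh {c : k} {y : A} (h : SkewCommute c (K' * L') y) :
      K' * L' * y * (K' * L') ^ (n ^ 2 - 1) = c • y :=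
    (skewCommute_iff_mul_mul_pow (pow_ne_zero 2 hn) hKh_sq).mp h
  have Kh_E : SkewCommute (q ^ n * (q ^ 2)⁻¹) (K' * L') E' := inv_pow q 2 ▸ K_E.mul_left Q.L_E
  cases h <;> simp only [map_mul, map_pow, map_smul, map_sub, map_one, map_zero,
    FreeAlgebra.lift_ι_apply, Matrix.cons_val]
  case Kord => exact hK
  case Khord => exact hKh
  case KKh => exact (Commute.refl K').mul_right comm
  case KE => exact conj_K K_E
  case KF => exact conj_K K_F
  case KhE => exact conj_Kh Kh_E
  case KhF => exact conj_Kh (K_F.mul_left Q.L_F)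
  case Enil => exact Q.E_pow
  case Fnil => exact Q.F_pow
  case EF => rw [← mul_assoc, pow_sub_one_mul hn, hK, one_mul, Q.F_mul_E, add_sub_cancel_left]

/-- The algebra map out of `ũ_q(sl₂)` determined by operators satisfying the quantum relations:
`K` and `K̂` are recovered from the torus as `Z * L ^ torusExp n` and `Z * L ^ torusExp n * L`. -/
def liftAlgHom (h4 : 4 ∣ n) (hn : n ≠ 0) (hq : IsPrimitiveRoot q (n ^ 2))
    (Q : QuantumRelations (n ^ 2) q L' Z' E' F') : U k n q →ₐ[k] A :=
  RingQuot.liftAlgHom k ⟨_, lift_rel h4 hn hq Q⟩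

variable (h4 : 4 ∣ n) (hn : n ≠ 0) (hq : IsPrimitiveRoot q (n ^ 2))
  (Q : QuantumRelations (n ^ 2) q L' Z' E' F')

theorem liftAlgHom_K : liftAlgHom h4 hn hq Q (K k n q) = Z' * L' ^ torusExp n := by
  simp [liftAlgHom, K]

theorem liftAlgHom_Kh : liftAlgHom h4 hn hq Q (Kh k n q) = Z' * L' ^ torusExp n * L' := by
  simp [liftAlgHom, Kh]

theorem liftAlgHom_E : liftAlgHom h4 hn hq Q (E k n q) = E' := by
  simp [liftAlgHom, E]

theorem liftAlgHom_F : liftAlgHom h4 hn hq Q (F k n q) = F' := by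
  simp [liftAlgHom, F]

theorem liftAlgHom_torusL : liftAlgHom h4 hn hq Q (torusL k n q) = L' := by
  rw [torusL, Kinv, map_mul, map_pow, liftAlgHom_K, liftAlgHom_Kh, ← mul_assoc,
    pow_sub_one_mul hn, torus_pow_eq_one h4 hn Q.commute Q.L_pow Q.Z_sq, one_mul]

theorem liftAlgHom_torusZ : liftAlgHom h4 hn hq Q (torusZ k n q) = Z' := by
  rw [torusZ, map_mul, map_pow, liftAlgHom_K, liftAlgHom_Kh,
    torus_mul_pow_half h4 hn Q.commute Q.L_pow Q.Z_sq]

end LiftAlgHom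

end Presentation

section EigenProj

variable {k A B V : Type*} [Field k] [Ring A] [Algebra k A] [Ring B] [Algebra k B]
  [AddCommGroup V] [Module k V] {l : k} {x : A} {v : V} {m : ℕ}

/-- The projector onto the `l`-eigenspace of `x`, for `x ^ m = 1` and `l ^ m = 1`. -/
def eigenProj (m : ℕ) (l : k) (x : A) : A := (m : k)⁻¹ • ∑ t ∈ Finset.range m, (l⁻¹ • x) ^ t

theorem eigenProj_two_one (x : A) : eigenProj 2 (1 : k) x = (2 : k)⁻¹ • (1 + x) := by
  simp [eigenProj, Finset.sum_range_succ]

theorem eigenProj_two_neg_one (x : A) : eigenProj 2 (-1 : k) x = (2 : k)⁻¹ • (1 - x) := by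
  simp [eigenProj, Finset.sum_range_succ, sub_eq_add_neg]

theorem mul_eigenProj (hm : m ≠ 0) (hl : l ^ m = 1) (hx : x ^ m = 1) :
    x * eigenProj m l x = l • eigenProj m l x := by
  have hl0 : l ≠ 0 := (pow_ne_zero_iff hm).mp (hl ▸ one_ne_zero)
  have hpow : (l⁻¹ • x) ^ m = 1 := by rw [smul_pow, hx, inv_pow, hl, inv_one, one_smul]
  have hsum := mul_geom_sum (l⁻¹ • x) m
  rw [hpow, sub_self, sub_mul, one_mul, sub_eq_zero, smul_mul_assoc, inv_smul_eq_iff₀ hl0] at hsum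
  rw [eigenProj, mul_smul_comm, hsum, smul_comm]

theorem eigenProj_apply {f : Module.End k V} (hl : l ≠ 0) (hm : (m : k) ≠ 0) (hv : f v = l • v) :
    eigenProj m l f v = v := by
  have hv' : (l⁻¹ • f) • v = (1 : k) • v := by
    rw [Module.End.smul_def, LinearMap.smul_apply, hv, inv_smul_smul₀ hl, one_smul]
  have hpow (t : ℕ) : ((l⁻¹ • f) ^ t) v = v := by
    simpa using pow_smul_eq_of_smul_eq hv' t
  simp [eigenProj, LinearMap.sum_apply, hpow, ← Nat.cast_smul_eq_nsmul k, hm]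

theorem map_eigenProj (f : A →ₐ[k] B) : f (eigenProj m l x) = eigenProj m l (f x) := by
  simp [eigenProj, map_sum]

theorem commute_eigenProj {y : A} (h : Commute y x) : Commute y (eigenProj m l x) :=
  .smul_right (.sum_right _ _ _ fun _ _ => (h.smul_right _).pow_right _) _

theorem sum_eigenProj_pow {ζ : k} (hm : (m : k) ≠ 0) (hζ : IsPrimitiveRoot ζ m) (x : A) :
    ∑ i ∈ Finset.range m, eigenProj m (ζ ^ i) x = 1 := by
  have orthogonality {t : ℕ} (ht : t ∈ Finset.range m) (ht0 : t ≠ 0) :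
      ∑ i ∈ Finset.range m, (ζ⁻¹ ^ t) ^ i = 0 := by
    have hne : ζ⁻¹ ^ t ≠ 1 := hζ.inv.pow_ne_one_of_pos_of_lt ht0 (Finset.mem_range.mp ht)
    have hsum := geom_sum_mul (ζ⁻¹ ^ t) m
    rw [pow_right_comm, hζ.inv.pow_eq_one, one_pow, sub_self] at hsum
    exact (mul_eq_zero.mp hsum).resolve_right (sub_ne_zero.mpr hne)
  have coeff (i t : ℕ) : ((ζ ^ i)⁻¹ • x) ^ t = (ζ⁻¹ ^ t) ^ i • x ^ t := by
    rw [smul_pow, ← inv_pow, pow_right_comm]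
  have hm0 : m ≠ 0 := by rintro rfl; simp at hm
  simp only [eigenProj, ← Finset.smul_sum, coeff]
  rw [Finset.sum_comm]
  simp only [← Finset.sum_smul]
  rw [Finset.sum_eq_single_of_mem 0 (Finset.mem_range.mpr hm0.pos) fun t ht ht0 => by
    rw [orthogonality ht ht0, zero_smul]]
  simp [smul_smul, hm]

end EigenProj

section Idempotent

variable {k : Type} [Field k] {n : ℕ} {q : k}

/-- The eigenvalue of `Z` on `e_{2i,j}`, for `j ∈ {0, 1}`. -/
def sign (k : Type) [Field k] (j : ℕ) : k := if j = 0 then 1 else -1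

theorem sign_sq (j : ℕ) : sign k j ^ 2 = 1 := by
  unfold sign; split_ifs <;> simp

theorem cast_sq_ne_zero (hn : n ≠ 0) (hq : IsPrimitiveRoot q (n ^ 2)) : ((n ^ 2 : ℕ) : k) ≠ 0 :=
  have : NeZero (n ^ 2) := ⟨pow_ne_zero 2 hn⟩
  hq.neZero'.out

theorem cast_half_mul_two (h4 : 4 ∣ n) : ((n ^ 2 / 2 : ℕ) : k) * 2 = (n ^ 2 : ℕ) := by
  rw [← Nat.div_two_mul_two_of_even (even_sq_of_four_dvd h4), Nat.cast_mul, Nat.cast_two,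
    Nat.mul_div_cancel _ two_pos]

theorem cast_half_ne_zero (h4 : 4 ∣ n) (hn : n ≠ 0) (hq : IsPrimitiveRoot q (n ^ 2)) :
    ((n ^ 2 / 2 : ℕ) : k) ≠ 0 :=
  left_ne_zero_of_mul (cast_half_mul_two (k := k) h4 ▸ cast_sq_ne_zero hn hq)

theorem two_ne_zero_of_four_dvd (h4 : 4 ∣ n) (hn : n ≠ 0) (hq : IsPrimitiveRoot q (n ^ 2)) :
    (2 : k) ≠ 0 :=
  right_ne_zero_of_mul (cast_half_mul_two (k := k) h4 ▸ cast_sq_ne_zero hn hq)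

theorem half_sq_ne_zero (h4 : 4 ∣ n) (hn : n ≠ 0) : n ^ 2 / 2 ≠ 0 := by
  have := one_lt_sq_of_four_dvd h4 hn
  omega

theorem pow_two_mul_pow_half (h4 : 4 ∣ n) (hq : IsPrimitiveRoot q (n ^ 2)) (i : ℕ) :
    (q ^ (2 * i)) ^ (n ^ 2 / 2) = 1 := by
  rw [pow_mul, pow_right_comm, ← pow_mul q, Nat.two_mul_div_two_of_even (even_sq_of_four_dvd h4),
    hq.pow_eq_one, one_pow]

theorem phi_eq_eigenProj (h4 : 4 ∣ n) (hn : n ≠ 0) (hq : IsPrimitiveRoot q (n ^ 2)) (i : ℕ) :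
    phi k n q i = eigenProj (n ^ 2 / 2) (q ^ (2 * i)) (torusL k n q) := by
  have scalar : (n ^ 2 : k)⁻¹ * 2 = ((n ^ 2 / 2 : ℕ) : k)⁻¹ := by
    have h2 : (2 : k) ≠ 0 := two_ne_zero_of_four_dvd h4 hn hq
    rw [← Nat.cast_pow, ← cast_half_mul_two h4, mul_inv, mul_assoc, inv_mul_cancel₀ h2, mul_one]
  simp only [phi, eigenProj, scalar, torusL, smul_pow, inv_pow, pow_mul]

theorem oneJ_eq_eigenProj (j : ℕ) : oneJ k n q j = eigenProj 2 (sign k j) (torusZ k n q) := by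
  unfold oneJ sign
  split_ifs
  · rw [eigenProj_two_one, torusZ]
  · rw [eigenProj_two_neg_one, torusZ]

theorem torusL_mul_eIdem (h4 : 4 ∣ n) (hn : n ≠ 0) (hq : IsPrimitiveRoot q (n ^ 2)) (i j : ℕ) :
    torusL k n q * eIdem k n q i j = q ^ (2 * i) • eIdem k n q i j := by
  rw [eIdem, ← mul_assoc, phi_eq_eigenProj h4 hn hq,
    mul_eigenProj (half_sq_ne_zero h4 hn) (pow_two_mul_pow_half h4 hq i)
      (quantumRelations h4 hn hq).L_pow, smul_mul_assoc]

theorem torusZ_mul_eIdem (h4 : 4 ∣ n) (hn : n ≠ 0) (hq : IsPrimitiveRoot q (n ^ 2)) (i j : ℕ) :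
    torusZ k n q * eIdem k n q i j = sign k j • eIdem k n q i j := by
  have Q := quantumRelations h4 hn hq
  rw [eIdem, phi_eq_eigenProj h4 hn hq, oneJ_eq_eigenProj, ← mul_assoc,
    (commute_eigenProj Q.commute.symm).eq, mul_assoc,
    mul_eigenProj two_ne_zero (sign_sq j) Q.Z_sq, mul_smul_comm]

theorem sum_eIdem (h4 : 4 ∣ n) (hn : n ≠ 0) (hq : IsPrimitiveRoot q (n ^ 2)) :
    ∑ i ∈ Finset.range (n ^ 2 / 2), (eIdem k n q i 0 + eIdem k n q i 1) = 1 := by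
  have h2 : (2 : k) ≠ 0 := two_ne_zero_of_four_dvd h4 hn hq
  have sum_oneJ : oneJ k n q 0 + oneJ k n q 1 = 1 := by
    rw [oneJ, oneJ, if_pos rfl, if_neg one_ne_zero, ← smul_add, add_add_sub_cancel,
      ← two_smul k, inv_smul_smul₀ h2]
  have hq2 : IsPrimitiveRoot (q ^ 2) (n ^ 2 / 2) :=
    hq.pow (by positivity) (Nat.two_mul_div_two_of_even (even_sq_of_four_dvd h4)).symm
  simp only [eIdem, ← mul_add, sum_oneJ, mul_one, phi_eq_eigenProj h4 hn hq, pow_mul]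
  exact sum_eigenProj_pow (cast_half_ne_zero h4 hn hq) hq2 _

theorem eq_zero_of_mul_eIdem_eq_zero (h4 : 4 ∣ n) (hn : n ≠ 0) (hq : IsPrimitiveRoot q (n ^ 2))
    {x : U k n q} (hx : ∀ i j, x * eIdem k n q i j = 0) : x = 0 := by
  rw [← mul_one x, ← sum_eIdem h4 hn hq, Finset.mul_sum]
  simp [mul_add, hx]

end Idempotent

section InducedRep

variable {k : Type} [Field k] {n : ℕ} {q : k}
  (h4 : 4 ∣ n) (hn : n ≠ 0) (hq : IsPrimitiveRoot q (n ^ 2)) (i j : ℕ)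

/-- The induced module of `ũ_q(sl₂)` generated by a vector of the same weight as `e_{2i,j}`. -/
def inducedRep : U k n q →ₐ[k] Module.End k (Induced k (n ^ 2)) :=
  liftAlgHom h4 hn hq <| Induced.quantumRelations (one_lt_sq_of_four_dvd h4 hn)
    (even_sq_of_four_dvd h4) hq (pow_two_mul_pow_half h4 hq i) (sign_sq (k := k) j)

open Induced in
theorem inducedRep_eIdem_w :
    inducedRep h4 hn hq i j (eIdem k n q i j) (w k (n ^ 2) 0 0) = w k (n ^ 2) 0 0 := by
  have L_w : diag (n ^ 2) (weight (q⁻¹ ^ 2) (q ^ 2) (q ^ (2 * i))) (w k (n ^ 2) 0 0) =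
      q ^ (2 * i) • w k (n ^ 2) 0 0 := by simp [weight]
  have Z_w : diag (n ^ 2) (weight (-1) (-1) (sign k j)) (w k (n ^ 2) 0 0) =
      sign k j • w k (n ^ 2) 0 0 := by simp [weight]
  have hsign : sign k j ≠ 0 := (pow_ne_zero_iff two_ne_zero).mp (sign_sq (k := k) j ▸ one_ne_zero)
  have hq0 : q ≠ 0 := hq.ne_zero (pow_ne_zero 2 hn)
  have h2 : ((2 : ℕ) : k) ≠ 0 := mod_cast two_ne_zero_of_four_dvd h4 hn hq
  rw [eIdem, phi_eq_eigenProj h4 hn hq, oneJ_eq_eigenProj, map_mul, map_eigenProj, map_eigenProj,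
    inducedRep, liftAlgHom_torusL, liftAlgHom_torusZ, Module.End.mul_apply]
  rw [eigenProj_apply hsign h2 Z_w,
    eigenProj_apply (pow_ne_zero _ hq0) (cast_half_ne_zero h4 hn hq) L_w]

theorem lift_comp_inducedRep (x : U k n q) :
    Induced.lift (n ^ 2) (E k n q) (F k n q) (eIdem k n q i j) ∘ₗ inducedRep h4 hn hq i j x =
      Algebra.lsmul k k (U k n q) x ∘ₗ
        Induced.lift (n ^ 2) (E k n q) (F k n q) (eIdem k n q i j) := by
  have Q := quantumRelations h4 hn hq
  have hL := torusL_mul_eIdem h4 hn hq i j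
  refine intertwines_of_adjoin_eq_top (adjoin_torus h4 hn) _ (Algebra.lsmul k k (U k n q)) ?_ x
  rintro x (rfl | rfl | rfl | rfl)
  · rw [inducedRep, liftAlgHom_torusL, Induced.lift_diag Q Q.L_E Q.L_F hL]
  · rw [inducedRep, liftAlgHom_torusZ,
      Induced.lift_diag Q Q.Z_E Q.Z_F (torusZ_mul_eIdem h4 hn hq i j)]
  · rw [inducedRep, liftAlgHom_E,
      Induced.lift_opE (one_lt_sq_of_four_dvd h4 hn) hq Q hL]
  · rw [inducedRep, liftAlgHom_F, Induced.lift_opF Q]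

theorem mul_eIdem_eq_lift (x : U k n q) :
    x * eIdem k n q i j = Induced.lift (n ^ 2) (E k n q) (F k n q) (eIdem k n q i j)
      (inducedRep h4 hn hq i j x (Induced.w k (n ^ 2) 0 0)) := by
  have h := LinearMap.congr_fun (lift_comp_inducedRep h4 hn hq i j x) (Induced.w k (n ^ 2) 0 0)
  simpa [Induced.lift_w (quantumRelations h4 hn hq)] using h.symm

end InducedRep

namespace QuantumRelations

variable {k A : Type*} [Field k] [Ring A] [Algebra k A] {N : ℕ} {q : k} {L Z E F : A}

theorem F_pow_dvd_E_mul_F_pow_succ (Q : QuantumRelations N q L Z E F) (hq : q ≠ 0) (m : ℕ) :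
    F ^ m ∣ E * F ^ (m + 1) := by
  induction m with
  | zero => rw [pow_zero]; exact one_dvd _
  | succ m ih =>
    have commutator : E * F ^ (m + 2) =
        F * (E * F ^ (m + 1)) * algebraMap k A q -
          (F ^ (m + 1) - L * F ^ (m + 1)) * algebraMap k A q := by
      rw [pow_succ' F (m + 1), ← mul_assoc, Q.E_mul_F hq, add_mul, smul_mul_assoc, smul_mul_assoc,
        sub_mul, one_mul, mul_assoc, neg_smul, ← sub_eq_add_neg, Algebra.smul_def, Algebra.smul_def,
        Algebra.commutes, Algebra.commutes q (_ - _)]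
    have hL : F ^ (m + 1) ∣ L * F ^ (m + 1) :=
      ⟨L * algebraMap k A ((q ^ 2) ^ (m + 1)), by
        rw [Q.L_F.pow_right, ← mul_assoc, ← Algebra.commutes, Algebra.smul_def]⟩
    rw [commutator]
    refine dvd_sub (dvd_mul_of_dvd_left ?_ _) (dvd_mul_of_dvd_left (dvd_sub dvd_rfl hL) _)
    calc F ^ (m + 1) = F * F ^ m := pow_succ' F m
      _ ∣ F * (E * F ^ (m + 1)) := mul_dvd_mul_left F ih

theorem F_pow_dvd_E_pow_mul_F_pow (Q : QuantumRelations N q L Z E F) (hq : q ≠ 0) (a s : ℕ) :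
    F ^ a ∣ E ^ s * F ^ (a + s) := by
  induction s with
  | zero => simp
  | succ s ih =>
    rw [pow_succ, mul_assoc, ← add_assoc]
    obtain ⟨y, hy⟩ := Q.F_pow_dvd_E_mul_F_pow_succ hq (a + s)
    rw [hy, ← mul_assoc]
    exact dvd_mul_of_dvd_left ih y

end QuantumRelations

theorem existsUnique_mem_apply_eq_of_isCompl_ker {R M M' : Type*} [Ring R] [AddCommGroup M]
    [Module R M] [AddCommGroup M'] [Module R M'] {f : M →ₗ[R] M'} {p : Submodule R M}
    (hp : IsCompl p (LinearMap.ker f)) {y : M'} (hy : y ∈ LinearMap.range f) :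
    ∃! x, x ∈ p ∧ f x = y := by
  obtain ⟨x, rfl⟩ := hy
  obtain ⟨x', hx', x'', hx'', rfl⟩ :=
    Submodule.mem_sup.mp (hp.sup_eq_top ▸ Submodule.mem_top (x := x))
  refine ⟨x', ⟨hx', by rw [map_add, hx'', add_zero]⟩, fun z hz => sub_eq_zero.mp ?_⟩
  refine (Submodule.disjoint_def.mp hp.disjoint) _ (p.sub_mem hz.1 hx') ?_
  rw [LinearMap.mem_ker, map_sub, hz.2, map_add, hx'', add_zero, sub_self]

namespace Induced

variable {k V : Type*} [Field k] [AddCommGroup V] [Module k V] {N : ℕ} {q l : k}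

theorem map_mem {f : Induced k N →ₗ[k] V} {S : Submodule k V} (h : ∀ a b, f (w k N a b) ∈ S)
    (v : Induced k N) : f v ∈ S := by
  have hf : S.mkQ ∘ₗ f = 0 := hom_ext fun a b => by simpa using h a b
  simpa using LinearMap.congr_fun hf v

theorem exists_leftInverse_opF :
    ∃ G : Module.End k (Induced k N), ∀ a b, a + 1 < N → G (opF k N (w k N a b)) = w k N a b := by
  refine ⟨ofMonomials N fun a b => if a = 0 ∨ N ≤ a then 0 else w k N (a - 1) b, fun a b ha => ?_⟩
  rw [opF_w, ofMonomials_w, if_neg (by omega), Nat.add_sub_cancel]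
  intro a b h
  split_ifs with h0
  · rfl
  · exact w_eq_zero (by omega)

/-- The coefficient of `w k N (N - 1) s`, used to detect nonzero vectors
`E ^ s * F ^ (N - 1) ⊗ 1`. -/
def topCoeff (k : Type*) [Field k] (N s : ℕ) : Induced k N →ₗ[k] k :=
  ofMonomials N fun a b => if a + 1 = N ∧ b = s ∧ b < N then 1 else 0

theorem topCoeff_w (s a b : ℕ) :
    topCoeff k N s (w k N a b) = if a + 1 = N ∧ b = s ∧ b < N then 1 else 0 :=
  ofMonomials_w (fun _ _ _ => if_neg (by omega)) a b

theorem topCoeff_succ_opE (hN : 1 < N) (hq : IsPrimitiveRoot q N) {s : ℕ} (hs : s + 1 < N)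
    (v : Induced k N) :
    topCoeff k N (s + 1) (opE N q l v) = q ^ (N - 1) * topCoeff k N s v := by
  suffices topCoeff k N (s + 1) ∘ₗ opE N q l = q ^ (N - 1) • topCoeff k N s from
    LinearMap.congr_fun this v
  refine hom_ext fun a b => ?_
  obtain rfl | ha := eq_or_ne a N
  · simp [w_eq_zero]
  have lower : ¬(a - 1 + 1 = N ∧ b = s + 1 ∧ b < N) := by omega
  have raise : (a + 1 = N ∧ b + 1 = s + 1 ∧ b + 1 < N) ↔ a + 1 = N ∧ b = s ∧ b < N := by omega
  rw [LinearMap.comp_apply, opE_w hN hq, map_add, map_smul, map_smul, topCoeff_w, topCoeff_w,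
    if_neg lower, smul_zero, add_zero, if_congr raise rfl rfl, LinearMap.smul_apply, topCoeff_w]
  split_ifs with h
  · rw [← h.1, Nat.add_sub_cancel]
  · rw [smul_zero, smul_zero]

theorem opE_pow_w_ne_zero (hN : 1 < N) (hq : IsPrimitiveRoot q N) {s : ℕ} (hs : s < N) :
    (opE N q l ^ s) (w k N (N - 1) 0) ≠ 0 := by
  have coeff : topCoeff k N s ((opE N q l ^ s) (w k N (N - 1) 0)) = (q ^ (N - 1)) ^ s := by
    induction s with
    | zero => simp [topCoeff_w, Nat.sub_add_cancel hN.le, hs]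
    | succ s ih =>
      rw [pow_succ', Module.End.mul_apply, topCoeff_succ_opE hN hq hs, ih (by omega), pow_succ']
  intro h
  rw [h, map_zero] at coeff
  exact pow_ne_zero s (pow_ne_zero _ (hq.ne_zero (by omega))) coeff.symm

end Induced

section PBW

variable {k : Type} [Field k] {n : ℕ} {q : k}

/-- The subalgebra generated by `K` and `K̂`, that is, the span of the `K ^ c * K̂ ^ d`. -/
def torus (k : Type) [Field k] (n : ℕ) (q : k) : Subalgebra k (U k n q) :=
  Algebra.adjoin k {K k n q, Kh k n q}

theorem K_mem_torus : K k n q ∈ torus k n q := Algebra.subset_adjoin (by simp)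

theorem Kh_mem_torus : Kh k n q ∈ torus k n q := Algebra.subset_adjoin (by simp)

theorem torusL_mem_torus : torusL k n q ∈ torus k n q :=
  mul_mem (pow_mem K_mem_torus _) Kh_mem_torus

theorem torusZ_mem_torus : torusZ k n q ∈ torus k n q :=
  mul_mem K_mem_torus (pow_mem Kh_mem_torus _)

theorem eigenProj_mem {A : Type*} [Ring A] [Algebra k A] {S : Subalgebra k A} {x : A}
    (hx : x ∈ S) (m : ℕ) (l : k) : eigenProj m l x ∈ S :=
  S.smul_mem (sum_mem fun _ _ => pow_mem (S.smul_mem hx _) _) _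

theorem eIdem_mem_torus (h4 : 4 ∣ n) (hn : n ≠ 0) (hq : IsPrimitiveRoot q (n ^ 2)) (i j : ℕ) :
    eIdem k n q i j ∈ torus k n q := by
  rw [eIdem, phi_eq_eigenProj h4 hn hq, oneJ_eq_eigenProj]
  exact mul_mem (eigenProj_mem torusL_mem_torus _ _) (eigenProj_mem torusZ_mem_torus _ _)

theorem torus_toSubmodule_eq_span :
    Subalgebra.toSubmodule (torus k n q) =
      Submodule.span k {t | ∃ c d : ℕ, t = K k n q ^ c * Kh k n q ^ d} := by
  rw [torus, Algebra.adjoin_eq_span]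
  congr 1
  ext t
  constructor
  · intro ht
    induction ht using Submonoid.closure_induction with
    | mem t ht =>
      obtain rfl | rfl := ht
      · exact ⟨1, 0, by simp⟩
      · exact ⟨0, 1, by simp⟩
    | one => exact ⟨0, 0, by simp⟩
    | mul t t' _ _ ht ht' =>
      obtain ⟨c, d, rfl⟩ := ht
      obtain ⟨c', d', rfl⟩ := ht'
      refine ⟨c + c', d + d', ?_⟩
      rw [pow_add, pow_add, mul_assoc, ← mul_assoc (Kh k n q ^ d),
        ← (commute_K_Kh.pow_pow c' d).eq]
      simp only [mul_assoc]
  · rintro ⟨c, d, rfl⟩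
    exact mul_mem (pow_mem (Submonoid.subset_closure (by simp)) _)
      (pow_mem (Submonoid.subset_closure (by simp)) _)

theorem F_pow_mul_torus_mul_E_pow_mem_pbw (hn : n ≠ 0) {a : ℕ} (ha : a ≤ n ^ 2 - 2) {t : U k n q}
    (ht : t ∈ torus k n q) (b : ℕ) : F k n q ^ a * t * E k n q ^ b ∈ pbw k n q := by
  have hN : 0 < n ^ 2 := by positivity
  by_cases hb : n ^ 2 ≤ b
  · rw [pow_eq_zero_of_le hb E_pow_sq, mul_zero]
    exact zero_mem _
  rw [← Subalgebra.mem_toSubmodule, torus_toSubmodule_eq_span] at ht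
  induction ht using Submodule.span_induction with
  | mem t ht =>
    obtain ⟨c, d, rfl⟩ := ht
    refine Submodule.subset_span ⟨a, b, c % n, d % n ^ 2, ha, by omega,
      Nat.le_sub_one_of_lt (Nat.mod_lt _ hn.pos), Nat.le_sub_one_of_lt (Nat.mod_lt _ hN), ?_⟩
    rw [← pow_eq_pow_mod c K_pow, ← pow_eq_pow_mod d Kh_pow_sq]
    simp only [mul_assoc]
  | zero => simp
  | add t t' _ _ ht ht' => simpa [mul_add, add_mul] using add_mem ht ht'
  | smul c t _ ht => simpa using Submodule.smul_mem _ c ht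

theorem pbw_le {S : Submodule k (U k n q)} (h : ∀ a b, a ≤ n ^ 2 - 2 → ∀ t ∈ torus k n q,
    F k n q ^ a * t * E k n q ^ b ∈ S) : pbw k n q ≤ S := by
  refine Submodule.span_le.mpr ?_
  rintro _ ⟨a, b, c, d, ha, -, -, -, rfl⟩
  rw [mul_assoc (F k n q ^ a)]
  exact h a b ha _ (mul_mem (pow_mem K_mem_torus c) (pow_mem Kh_mem_torus d))

theorem mul_mem_pbw (hn : n ≠ 0) {x : U k n q} {d : k} (hx : x ∈ torus k n q)
    (hF : SkewCommute d x (F k n q)) {y : U k n q} (hy : y ∈ pbw k n q) : x * y ∈ pbw k n q := by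
  suffices pbw k n q ≤ (pbw k n q).comap (LinearMap.mulLeft k x) from this hy
  refine pbw_le fun a b ha t ht => ?_
  rw [Submodule.mem_comap, LinearMap.mulLeft_apply, ← mul_assoc, ← mul_assoc, hF.pow_right a,
    smul_mul_assoc, smul_mul_assoc, mul_assoc (F k n q ^ a)]
  exact Submodule.smul_mem _ _ (F_pow_mul_torus_mul_E_pow_mem_pbw hn ha (mul_mem hx ht) b)

theorem exists_E_pow_mul_eq (hn : n ≠ 0) (hq : q ≠ 0) {t : U k n q} (ht : t ∈ torus k n q) (b : ℕ) :
    ∃ t' ∈ torus k n q, E k n q ^ b * t = t' * E k n q ^ b := by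
  have generator {c : k} {x : U k n q} (hc : c ≠ 0) (hx : x ∈ torus k n q)
      (h : SkewCommute c x (E k n q)) :
      ∃ t' ∈ torus k n q, E k n q ^ b * x = t' * E k n q ^ b :=
    ⟨_, Subalgebra.smul_mem _ hx _, ((h.symm hc).pow_left b).trans (smul_mul_assoc _ _ _).symm⟩
  induction ht using Algebra.adjoin_induction with
  | mem x hx =>
    obtain rfl | rfl := hx
    · exact generator (by positivity) K_mem_torus (K_skewCommute_E hn)
    · exact generator (by positivity) Kh_mem_torus (Kh_skewCommute_E hn)
  | algebraMap c => exact ⟨_, Subalgebra.algebraMap_mem _ c, (Algebra.commutes _ _).symm⟩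
  | add x y _ _ hx hy =>
    obtain ⟨x', hx', hx⟩ := hx
    obtain ⟨y', hy', hy⟩ := hy
    exact ⟨x' + y', add_mem hx' hy', by rw [mul_add, add_mul, hx, hy]⟩
  | mul x y _ _ hx hy =>
    obtain ⟨x', hx', hx⟩ := hx
    obtain ⟨y', hy', hy⟩ := hy
    exact ⟨x' * y', mul_mem hx' hy', by rw [← mul_assoc, hx, mul_assoc, hy, mul_assoc]⟩

variable (h4 : 4 ∣ n) (hn : n ≠ 0) (hq : IsPrimitiveRoot q (n ^ 2)) (i j : ℕ)
include h4 hn hq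

theorem pbw_sup_ker_mulLeft_F :
    pbw k n q ⊔ LinearMap.ker (LinearMap.mulLeft k (F k n q)) = ⊤ := by
  set S := pbw k n q ⊔ LinearMap.ker (LinearMap.mulLeft k (F k n q))
  have Q := quantumRelations h4 hn hq
  have monomial_mem (i j a b : ℕ) : F k n q ^ a * (E k n q ^ b * eIdem k n q i j) ∈ S := by
    by_cases ha : a ≤ n ^ 2 - 2
    · obtain ⟨t, ht, he⟩ := exists_E_pow_mul_eq hn (hq.ne_zero (pow_ne_zero 2 hn))
        (eIdem_mem_torus h4 hn hq i j) b
      rw [he, ← mul_assoc]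
      exact Submodule.mem_sup_left (F_pow_mul_torus_mul_E_pow_mem_pbw hn ha ht b)
    · refine Submodule.mem_sup_right ?_
      rw [LinearMap.mem_ker, LinearMap.mulLeft_apply, ← mul_assoc, ← pow_succ',
        pow_eq_zero_of_le (by omega) Q.F_pow, zero_mul]
  have mul_eIdem_mem (x : U k n q) (i j : ℕ) : x * eIdem k n q i j ∈ S := by
    rw [mul_eIdem_eq_lift h4 hn hq]
    exact Induced.map_mem (fun a b => by
      simpa only [Induced.lift_w Q, smul_eq_mul] using monomial_mem i j a b) _
  refine Submodule.eq_top_iff'.mpr fun x => ?_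
  rw [← mul_one x, ← sum_eIdem h4 hn hq, Finset.mul_sum]
  exact sum_mem fun i _ => by
    rw [mul_add]; exact add_mem (mul_eIdem_mem x i 0) (mul_eIdem_mem x i 1)

open Induced in
theorem exists_inducedRep_w_eq_smul {t : U k n q} (ht : t ∈ torus k n q) (a b : ℕ) :
    ∃ c : k, inducedRep h4 hn hq i j t (w k (n ^ 2) a b) = c • w k (n ^ 2) a b := by
  have diag_pow (c : ℕ → ℕ → k) (s : ℕ) :
      (diag (n ^ 2) c ^ s) (w k (n ^ 2) a b) = c a b ^ s • w k (n ^ 2) a b :=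
    pow_smul_eq_of_smul_eq (V := Induced k (n ^ 2)) (x := diag (n ^ 2) c) (diag_w c a b) s
  induction ht using Algebra.adjoin_induction with
  | mem x hx =>
    obtain rfl | rfl := hx
    · simp only [inducedRep, liftAlgHom_K, Module.End.mul_apply, diag_pow, map_smul, diag_w,
        smul_smul]
      exact ⟨_, rfl⟩
    · simp only [inducedRep, liftAlgHom_Kh, Module.End.mul_apply, diag_pow, map_smul, diag_w,
        smul_smul]
      exact ⟨_, rfl⟩
  | algebraMap c => exact ⟨c, by rw [AlgHom.commutes, Module.algebraMap_end_apply]⟩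
  | add x y _ _ hx hy =>
    obtain ⟨c, hx⟩ := hx
    obtain ⟨d, hy⟩ := hy
    exact ⟨c + d, by rw [map_add, LinearMap.add_apply, hx, hy, add_smul]⟩
  | mul x y _ _ hx hy =>
    obtain ⟨c, hx⟩ := hx
    obtain ⟨d, hy⟩ := hy
    exact ⟨d * c, by rw [map_mul, Module.End.mul_apply, hy, map_smul, hx, smul_smul]⟩

open Induced in
theorem pbw_disjoint_ker_mulLeft_F :
    Disjoint (pbw k n q) (LinearMap.ker (LinearMap.mulLeft k (F k n q))) := by
  rw [Submodule.disjoint_def]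
  intro x hx hFx
  obtain ⟨G, hG⟩ := exists_leftInverse_opF (k := k) (N := n ^ 2)
  have hN := one_lt_sq_of_four_dvd h4 hn
  refine eq_zero_of_mul_eIdem_eq_zero h4 hn hq fun i j => ?_
  set ρ := inducedRep h4 hn hq i j with hρ
  have recover : G (ρ (F k n q * x) (w k (n ^ 2) 0 0)) = ρ x (w k (n ^ 2) 0 0) := by
    let ev := LinearMap.applyₗ (R := k) (w k (n ^ 2) 0 0) ∘ₗ ρ.toLinearMap
    suffices pbw k n q ≤ LinearMap.eqLocus (G ∘ₗ ev ∘ₗ LinearMap.mulLeft k (F k n q)) ev from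
      this hx
    refine pbw_le fun a b ha t ht => ?_
    obtain ⟨c, hc⟩ := exists_inducedRep_w_eq_smul h4 hn hq i j ht 0 b
    have monomial : ρ (F k n q ^ a * t * E k n q ^ b) (w k (n ^ 2) 0 0) = c • w k (n ^ 2) a b := by
      have hE : ρ (E k n q ^ b) (w k (n ^ 2) 0 0) = w k (n ^ 2) 0 b := by
        rw [map_pow, hρ, inducedRep, liftAlgHom_E, opE_pow_w_zero hN hq, zero_add]
      rw [map_mul, map_mul, Module.End.mul_apply, Module.End.mul_apply, hE, hc, map_smul, map_pow,
        hρ, inducedRep, liftAlgHom_F, opF_pow_w, zero_add]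
    change G (ρ (F k n q * _) (w k (n ^ 2) 0 0)) = ρ _ (w k (n ^ 2) 0 0)
    rw [map_mul, Module.End.mul_apply, monomial, map_smul, map_smul, hρ, inducedRep, liftAlgHom_F,
      hG a b (by omega)]
  rw [mul_eIdem_eq_lift h4 hn hq, ← hρ, ← recover, show F k n q * x = 0 from hFx, map_zero,
    LinearMap.zero_apply, map_zero, map_zero]

theorem isCompl_pbw_ker_mulLeft_F :
    IsCompl (pbw k n q) (LinearMap.ker (LinearMap.mulLeft k (F k n q))) :=
  ⟨pbw_disjoint_ker_mulLeft_F h4 hn hq, codisjoint_iff.mpr (pbw_sup_ker_mulLeft_F h4 hn hq)⟩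

end PBW

section Gamma

variable {k : Type} [Field k] {n : ℕ} {q : k} {i : ℕ}

theorem F_mul_alpha (hn : n ≠ 0) (i j : ℕ) : F k n q * alpha k n q i j = 0 := by
  rw [alpha, ← mul_assoc, mul_pow_sub_one (pow_ne_zero 2 hn), F_pow_sq, zero_mul]

theorem F_dvd_beta (h4 : 4 ∣ n) (hn : n ≠ 0) (hq : IsPrimitiveRoot q (n ^ 2)) (hi : 1 ≤ i)
    (hi' : i ≤ n ^ 2 / 2) (j : ℕ) : F k n q ∣ beta k n q i j := by
  have hdvd := (quantumRelations h4 hn hq).F_pow_dvd_E_pow_mul_F_pow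
    (hq.ne_zero (pow_ne_zero 2 hn)) (n ^ 2 - 1 - (2 * i - 2)) (2 * i - 2)
  rw [Nat.sub_add_cancel (by omega)] at hdvd
  rw [beta, alpha, ← mul_assoc]
  exact ((dvd_pow_self _ (by omega)).trans hdvd).mul_right _

variable (h4 : 4 ∣ n) (hn : n ≠ 0) (hq : IsPrimitiveRoot q (n ^ 2)) (hi : 1 ≤ i)
  (hi' : i ≤ n ^ 2 / 2) (j : ℕ)
include h4 hn hq

theorem torusL_smul_alpha (hi : 1 ≤ i) :
    torusL k n q • alpha k n q i j = q ^ (2 * i - 2) • alpha k n q i j := by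
  have scalar : (q ^ 2) ^ (n ^ 2 - 1) * q ^ (2 * i) = q ^ (2 * i - 2) := by
    obtain ⟨i, rfl⟩ := Nat.exists_eq_add_of_le' hi
    have hsq : (q ^ 2) ^ (n ^ 2 - 1) * q ^ 2 = 1 := by
      rw [pow_sub_one_mul (pow_ne_zero 2 hn), pow_right_comm, hq.pow_eq_one, one_pow]
    rw [Nat.mul_succ, pow_add, mul_left_comm, hsq, mul_one, Nat.add_sub_cancel]
  rw [alpha, ← scalar]
  exact (quantumRelations h4 hn hq).L_F.smul_pow_smul (V := U k n q)
    (torusL_mul_eIdem h4 hn hq i j) _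

theorem torusZ_smul_alpha : torusZ k n q • alpha k n q i j = (-sign k j) • alpha k n q i j := by
  have odd : Odd (n ^ 2 - 1) :=
    Nat.Even.sub_odd (one_lt_sq_of_four_dvd h4 hn).le (even_sq_of_four_dvd h4) odd_one
  rw [← neg_one_mul, ← odd.neg_one_pow, alpha]
  exact (quantumRelations h4 hn hq).Z_F.smul_pow_smul (V := U k n q)
    (torusZ_mul_eIdem h4 hn hq i j) _

open Induced in
theorem E_pow_smul_alpha_ne_zero (i j : ℕ) : E k n q ^ (n ^ 2 - 1) • alpha k n q i j ≠ 0 := by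
  have hN := one_lt_sq_of_four_dvd h4 hn
  intro h
  have h' := congrArg (fun x => inducedRep h4 hn hq i j x (w k (n ^ 2) 0 0)) h
  simp only [alpha, smul_eq_mul, map_mul, map_pow, Module.End.mul_apply, inducedRep_eIdem_w] at h'
  rw [inducedRep, liftAlgHom_E, liftAlgHom_F, opF_pow_w, zero_add, map_zero,
    LinearMap.zero_apply] at h'
  exact opE_pow_w_ne_zero hN hq (by omega) h'

include hi hi'

theorem existsUnique_mem_pbw_F_mul_eq_beta :
    ∃! x, x ∈ pbw k n q ∧ F k n q * x = beta k n q i j :=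
  have ⟨y, hy⟩ := F_dvd_beta h4 hn hq hi hi' j
  existsUnique_mem_apply_eq_of_isCompl_ker (isCompl_pbw_ker_mulLeft_F h4 hn hq) ⟨y, hy.symm⟩

theorem gam_mem_pbw_and_F_mul_gam :
    gam k n q i j ∈ pbw k n q ∧ F k n q * gam k n q i j = beta k n q i j := by
  have h := existsUnique_mem_pbw_F_mul_eq_beta h4 hn hq hi hi' j
  rw [gam, dif_pos h]
  exact h.choose_spec.1

theorem smul_gam {x : U k n q} {d μ : k} (hx : x ∈ torus k n q) (hd : d ≠ 0)
    (hF : SkewCommute d x (F k n q)) (hβ : x • beta k n q i j = (d * μ) • beta k n q i j) :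
    x • gam k n q i j = μ • gam k n q i j := by
  have ⟨hmem, hFγ⟩ := gam_mem_pbw_and_F_mul_gam h4 hn hq hi hi' j
  have h : SkewCommute d⁻¹ (F k n q) x := hF.symm hd
  have scaled : F k n q * (x * gam k n q i j) = μ • beta k n q i j := by
    rw [← mul_assoc, h, smul_mul_assoc, mul_assoc, hFγ, ← smul_eq_mul, hβ, smul_smul,
      inv_mul_cancel_left₀ hd]
  rw [smul_eq_mul, ← sub_eq_zero]
  refine Submodule.disjoint_def.mp (pbw_disjoint_ker_mulLeft_F h4 hn hq) _
    (sub_mem (mul_mem_pbw hn hx hF hmem) (Submodule.smul_mem _ μ hmem)) ?_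
  rw [LinearMap.mem_ker, LinearMap.mulLeft_apply, mul_sub, mul_smul_comm, hFγ, scaled, sub_self]

theorem torusL_smul_gam :
    torusL k n q • gam k n q i j = q ^ (n ^ 2 - 2 * i) • gam k n q i j := by
  have hq0 : q ≠ 0 := hq.ne_zero (pow_ne_zero 2 hn)
  have Q := quantumRelations h4 hn hq
  refine smul_gam h4 hn hq hi hi' j torusL_mem_torus (by positivity) Q.L_F ?_
  have scalar : (q⁻¹ ^ 2) ^ (2 * i - 2) * q ^ (2 * i - 2) = q ^ 2 * q ^ (n ^ 2 - 2 * i) := by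
    rw [← mul_left_inj' (pow_ne_zero (2 * i - 2) hq0)]
    have hlhs : (q⁻¹ ^ 2) ^ (2 * i - 2) * q ^ (2 * i - 2) * q ^ (2 * i - 2) = 1 := by
      rw [← mul_pow, ← mul_pow, show q⁻¹ ^ 2 * q * q = 1 by field_simp, one_pow]
    rw [hlhs, ← pow_add, ← pow_add, show 2 + (n ^ 2 - 2 * i) + (2 * i - 2) = n ^ 2 by omega,
      hq.pow_eq_one]
  rw [beta, ← scalar]
  exact Q.L_E.smul_pow_smul (V := U k n q) (torusL_smul_alpha h4 hn hq j hi) _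

theorem torusZ_smul_gam : torusZ k n q • gam k n q i j = sign k j • gam k n q i j := by
  have Q := quantumRelations h4 hn hq
  refine smul_gam h4 hn hq hi hi' j torusZ_mem_torus (by norm_num) Q.Z_F ?_
  have even : Even (2 * i - 2) := ⟨i - 1, by omega⟩
  rw [neg_one_mul, ← one_mul (-sign k j), ← even.neg_one_pow, beta]
  exact Q.Z_E.smul_pow_smul (V := U k n q) (torusZ_smul_alpha h4 hn hq j) _

end Gamma

section PowFamily

variable {k V ι : Type*} [Field k] [AddCommGroup V] [Module k V]

theorem linearIndependent_pow_apply {T : Module.End k V} {N : ℕ} (hT : T ^ N = 0) {b : ι → V}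
    (hb : LinearIndependent k fun i => (T ^ (N - 1)) (b i)) [Finite ι] :
    LinearIndependent k fun p : Fin N × ι => (T ^ (p.1 : ℕ)) (b p.2) := by
  have := Fintype.ofFinite ι
  rw [Fintype.linearIndependent_iff] at hb ⊢
  intro c hc
  suffices h : ∀ (s : ℕ) (hs : s < N) i, c (⟨s, hs⟩, i) = 0 from fun p => h p.1 p.1.2 p.2
  intro s
  induction s using Nat.strong_induction_on with
  | _ s ih =>
  intro hs
  refine hb (fun i => c (⟨s, hs⟩, i)) ?_
  have top := congrArg (T ^ (N - 1 - s)) hc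
  rw [map_zero, map_sum, Fintype.sum_prod_type, Finset.sum_eq_single ⟨s, hs⟩] at top
  · refine Eq.trans (Finset.sum_congr rfl fun i _ => ?_) top
    rw [map_smul, ← Module.End.mul_apply, ← pow_add, Nat.sub_add_cancel (by omega)]
  · intro t _ hts
    refine Finset.sum_eq_zero fun i _ => ?_
    rcases lt_or_gt_of_ne (Fin.val_ne_of_ne hts) with lower | higher
    · rw [ih t lower t.2 i, zero_smul, map_zero]
    · change s < (t : ℕ) at higher
      rw [map_smul, ← Module.End.mul_apply, ← pow_add,
        pow_eq_zero_of_le (show N ≤ N - 1 - s + t by omega) hT, LinearMap.zero_apply, smul_zero]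
  · simp

theorem linearIndependent_pair_of_apply_eq_smul {T : Module.End k V} {μ ν : k} (hμν : μ ≠ ν)
    {u v : V} (hu : u ≠ 0) (hv : v ≠ 0) (hTu : T u = μ • u) (hTv : T v = ν • v) :
    LinearIndependent k ![u, v] := by
  refine Module.End.eigenvectors_linearIndependent' T ![μ, ν] ?_ ![u, v] ?_
  · intro i j hij
    fin_cases i <;> fin_cases j <;> simp_all [eq_comm]
  · intro i
    fin_cases i
    exacts [⟨Module.End.mem_eigenspace_iff.mpr hTu, hu⟩,
      ⟨Module.End.mem_eigenspace_iff.mpr hTv, hv⟩]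

theorem eq_smul_of_apply_eq_smul_of_mem_span_pair {T : Module.End k V} {μ ν : k} (hμν : μ ≠ ν)
    {u v x : V} (hTu : T u = μ • u) (hTv : T v = ν • v) (hx : x ∈ Submodule.span k {u, v})
    (hTx : T x = μ • x) : ∃ c : k, x = c • u := by
  obtain ⟨a, b, rfl⟩ := Submodule.mem_span_pair.mp hx
  have hbv : (ν - μ) • b • v = 0 := by
    rw [map_add, map_smul, map_smul, hTu, hTv] at hTx
    rw [sub_smul, sub_eq_zero, ← sub_eq_zero]
    rw [← sub_eq_zero] at hTx
    rw [← hTx]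
    module
  refine ⟨a, ?_⟩
  rw [(smul_eq_zero.mp hbv).resolve_left (sub_ne_zero.mpr hμν.symm), add_zero]

end PowFamily

section TwoString

theorem commCoeff_eq_zero_iff {k : Type*} [Field k] {q : k} {N r s : ℕ} (hq : IsPrimitiveRoot q N)
    (hr : 0 < r) (hrN : r ≤ N) (hs : 0 < s) (hsN : s < N) :
    commCoeff 1 q⁻¹ (q ^ (r - 1)) s = 0 ↔ s = r := by
  have geom : ∑ t ∈ Finset.range s, q⁻¹ ^ t ≠ 0 := by
    intro h
    have := geom_sum_mul q⁻¹ s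
    rw [h, zero_mul, eq_comm, sub_eq_zero] at this
    exact hq.inv.pow_ne_one_of_pos_of_lt hs.ne' hsN this
  have hq0 : q ≠ 0 := hq.ne_zero (by omega)
  rw [commCoeff, one_mul, mul_eq_zero, or_iff_right geom, sub_eq_zero, inv_pow, eq_comm,
    inv_mul_eq_one₀ (pow_ne_zero _ hq0)]
  constructor
  · intro h
    have := hq.pow_inj (by omega) (by omega) h
    omega
  · rintro rfl
    rfl

variable {k A M M' : Type*} [Field k] [Ring A] [Algebra k A]
  [AddCommGroup M] [Module k M] [Module A M] [IsScalarTower k A M]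
  [AddCommGroup M'] [Module k M'] [Module A M'] [IsScalarTower k A M']
  {N r r' : ℕ} {q σ : k} {L Z E F : A} {α γ : M} {a g : M'}

/-- The standing assumptions under which the projective modules of a block are studied: `A` is
generated by elements satisfying the quantum relations, and the block is given by a splitting
`r + r' = N` into odd parts together with an eigenvalue `σ` of `Z`. -/
structure BlockSetting (N r r' : ℕ) (q σ : k) (L Z E F : A) : Prop where
  relations : QuantumRelations N q L Z E F
  adjoin_eq_top : Algebra.adjoin k {L, Z, E, F} = ⊤
  primitive : IsPrimitiveRoot q N
  odd : Odd r
  odd' : Odd r'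
  add_eq : r + r' = N
  ne_neg : σ ≠ -σ

/-- The relations satisfied by the generators `α` and `γ` of the two `E`-strings of an
indecomposable projective module: `α` is a lowest weight vector, and `F` sends `γ` to the vector
`E ^ (r - 1) • α` just below the singular vector `E ^ r • α`. -/
structure TwoStringRelations (r r' : ℕ) (q σ : k) (L Z E F : A) (α γ : M) : Prop where
  F_α : F • α = 0
  F_γ : F • γ = E ^ (r - 1) • α
  L_α : L • α = q ^ (r - 1) • α
  L_γ : L • γ = q ^ (r' - 1) • γ
  Z_α : Z • α = (-σ) • α
  Z_γ : Z • γ = σ • γ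

/-- `M` is a projective module of the block: it is generated by `γ`, and the two strings
`E ^ s • α` and `E ^ s • γ`, `s < N`, have full length. -/
structure IsTwoStringModule (N r r' : ℕ) (q σ : k) (L Z E F : A) (α γ : M) : Prop
    extends TwoStringRelations r r' q σ L Z E F α γ where
  E_pow_α_ne_zero : E ^ (N - 1) • α ≠ 0
  span_γ : Submodule.span A {γ} = ⊤

omit [IsScalarTower k A M] in
theorem QuantumRelations.E_pow_smul_mem_span (Q : QuantumRelations N q L Z E F) (v : Fin 2 → M)
    (s : ℕ) (i : Fin 2) : E ^ s • v i ∈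
      Submodule.span k (Set.range fun p : Fin N × Fin 2 => E ^ (p.1 : ℕ) • v p.2) := by
  rcases lt_or_ge s N with hs | hs
  · exact Submodule.subset_span ⟨(⟨s, hs⟩, i), rfl⟩
  · rw [Q.E_pow_smul_eq_zero hs]
    exact zero_mem _

namespace BlockSetting

variable (S : BlockSetting N r r' q σ L Z E F)
include S

theorem swap : BlockSetting N r' r q (-σ) L Z E F where
  __ := S
  odd := S.odd'
  odd' := S.odd
  add_eq := by rw [add_comm, S.add_eq]
  ne_neg h := S.ne_neg (neg_injective h)

theorem pos : 0 < r := S.odd.pos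

theorem lt : r < N := by
  have := S.odd'.pos
  have := S.add_eq
  omega

theorem q_ne_zero : q ≠ 0 := S.primitive.ne_zero (by have := S.lt; omega)

theorem q_pow_mul_q_pow : q ^ r * q ^ r' = 1 := by
  rw [← pow_add, S.add_eq, S.primitive.pow_eq_one]

theorem inv_q_pow : q⁻¹ ^ r = q ^ r' := by
  rw [inv_pow, inv_eq_of_mul_eq_one_right S.q_pow_mul_q_pow]

theorem commCoeff_eq_zero_iff {s : ℕ} (hs : 0 < s) (hsN : s < N) :
    commCoeff 1 q⁻¹ (q ^ (r - 1)) s = 0 ↔ s = r :=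
  QFL.commCoeff_eq_zero_iff S.primitive S.pos S.lt.le hs hsN

theorem L_weight : (q⁻¹ ^ 2) ^ r * q ^ (r - 1) = q ^ (r' - 1) := by
  rw [pow_right_comm, S.inv_q_pow, sq, mul_assoc]
  obtain ⟨t, rfl⟩ := Nat.exists_eq_succ_of_ne_zero S.pos.ne'
  obtain ⟨t', rfl⟩ := Nat.exists_eq_succ_of_ne_zero S.swap.pos.ne'
  have h := S.q_pow_mul_q_pow
  simp only [Nat.succ_eq_add_one, Nat.add_sub_cancel, pow_succ] at h ⊢
  linear_combination q ^ t' * h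

end BlockSetting

namespace TwoStringRelations

section Lowering

variable (R : TwoStringRelations r r' q σ L Z E F α γ) (Q : QuantumRelations N q L Z E F)
include R Q

theorem F_smul_E_pow_smul_α (s : ℕ) :
    F • E ^ s • α = commCoeff 1 q⁻¹ (q ^ (r - 1)) s • E ^ (s - 1) • α := by
  rw [Q.F_smul_E_pow_smul R.L_α, R.F_α, smul_zero, smul_zero, zero_add]

theorem F_smul_E_pow_smul_γ (s : ℕ) : F • E ^ s • γ =
    q⁻¹ ^ s • E ^ (s + (r - 1)) • α + commCoeff 1 q⁻¹ (q ^ (r' - 1)) s • E ^ (s - 1) • γ := by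
  rw [Q.F_smul_E_pow_smul R.L_γ, R.F_γ, ← mul_smul (E ^ s), ← pow_add]

end Lowering

variable (R : TwoStringRelations r r' q σ L Z E F α γ) (S : BlockSetting N r r' q σ L Z E F)
include R S

theorem F_smul_E_pow_r_smul_α : F • E ^ r • α = 0 := by
  rw [R.F_smul_E_pow_smul_α S.relations, (S.commCoeff_eq_zero_iff S.pos S.lt).mpr rfl, zero_smul]

theorem F_smul_E_pow_r'_smul_γ : F • E ^ r' • γ = q ^ r • E ^ (N - 1) • α := by
  have := S.pos
  rw [R.F_smul_E_pow_smul_γ S.relations,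
    (S.swap.commCoeff_eq_zero_iff S.swap.pos S.swap.lt).mpr rfl, zero_smul, add_zero,
    S.swap.inv_q_pow, show r' + (r - 1) = N - 1 by have := S.add_eq; omega]

theorem Z_smul_E_pow_r_smul_α : Z • E ^ r • α = σ • E ^ r • α := by
  rw [S.relations.Z_E.smul_pow_smul R.Z_α, S.odd.neg_one_pow, neg_mul_neg, one_mul]

theorem L_smul_E_pow_r_smul_α : L • E ^ r • α = q ^ (r' - 1) • E ^ r • α := by
  rw [S.relations.L_E.smul_pow_smul R.L_α, S.L_weight]

theorem Z_smul_E_pow_r'_smul_γ : Z • E ^ r' • γ = (-σ) • E ^ r' • γ := by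
  rw [S.relations.Z_E.smul_pow_smul R.Z_γ, S.odd'.neg_one_pow, neg_one_mul]

theorem L_smul_E_pow_r'_smul_γ : L • E ^ r' • γ = q ^ (r - 1) • E ^ r' • γ := by
  rw [S.relations.L_E.smul_pow_smul R.L_γ, S.swap.L_weight]

theorem α_mem {W : Submodule A M} (hγ : γ ∈ W) : α ∈ W := by
  suffices descend : ∀ s < r, E ^ s • α ∈ W → α ∈ W by
    refine descend (r - 1) (Nat.sub_lt S.pos one_pos) ?_
    rw [← R.F_γ]
    exact W.smul_mem F hγ
  intro s
  induction s with
  | zero => simp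
  | succ s ih =>
    intro hs hmem
    refine ih (by omega) ?_
    have hc := mt (S.commCoeff_eq_zero_iff s.succ_pos (hs.trans S.lt)).mp hs.ne
    have hF := W.smul_mem F hmem
    rw [R.F_smul_E_pow_smul_α S.relations, Nat.add_sub_cancel] at hF
    rw [← inv_smul_smul₀ hc (E ^ s • α)]
    exact W.smul_of_tower_mem _ hF

end TwoStringRelations

namespace IsTwoStringModule

variable (H : IsTwoStringModule N r r' q σ L Z E F α γ) (S : BlockSetting N r r' q σ L Z E F)
include H S

theorem E_pow_smul_γ_ne_zero {s : ℕ} (hr : r' ≤ s) (hs : s < N) : E ^ s • γ ≠ 0 := by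
  induction s, hr using Nat.le_induction with
  | base =>
    intro h
    have hF := H.F_smul_E_pow_r'_smul_γ S
    rw [h, smul_zero, eq_comm, smul_eq_zero] at hF
    exact hF.elim (pow_ne_zero _ S.q_ne_zero) H.E_pow_α_ne_zero
  | succ s hr ih =>
    intro h
    have hF := H.F_smul_E_pow_smul_γ S.relations (s + 1)
    have hN : N ≤ s + 1 + (r - 1) := by have := S.add_eq; have := S.pos; omega
    rw [h, smul_zero, S.relations.E_pow_smul_eq_zero hN, smul_zero, zero_add, eq_comm,
      smul_eq_zero, S.swap.commCoeff_eq_zero_iff s.succ_pos hs] at hF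
    exact hF.elim (by omega) (ih (by omega))

theorem linearIndependent_E_pow :
    LinearIndependent k fun p : Fin N × Fin 2 => E ^ (p.1 : ℕ) • ![α, γ] p.2 := by
  have hN : (Algebra.lsmul k k M E) ^ N = 0 := by rw [← map_pow, S.relations.E_pow, map_zero]
  have smul_eq (s : ℕ) (v : M) : ((Algebra.lsmul k k M E) ^ s) v = E ^ s • v := by
    rw [← map_pow, Algebra.lsmul_coe]
  have top : LinearIndependent k ![E ^ (N - 1) • α, E ^ (N - 1) • γ] := by
    have := S.lt
    have := S.swap.lt
    have sign : (-1 : k) ^ (N - 1) ≠ 0 := pow_ne_zero _ (neg_ne_zero.mpr one_ne_zero)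
    refine linearIndependent_pair_of_apply_eq_smul (T := Algebra.lsmul k k M Z)
      (fun h => S.ne_neg.symm (mul_left_cancel₀ sign h)) H.E_pow_α_ne_zero
      (H.E_pow_smul_γ_ne_zero S (by omega) (by omega))
      (S.relations.Z_E.smul_pow_smul H.Z_α (N - 1)) (S.relations.Z_E.smul_pow_smul H.Z_γ (N - 1))
  simp only [← smul_eq]
  refine linearIndependent_pow_apply hN ?_
  convert top with i
  fin_cases i <;> exact smul_eq _ _

theorem smul_mem_span_E_pow {a : A} (ha : a ∈ ({L, Z, E, F} : Set A)) {v : M}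
    (hv : v ∈ Submodule.span k (Set.range fun p : Fin N × Fin 2 => E ^ (p.1 : ℕ) • ![α, γ] p.2)) :
    a • v ∈ Submodule.span k (Set.range fun p : Fin N × Fin 2 => E ^ (p.1 : ℕ) • ![α, γ] p.2) := by
  set W := Submodule.span k (Set.range fun p : Fin N × Fin 2 => E ^ (p.1 : ℕ) • ![α, γ] p.2)
  have hα (s : ℕ) : E ^ s • α ∈ W := S.relations.E_pow_smul_mem_span ![α, γ] s 0
  have hγ (s : ℕ) : E ^ s • γ ∈ W := S.relations.E_pow_smul_mem_span ![α, γ] s 1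
  suffices W ≤ W.comap (Algebra.lsmul k k M a) from this hv
  refine Submodule.span_le.mpr ?_
  rintro _ ⟨⟨s, i⟩, rfl⟩
  change a • E ^ (s : ℕ) • ![α, γ] i ∈ W
  revert i
  rw [Fin.forall_fin_two]
  change a • E ^ (s : ℕ) • α ∈ W ∧ a • E ^ (s : ℕ) • γ ∈ W
  have Q := S.relations
  rcases ha with rfl | rfl | rfl | rfl
  · rw [Q.L_E.smul_pow_smul H.L_α, Q.L_E.smul_pow_smul H.L_γ]
    exact ⟨W.smul_mem _ (hα s), W.smul_mem _ (hγ s)⟩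
  · rw [Q.Z_E.smul_pow_smul H.Z_α, Q.Z_E.smul_pow_smul H.Z_γ]
    exact ⟨W.smul_mem _ (hα s), W.smul_mem _ (hγ s)⟩
  · rw [← mul_smul, ← mul_smul, ← pow_succ']
    exact ⟨hα _, hγ _⟩
  · rw [H.F_smul_E_pow_smul_α Q, H.F_smul_E_pow_smul_γ Q]
    exact ⟨W.smul_mem _ (hα _), W.add_mem (W.smul_mem _ (hα _)) (W.smul_mem _ (hγ _))⟩

theorem span_E_pow_eq_top :
    ⊤ ≤ Submodule.span k (Set.range fun p : Fin N × Fin 2 => E ^ (p.1 : ℕ) • ![α, γ] p.2) := by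
  intro v _
  have hv : v ∈ Submodule.span A {γ} := H.span_γ ▸ Submodule.mem_top
  obtain ⟨a, rfl⟩ := Submodule.mem_span_singleton.mp hv
  refine map_mem_of_adjoin_eq_top S.adjoin_eq_top (Algebra.lsmul k k M)
    (fun _ ha _ => H.smul_mem_span_E_pow S ha) a ?_
  simpa using S.relations.E_pow_smul_mem_span ![α, γ] 0 1

/-- The basis of a two-string module formed by the vectors `E ^ s • α` and `E ^ s • γ`, `s < N`. -/
def basis : Module.Basis (Fin N × Fin 2) k M :=
  .mk (H.linearIndependent_E_pow S) (H.span_E_pow_eq_top S)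

theorem basis_apply (p : Fin N × Fin 2) :
    H.basis S p = E ^ (p.1 : ℕ) • ![α, γ] p.2 :=
  Module.Basis.mk_apply _ _ p

omit [Module A M'] [IsScalarTower k A M'] in
theorem hom_ext_E_pow {f f' : M →ₗ[k] M'} (hα : ∀ s, f (E ^ s • α) = f' (E ^ s • α))
    (hγ : ∀ s, f (E ^ s • γ) = f' (E ^ s • γ)) : f = f' := by
  refine (H.basis S).ext fun ⟨s, i⟩ => ?_
  rw [basis_apply]
  revert i
  exact Fin.forall_fin_two.mpr ⟨hα s, hγ s⟩

omit [IsScalarTower k A M'] in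
theorem exists_linearMap_E_pow (v : Fin 2 → M') :
    ∃ f : M →ₗ[k] M', ∀ s i, f (E ^ s • ![α, γ] i) = E ^ s • v i := by
  refine ⟨(H.basis S).constr k fun p => E ^ (p.1 : ℕ) • v p.2, fun s i => ?_⟩
  rcases lt_or_ge s N with hs | hs
  · rw [← H.basis_apply S (⟨s, hs⟩, i), Module.Basis.constr_basis]
  · rw [S.relations.E_pow_smul_eq_zero hs, S.relations.E_pow_smul_eq_zero hs, map_zero]

theorem exists_hom (R : TwoStringRelations r r' q σ L Z E F a g) :
    ∃ f : M →ₗ[A] M', f α = a ∧ f γ = g := by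
  obtain ⟨f, hf⟩ := H.exists_linearMap_E_pow S ![a, g]
  have hα (s : ℕ) : f (E ^ s • α) = E ^ s • a := hf s 0
  have hγ (s : ℕ) : f (E ^ s • γ) = E ^ s • g := hf s 1
  have Q := S.relations
  have intertwines (x : A) (hx : x ∈ ({L, Z, E, F} : Set A)) :
      f ∘ₗ Algebra.lsmul k k M x = Algebra.lsmul k k M' x ∘ₗ f := by
    refine H.hom_ext_E_pow S (fun s => ?_) fun s => ?_ <;>
    change f (x • _) = x • f _ <;> rcases hx with rfl | rfl | rfl | rfl
    · rw [Q.L_E.smul_pow_smul H.L_α, map_smul, hα, Q.L_E.smul_pow_smul R.L_α]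
    · rw [Q.Z_E.smul_pow_smul H.Z_α, map_smul, hα, Q.Z_E.smul_pow_smul R.Z_α]
    · rw [← mul_smul, ← pow_succ', hα, hα, pow_succ', mul_smul]
    · rw [H.F_smul_E_pow_smul_α Q, map_smul, hα, hα, R.F_smul_E_pow_smul_α Q]
    · rw [Q.L_E.smul_pow_smul H.L_γ, map_smul, hγ, Q.L_E.smul_pow_smul R.L_γ]
    · rw [Q.Z_E.smul_pow_smul H.Z_γ, map_smul, hγ, Q.Z_E.smul_pow_smul R.Z_γ]
    · rw [← mul_smul, ← pow_succ', hγ, hγ, pow_succ', mul_smul]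
    · rw [H.F_smul_E_pow_smul_γ Q, map_add, map_smul, hα, map_smul, hγ, hγ,
        R.F_smul_E_pow_smul_γ Q]
  have map_smul' (x : A) (v : M) : f (x • v) = x • f v :=
    LinearMap.congr_fun (intertwines_of_adjoin_eq_top S.adjoin_eq_top _ _ intertwines x) v
  refine ⟨{ f with map_smul' := map_smul' }, ?_, ?_⟩
  · simpa using hα 0
  · simpa using hγ 0

end IsTwoStringModule

end TwoString

section Homs

variable {k A M M' : Type*} [Field k] [Ring A] [Algebra k A]
  [AddCommGroup M] [Module k M] [Module A M] [IsScalarTower k A M]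
  [AddCommGroup M'] [Module k M'] [Module A M'] [IsScalarTower k A M']
  {N r r' : ℕ} {q σ : k} {L Z E F : A} {α γ : M} {α' γ' : M'}

namespace IsTwoStringModule

section Kernel

variable (H : IsTwoStringModule N r r' q σ L Z E F α γ) (S : BlockSetting N r r' q σ L Z E F)
include H S

theorem E_pow_smul_α_mem_range_F (s : ℕ) :
    E ^ s • α ∈ LinearMap.range (Algebra.lsmul k k M F) := by
  by_cases hs : s + 1 < N
  · by_cases hr : s + 1 = r
    · exact ⟨γ, by rw [← Nat.add_sub_cancel s 1, hr]; exact H.F_γ⟩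
    · have hc := mt (S.commCoeff_eq_zero_iff s.succ_pos hs).mp hr
      refine ⟨(commCoeff 1 q⁻¹ (q ^ (r - 1)) (s + 1))⁻¹ • E ^ (s + 1) • α, ?_⟩
      change F • (_ : M) = _
      rw [smul_comm F, H.F_smul_E_pow_smul_α S.relations, Nat.add_sub_cancel,
        inv_smul_smul₀ hc]
  rcases Nat.lt_or_ge s N with hsN | hsN
  · refine ⟨(q ^ r)⁻¹ • E ^ r' • γ, ?_⟩
    change F • (_ : M) = _
    rw [smul_comm F, H.F_smul_E_pow_r'_smul_γ S,
      inv_smul_smul₀ (pow_ne_zero _ S.q_ne_zero), show N - 1 = s by omega]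
  · rw [S.relations.E_pow_smul_eq_zero hsN]
    exact zero_mem _

theorem top_le_range_F_sup_span : ⊤ ≤ LinearMap.range (Algebra.lsmul k k M F) ⊔
    Submodule.span k {E ^ (r' - 1) • γ, E ^ (N - 1) • γ} := by
  have hα := H.E_pow_smul_α_mem_range_F S
  refine (H.span_E_pow_eq_top S).trans (Submodule.span_le.mpr ?_)
  rintro _ ⟨⟨⟨s, hs⟩, i⟩, rfl⟩
  revert i
  rw [Fin.forall_fin_two]
  refine ⟨Submodule.mem_sup_left (hα s), ?_⟩
  change E ^ s • γ ∈ _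
  by_cases htop : s = N - 1
  · exact Submodule.mem_sup_right (Submodule.subset_span (by simp [htop]))
  by_cases hr : s = r' - 1
  · exact Submodule.mem_sup_right (Submodule.subset_span (by simp [hr]))
  refine Submodule.mem_sup_left ?_
  have hc := mt (S.swap.commCoeff_eq_zero_iff s.succ_pos (by omega)).mp (by omega)
  have hF := H.F_smul_E_pow_smul_γ S.relations (s + 1)
  rw [Nat.add_sub_cancel, ← sub_eq_iff_eq_add'] at hF
  rw [← inv_smul_smul₀ hc (E ^ s • γ), ← hF]
  exact Submodule.smul_mem _ _ (sub_mem ⟨_, rfl⟩ (Submodule.smul_mem _ _ (hα _)))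

theorem linearIndependent_pair {p p' : Fin N × Fin 2} (h : p ≠ p') : LinearIndependent k
    ![E ^ (p.1 : ℕ) • ![α, γ] p.2, E ^ (p'.1 : ℕ) • ![α, γ] p'.2] := by
  have injective : Function.Injective ![p, p'] := by
    intro i j hij
    fin_cases i <;> fin_cases j <;> simp_all [eq_comm]
  convert (H.linearIndependent_E_pow S).comp _ injective using 1
  ext i
  fin_cases i <;> rfl

theorem ker_F_eq : LinearMap.ker (Algebra.lsmul k k M F) = Submodule.span k {α, E ^ r • α} := by
  have := (H.basis S).finiteDimensional_of_finite
  have hr := S.pos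
  have independent : LinearIndependent k ![α, E ^ r • α] := by
    have := H.linearIndependent_pair S (p := (⟨0, by have := S.lt; omega⟩, 0))
      (p' := (⟨r, S.lt⟩, 0)) (by simp [Fin.ext_iff, hr.ne])
    simpa using this
  symm
  refine Submodule.eq_of_le_of_finrank_le ?_ ?_
  · rw [Submodule.span_le, Set.insert_subset_iff, Set.singleton_subset_iff]
    exact ⟨H.F_α, H.F_smul_E_pow_r_smul_α S⟩
  · have two_le : 2 ≤ Module.finrank k (Submodule.span k {α, E ^ r • α}) := by
      rw [← Matrix.range_cons_cons_empty α (E ^ r • α) ![]]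
      exact (finrank_span_eq_card independent).ge
    have le_two : Module.finrank k (Submodule.span k {E ^ (r' - 1) • γ, E ^ (N - 1) • γ}) ≤ 2 := by
      rw [← Matrix.range_cons_cons_empty (E ^ (r' - 1) • γ) (E ^ (N - 1) • γ) ![]]
      exact finrank_range_le_card _
    have total := Submodule.finrank_mono (H.top_le_range_F_sup_span S)
    have sup := Submodule.finrank_add_le_finrank_add_finrank
      (LinearMap.range (Algebra.lsmul k k M F))
      (Submodule.span k {E ^ (r' - 1) • γ, E ^ (N - 1) • γ})
    have nullity := LinearMap.finrank_range_add_finrank_ker (Algebra.lsmul k k M F)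
    rw [finrank_top] at total
    omega

theorem exists_eq_smul_α {v : M} (hF : F • v = 0) (hZ : Z • v = (-σ) • v) :
    ∃ c : k, v = c • α :=
  eq_smul_of_apply_eq_smul_of_mem_span_pair (T := Algebra.lsmul k k M Z) S.ne_neg.symm
    H.Z_α (H.Z_smul_E_pow_r_smul_α S) (H.ker_F_eq S ▸ hF) hZ

theorem exists_eq_smul_E_pow_r_smul_α {v : M} (hF : F • v = 0) (hZ : Z • v = σ • v) :
    ∃ c : k, v = c • E ^ r • α :=
  eq_smul_of_apply_eq_smul_of_mem_span_pair (T := Algebra.lsmul k k M Z) S.ne_neg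
    (H.Z_smul_E_pow_r_smul_α S) H.Z_α
    (Set.pair_comm α (E ^ r • α) ▸ H.ker_F_eq S ▸ hF) hZ

theorem end_apply_γ_mem (f : Module.End A M) :
    f γ ∈ Submodule.span k {γ, E ^ r • α} := by
  obtain ⟨c, hc⟩ := H.exists_eq_smul_α S (v := f α) (by rw [← map_smul, H.F_α, map_zero])
    (by rw [← map_smul, H.Z_α, LinearMap.map_smul_of_tower])
  obtain ⟨d, hd⟩ := H.exists_eq_smul_E_pow_r_smul_α S (v := f γ - c • γ)
    (by rw [smul_sub, ← map_smul, H.F_γ, map_smul, hc, smul_comm F, H.F_γ, smul_comm, sub_self])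
    (by rw [smul_sub, ← map_smul, H.Z_γ, LinearMap.map_smul_of_tower, smul_comm Z, H.Z_γ,
      smul_comm c, smul_sub])
  exact Submodule.mem_span_pair.mpr ⟨c, d, by rw [← hd, add_sub_cancel]⟩

theorem hom_apply_γ_mem (H' : IsTwoStringModule N r' r q (-σ) L Z E F α' γ') (f : M →ₗ[A] M') :
    f γ ∈ Submodule.span k {E ^ r • γ', α'} := by
  have hZα : Z • f α = (-σ) • f α := by rw [← map_smul, H.Z_α, LinearMap.map_smul_of_tower]
  obtain ⟨c, hc⟩ := H'.exists_eq_smul_E_pow_r_smul_α S.swap (v := f α)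
    (by rw [← map_smul, H.F_α, map_zero]) hZα
  have hFγ : F • f γ = c • E ^ (N - 1) • α' := by
    rw [← map_smul, H.F_γ, map_smul, hc, smul_comm, ← mul_smul, ← pow_add,
      show r - 1 + r' = N - 1 by have := S.add_eq; have := S.pos; omega]
  have hqr : q ^ r' ≠ 0 := pow_ne_zero _ S.q_ne_zero
  obtain ⟨d, hd⟩ := H'.exists_eq_smul_α S.swap (v := f γ - (c * (q ^ r')⁻¹) • E ^ r • γ')
    (by rw [smul_sub, hFγ, smul_comm F, H'.F_smul_E_pow_r'_smul_γ S.swap, smul_smul,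
      inv_mul_cancel_right₀ hqr, sub_self])
    (by rw [neg_neg, smul_sub, ← map_smul, H.Z_γ, LinearMap.map_smul_of_tower, smul_comm Z,
      H'.Z_smul_E_pow_r'_smul_γ S.swap, neg_neg, smul_comm _ σ, smul_sub])
  exact Submodule.mem_span_pair.mpr ⟨_, d, by rw [← hd, add_sub_cancel]⟩

end Kernel

end IsTwoStringModule

namespace TwoStringRelations

variable (R' : TwoStringRelations r' r q (-σ) L Z E F α' γ')
include R'

omit [Algebra k A] [IsScalarTower k A M'] in
theorem partner_α : TwoStringRelations r r' q σ L Z E F 0 α' where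
  F_α := smul_zero F
  F_γ := by rw [R'.F_α, smul_zero]
  L_α := by rw [smul_zero, smul_zero]
  L_γ := R'.L_α
  Z_α := by rw [smul_zero, smul_zero]
  Z_γ := by rw [R'.Z_α, neg_neg]

theorem partner_E_pow (S : BlockSetting N r r' q σ L Z E F) :
    TwoStringRelations r r' q σ L Z E F (q ^ r' • E ^ r' • α') (E ^ r • γ') where
  F_α := by rw [smul_comm F, R'.F_smul_E_pow_r_smul_α S.swap, smul_zero]
  F_γ := by
    rw [R'.F_smul_E_pow_r'_smul_γ S.swap, smul_comm (E ^ (r - 1)), ← mul_smul, ← pow_add,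
      show r - 1 + r' = N - 1 by have := S.add_eq; have := S.pos; omega]
  L_α := by rw [smul_comm L, R'.L_smul_E_pow_r_smul_α S.swap, smul_comm]
  L_γ := R'.L_smul_E_pow_r'_smul_γ S.swap
  Z_α := by rw [smul_comm Z, R'.Z_smul_E_pow_r_smul_α S.swap, smul_comm]
  Z_γ := by rw [R'.Z_smul_E_pow_r'_smul_γ S.swap, neg_neg]

end TwoStringRelations

end Homs

section BasisPair

variable {k W : Type*} [Field k] [AddCommGroup W] [Module k W] {u v : W}

/-- The vectors `u` and `v` form a basis. -/
def IsBasisPair (k : Type*) {W : Type*} [Field k] [AddCommGroup W] [Module k W] (u v : W) : Prop :=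
  Function.Bijective fun t : k × k => t.1 • u + t.2 • v

variable {A V V' : Type*} [Ring A] [Algebra k A]
  [AddCommGroup V] [Module k V] [Module A V] [IsScalarTower k A V]
  [AddCommGroup V'] [Module k V'] [Module A V'] [IsScalarTower k A V']

omit [Algebra k A] [Module k V] [IsScalarTower k A V] [Module k V'] [IsScalarTower k A V'] in
theorem ext_of_span_singleton_eq_top {γ : V} (hγ : Submodule.span A {γ} = ⊤) {f g : V →ₗ[A] V'}
    (h : f γ = g γ) : f = g :=
  LinearMap.ext_on hγ (Set.eqOn_singleton.mpr h)

omit [Module k V] [IsScalarTower k A V] in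
theorem IsBasisPair.of_apply {γ : V} (hγ : Submodule.span A {γ} = ⊤) {f g : V →ₗ[A] V'}
    (independent : LinearIndependent k ![f γ, g γ])
    (mem_span : ∀ h : V →ₗ[A] V', h γ ∈ Submodule.span k {f γ, g γ}) : IsBasisPair k f g := by
  constructor
  · intro s t hst
    have := LinearMap.congr_fun hst γ
    exact Prod.ext_iff.mpr (independent.eq_of_pair this)
  · intro h
    obtain ⟨a, b, hab⟩ := Submodule.mem_span_pair.mp (mem_span h)
    exact ⟨(a, b), ext_of_span_singleton_eq_top hγ hab⟩

theorem bijective_add_sub (h2 : (2 : k) ≠ 0) :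
    Function.Bijective fun p : W × W => (p.1 + p.2, p.1 - p.2) := by
  refine Function.bijective_iff_has_inverse.mpr
    ⟨fun p => ((2 : k)⁻¹ • (p.1 + p.2), (2 : k)⁻¹ • (p.1 - p.2)), fun p => ?_, fun p => ?_⟩
  · ext
    · rw [inv_smul_eq_iff₀ h2]
      module
    · rw [inv_smul_eq_iff₀ h2]
      module
  · ext <;> dsimp only
    · rw [← smul_add, inv_smul_eq_iff₀ h2]
      module
    · rw [← smul_sub, inv_smul_eq_iff₀ h2]
      module

end BasisPair

section Block

variable {k A V V' : Type*} [Field k] [Ring A] [Algebra k A]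
  [AddCommGroup V] [Module k V] [Module A V] [IsScalarTower k A V]
  [AddCommGroup V'] [Module k V'] [Module A V'] [IsScalarTower k A V']

/-- The endomorphism of `V × V'` with block matrix `(a, b; c, d)`. -/
def blockEnd (a : V →ₗ[A] V) (b : V' →ₗ[A] V) (c : V →ₗ[A] V') (d : V' →ₗ[A] V') :
    Module.End A (V × V') :=
  (a.coprod b).prod (c.coprod d)

theorem blockEnd_mul (a a' : V →ₗ[A] V) (b b' : V' →ₗ[A] V) (c c' : V →ₗ[A] V')
    (d d' : V' →ₗ[A] V') : blockEnd a b c d * blockEnd a' b' c' d' =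
      blockEnd (a ∘ₗ a' + b ∘ₗ c') (a ∘ₗ b' + b ∘ₗ d') (c ∘ₗ a' + d ∘ₗ c') (c ∘ₗ b' + d ∘ₗ d') := by
  ext v <;> simp [blockEnd]

theorem blockEnd_add (a a' : V →ₗ[A] V) (b b' : V' →ₗ[A] V) (c c' : V →ₗ[A] V')
    (d d' : V' →ₗ[A] V') : blockEnd a b c d + blockEnd a' b' c' d' =
      blockEnd (a + a') (b + b') (c + c') (d + d') := by
  ext v <;> simp [blockEnd]

theorem blockEnd_neg (a : V →ₗ[A] V) (b : V' →ₗ[A] V) (c : V →ₗ[A] V') (d : V' →ₗ[A] V') :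
    -blockEnd a b c d = blockEnd (-a) (-b) (-c) (-d) := by
  ext v <;> simp [blockEnd]

theorem smul_blockEnd (s : k) (a : V →ₗ[A] V) (b : V' →ₗ[A] V) (c : V →ₗ[A] V')
    (d : V' →ₗ[A] V') : s • blockEnd a b c d = blockEnd (s • a) (s • b) (s • c) (s • d) := by
  ext v <;> simp [blockEnd]

theorem blockEnd_one : blockEnd (.id : V →ₗ[A] V) 0 0 (.id : V' →ₗ[A] V') = 1 := by
  ext v <;> simp [blockEnd]

theorem blockEnd_zero : blockEnd (0 : V →ₗ[A] V) 0 0 (0 : V' →ₗ[A] V') = 0 := by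
  ext v <;> simp [blockEnd]

theorem blockEnd_inj {a a' : V →ₗ[A] V} {b b' : V' →ₗ[A] V} {c c' : V →ₗ[A] V'}
    {d d' : V' →ₗ[A] V'} :
    blockEnd a b c d = blockEnd a' b' c' d' ↔ a = a' ∧ b = b' ∧ c = c' ∧ d = d' := by
  refine ⟨fun h => ?_, fun ⟨ha, hb, hc, hd⟩ => by rw [ha, hb, hc, hd]⟩
  have left (v : V) := LinearMap.congr_fun h (v, 0)
  have right (v' : V') := LinearMap.congr_fun h (0, v')
  simp only [blockEnd, LinearMap.prod_apply, Function.prod_apply, LinearMap.coprod_apply, map_zero,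
    add_zero, zero_add, Prod.mk.injEq] at left right
  exact ⟨LinearMap.ext fun v => (left v).1, LinearMap.ext fun v => (right v).1,
    LinearMap.ext fun v => (left v).2, LinearMap.ext fun v => (right v).2⟩

theorem exists_eq_blockEnd (φ : Module.End A (V × V')) : ∃ a b c d, φ = blockEnd a b c d :=
  ⟨.fst A V V' ∘ₗ φ ∘ₗ .inl A V V', .fst A V V' ∘ₗ φ ∘ₗ .inr A V V',
    .snd A V V' ∘ₗ φ ∘ₗ .inl A V V', .snd A V V' ∘ₗ φ ∘ₗ .inr A V V', by
      ext v <;> simp [blockEnd, ← Prod.zero_eq_mk]⟩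

end Block

section Lambda

/-- The defining relations of `Λ`, for elements `g`, `x`, `y` of an arbitrary ring. -/
structure LambdaTriple {B : Type*} [Ring B] (g x y : B) : Prop where
  x_sq : x ^ 2 = 0
  y_sq : y ^ 2 = 0
  g_sq : g ^ 2 = 1
  g_mul_x : g * x = -(x * g)
  g_mul_y : g * y = -(y * g)
  commute : x * y = y * x

section NormalForm

variable (k : Type*) {B B' : Type*} [Field k] [Ring B] [Algebra k B] [Ring B'] [Algebra k B']
  {g x y : B}

/-- Linear combinations of `1`, `x`, `y` and `x * y`. -/
def xyComb (x y : B) : (Fin 4 → k) →ₗ[k] B := Fintype.linearCombination k ![1, x, y, x * y]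

/-- Linear combinations of the eight normal monomials `x ^ a * y ^ b * g ^ c` of `Λ`, those with
`c = 0` coming first. -/
def normalForm (g x y : B) : (Fin 4 → k) × (Fin 4 → k) →ₗ[k] B :=
  (xyComb k x y).coprod (LinearMap.mulRight k g ∘ₗ xyComb k x y)

variable {k}

theorem xyComb_apply (t : Fin 4 → k) :
    xyComb k x y t = t 0 • (1 : B) + t 1 • x + t 2 • y + t 3 • (x * y) := by
  simp [xyComb, Fintype.linearCombination_apply, Fin.sum_univ_four]

theorem normalForm_apply (s t : Fin 4 → k) :
    normalForm k g x y (s, t) = xyComb k x y s + xyComb k x y t * g := rfl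

theorem map_normalForm (φ : B →ₐ[k] B') (p : (Fin 4 → k) × (Fin 4 → k)) :
    φ (normalForm k g x y p) = normalForm k (φ g) (φ x) (φ y) p := by
  obtain ⟨s, t⟩ := p
  simp only [normalForm_apply, xyComb_apply, map_add, map_mul, map_smul, map_one]

namespace LambdaTriple

variable (T : LambdaTriple g x y)
include T

theorem x_mul_xyComb (t : Fin 4 → k) : x * xyComb k x y t = xyComb k x y ![0, t 0, 0, t 2] := by
  have hx : x * x = 0 := by rw [← sq, T.x_sq]
  simp [xyComb_apply, mul_add, ← mul_assoc, hx]

theorem y_mul_xyComb (t : Fin 4 → k) : y * xyComb k x y t = xyComb k x y ![0, 0, t 0, t 1] := by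
  have hy : y * y = 0 := by rw [← sq, T.y_sq]
  have hyyx : y * (y * x) = 0 := by rw [← mul_assoc, hy, zero_mul]
  simp [xyComb_apply, mul_add, hy, hyyx, T.commute, add_comm]

theorem g_mul_xyComb (t : Fin 4 → k) :
    g * xyComb k x y t = xyComb k x y ![t 0, -t 1, -t 2, t 3] * g := by
  have hgxy : g * (x * y) = x * y * g := by
    rw [← mul_assoc, T.g_mul_x, neg_mul, mul_assoc, T.g_mul_y, mul_neg, neg_neg, mul_assoc]
  simp [xyComb_apply, mul_add, add_mul, T.g_mul_x, T.g_mul_y, hgxy]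

theorem mul_mem_range_normalForm {a b : B} (ha : a ∈ ({g, x, y} : Set B))
    (hb : b ∈ LinearMap.range (normalForm k g x y)) :
    a * b ∈ LinearMap.range (normalForm k g x y) := by
  obtain ⟨⟨s, t⟩, rfl⟩ := hb
  rw [normalForm_apply, mul_add, ← mul_assoc]
  rcases ha with rfl | rfl | rfl
  · have hg : a * a = 1 := by rw [← sq, T.g_sq]
    rw [T.g_mul_xyComb, T.g_mul_xyComb, mul_assoc _ a a, hg, mul_one, add_comm]
    exact ⟨(![t 0, -t 1, -t 2, t 3], ![s 0, -s 1, -s 2, s 3]), rfl⟩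
  · rw [T.x_mul_xyComb, T.x_mul_xyComb]
    exact ⟨(![0, s 0, 0, s 2], ![0, t 0, 0, t 2]), rfl⟩
  · rw [T.y_mul_xyComb, T.y_mul_xyComb]
    exact ⟨(![0, 0, s 0, s 1], ![0, 0, t 0, t 1]), rfl⟩

theorem surjective_normalForm (hB : Algebra.adjoin k {g, x, y} = ⊤) :
    Function.Surjective (normalForm k g x y) := by
  intro b
  have one_mem : (1 : B) ∈ LinearMap.range (normalForm k g x y) :=
    ⟨(![1, 0, 0, 0], 0), by simp [normalForm_apply, xyComb_apply]⟩
  simpa using map_mem_of_adjoin_eq_top hB (Algebra.lmul k B)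
    (fun _ ha _ => T.mul_mem_range_normalForm ha) b one_mem

end LambdaTriple

end NormalForm

variable {k : Type} [Field k] {B : Type*} [Ring B] [Algebra k B] {g x y : B}

/-- The generators `g`, `x`, `y` of `Λ`, in this order. -/
def lambdaGen (k : Type) [Field k] (i : Fin 3) : Lambda k :=
  RingQuot.mkAlgHom k (LambdaRel k) (FreeAlgebra.ι k i)

theorem lambdaTriple_lambdaGen :
    LambdaTriple (lambdaGen k 0) (lambdaGen k 1) (lambdaGen k 2) where
  x_sq := by simpa [lambdaGen] using RingQuot.mkAlgHom_rel k (LambdaRel.x2 (k := k))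
  y_sq := by simpa [lambdaGen] using RingQuot.mkAlgHom_rel k (LambdaRel.y2 (k := k))
  g_sq := by simpa [lambdaGen] using RingQuot.mkAlgHom_rel k (LambdaRel.g2 (k := k))
  g_mul_x := by simpa [lambdaGen] using RingQuot.mkAlgHom_rel k (LambdaRel.gx (k := k))
  g_mul_y := by simpa [lambdaGen] using RingQuot.mkAlgHom_rel k (LambdaRel.gy (k := k))
  commute := by simpa [lambdaGen] using RingQuot.mkAlgHom_rel k (LambdaRel.xy (k := k))

theorem adjoin_lambdaGen :
    Algebra.adjoin k {lambdaGen k 0, lambdaGen k 1, lambdaGen k 2} = ⊤ := by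
  have range_eq : {lambdaGen k 0, lambdaGen k 1, lambdaGen k 2} =
      RingQuot.mkAlgHom k (LambdaRel k) '' Set.range (FreeAlgebra.ι k) := by
    ext
    simp [lambdaGen, Fin.exists_fin_succ, eq_comm]
  rw [range_eq, ← AlgHom.map_adjoin, FreeAlgebra.adjoin_range_ι, Algebra.map_top,
    AlgHom.range_eq_top]
  exact RingQuot.mkAlgHom_surjective k (LambdaRel k)

namespace LambdaTriple

/-- The homomorphism from `Λ` given by its universal property. -/
def lift (T : LambdaTriple g x y) : Lambda k →ₐ[k] B :=
  RingQuot.liftAlgHom k ⟨FreeAlgebra.lift k ![g, x, y], by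
    intro a b h
    cases h <;> simp [T.x_sq, T.y_sq, T.g_sq, T.g_mul_x, T.g_mul_y, T.commute]⟩

theorem lift_lambdaGen (T : LambdaTriple g x y) (i : Fin 3) :
    T.lift (lambdaGen k i) = ![g, x, y] i := by
  rw [lift, lambdaGen, RingQuot.liftAlgHom_mkAlgHom_apply, FreeAlgebra.lift_ι_apply]

theorem nonempty_algEquiv (T : LambdaTriple g x y)
    (bijective : Function.Bijective (normalForm k g x y)) : Nonempty (B ≃ₐ[k] Lambda k) := by
  have comp_eq : T.lift ∘ normalForm k (lambdaGen k 0) (lambdaGen k 1) (lambdaGen k 2) =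
      normalForm k g x y := by
    funext p
    rw [Function.comp_apply, map_normalForm, T.lift_lambdaGen, T.lift_lambdaGen, T.lift_lambdaGen]
    rfl
  rw [← comp_eq] at bijective
  have normalForm_bijective : Function.Bijective
      (normalForm k (lambdaGen k 0) (lambdaGen k 1) (lambdaGen k 2)) :=
    ⟨bijective.injective.of_comp, lambdaTriple_lambdaGen.surjective_normalForm adjoin_lambdaGen⟩
  exact ⟨(AlgEquiv.ofBijective T.lift
    ((Function.Bijective.of_comp_iff _ normalForm_bijective).mp bijective)).symm⟩

end LambdaTriple

end Lambda

section Square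

variable {k A V V' : Type*} [Field k] [Ring A] [Algebra k A]
  [AddCommGroup V] [Module k V] [Module A V] [IsScalarTower k A V]
  [AddCommGroup V'] [Module k V'] [Module A V'] [IsScalarTower k A V']
  {X Y : V →ₗ[A] V'} {X' Y' : V' →ₗ[A] V}

/-- The relations on a double quiver `X, Y : V → V'`, `X', Y' : V' → V` which make the off-diagonal
endomorphisms `(0, X'; X, 0)` and `(0, Y'; Y, 0)` of `V × V'` commute and square to zero. -/
structure QuiverRelations (X Y : V →ₗ[A] V') (X' Y' : V' →ₗ[A] V) : Prop where
  X'_comp_X : X' ∘ₗ X = 0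
  X_comp_X' : X ∘ₗ X' = 0
  Y'_comp_Y : Y' ∘ₗ Y = 0
  Y_comp_Y' : Y ∘ₗ Y' = 0
  X'_comp_Y : X' ∘ₗ Y = Y' ∘ₗ X
  X_comp_Y' : X ∘ₗ Y' = Y ∘ₗ X'

theorem QuiverRelations.lambdaTriple (Q : QuiverRelations X Y X' Y') :
    LambdaTriple (blockEnd .id 0 0 (-.id)) (blockEnd 0 X' X 0) (blockEnd 0 Y' Y 0) where
  x_sq := by simp [sq, blockEnd_mul, Q.X'_comp_X, Q.X_comp_X', blockEnd_zero]
  y_sq := by simp [sq, blockEnd_mul, Q.Y'_comp_Y, Q.Y_comp_Y', blockEnd_zero]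
  g_sq := by simp [sq, blockEnd_mul, blockEnd_one]
  g_mul_x := by simp [blockEnd_mul, blockEnd_neg]
  g_mul_y := by simp [blockEnd_mul, blockEnd_neg]
  commute := by simp [blockEnd_mul, Q.X'_comp_Y, Q.X_comp_Y']

/-- The block endomorphism of `V × V'` whose entries are linear combinations of the paths of the
double quiver. The coordinates of `s` and `t` are numbered as the monomials `1`, `x`, `y`, `x * y`;
those of `s` belong to the paths starting at `V`, those of `t` to the paths starting at `V'`. -/
def quiverComb (X Y : V →ₗ[A] V') (X' Y' : V' →ₗ[A] V) (p : (Fin 4 → k) × (Fin 4 → k)) :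
    Module.End A (V × V') :=
  blockEnd (p.1 0 • .id + p.1 3 • X' ∘ₗ Y) (p.2 1 • X' + p.2 2 • Y')
    (p.1 1 • X + p.1 2 • Y) (p.2 0 • .id + p.2 3 • X ∘ₗ Y')

theorem bijective_quiverComb (h : IsBasisPair k .id (X' ∘ₗ Y)) (hX' : IsBasisPair k X' Y')
    (hX : IsBasisPair k X Y) (h' : IsBasisPair k .id (X ∘ₗ Y')) :
    Function.Bijective (quiverComb (k := k) X Y X' Y') := by
  constructor
  · rintro ⟨s, t⟩ ⟨s', t'⟩ heq
    obtain ⟨ha, hb, hc, hd⟩ := blockEnd_inj.mp heq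
    have s_inner := h.injective (a₁ := (s 0, s 3)) (a₂ := (s' 0, s' 3)) ha
    have t_outer := hX'.injective (a₁ := (t 1, t 2)) (a₂ := (t' 1, t' 2)) hb
    have s_outer := hX.injective (a₁ := (s 1, s 2)) (a₂ := (s' 1, s' 2)) hc
    have t_inner := h'.injective (a₁ := (t 0, t 3)) (a₂ := (t' 0, t' 3)) hd
    simp only [Prod.mk.injEq] at s_inner s_outer t_inner t_outer
    ext i <;> fin_cases i <;> simp [s_inner, s_outer, t_inner, t_outer]
  · intro φ
    obtain ⟨a, b, c, d, rfl⟩ := exists_eq_blockEnd φ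
    obtain ⟨⟨s₀, s₃⟩, rfl⟩ := h.surjective a
    obtain ⟨⟨t₁, t₂⟩, rfl⟩ := hX'.surjective b
    obtain ⟨⟨s₁, s₂⟩, rfl⟩ := hX.surjective c
    obtain ⟨⟨t₀, t₃⟩, rfl⟩ := h'.surjective d
    exact ⟨(![s₀, s₁, s₂, s₃], ![t₀, t₁, t₂, t₃]), rfl⟩

theorem normalForm_eq_quiverComb (p : (Fin 4 → k) × (Fin 4 → k)) :
    normalForm k (blockEnd .id 0 0 (-.id)) (blockEnd 0 X' X 0) (blockEnd 0 Y' Y 0) p =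
      quiverComb X Y X' Y' (p.1 + p.2, p.1 - p.2) := by
  obtain ⟨s, t⟩ := p
  simp only [normalForm_apply, xyComb_apply, ← blockEnd_one, blockEnd_mul, smul_blockEnd,
    blockEnd_add, quiverComb, blockEnd_inj]
  refine ⟨?_, ?_, ?_, ?_⟩ <;>
  · simp only [LinearMap.comp_zero, LinearMap.zero_comp, LinearMap.comp_id, LinearMap.comp_neg,
      smul_zero, add_zero, zero_add, Pi.add_apply, Pi.sub_apply]
    module

theorem QuiverRelations.nonempty_algEquiv_lambda {k : Type} [Field k] [Algebra k A]
    [Module k V] [IsScalarTower k A V] [Module k V'] [IsScalarTower k A V']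
    (Q : QuiverRelations X Y X' Y')
    (h2 : (2 : k) ≠ 0) (h : IsBasisPair k .id (X' ∘ₗ Y)) (hX' : IsBasisPair k X' Y')
    (hX : IsBasisPair k X Y) (h' : IsBasisPair k .id (X ∘ₗ Y')) :
    Nonempty (Module.End A (V × V') ≃ₐ[k] Lambda k) := by
  refine Q.lambdaTriple.nonempty_algEquiv ?_
  rw [funext normalForm_eq_quiverComb]
  exact (bijective_quiverComb h hX' hX h').comp (bijective_add_sub h2)

end Square

theorem IsBasisPair.smul_right {k W : Type*} [Field k] [AddCommGroup W] [Module k W] {u v : W}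
    (h : IsBasisPair k u v) {c : k} (hc : c ≠ 0) : IsBasisPair k u (c • v) := by
  have scale : Function.Bijective fun t : k × k => (t.1, t.2 * c) :=
    Function.bijective_id.prodMap (mulRight_bijective₀ c hc)
  have comp := Function.Bijective.comp h scale
  simpa only [IsBasisPair, Function.comp_def, mul_smul] using comp

section BlockAlgebra

variable {k A M M' : Type*} [Field k] [Ring A] [Algebra k A]
  [AddCommGroup M] [Module k M] [Module A M] [IsScalarTower k A M]
  [AddCommGroup M'] [Module k M'] [Module A M'] [IsScalarTower k A M']
  {N r r' : ℕ} {q σ : k} {L Z E F : A} {α γ : M} {α' γ' : M'}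

theorem BlockSetting.two_ne_zero (S : BlockSetting N r r' q σ L Z E F) : (2 : k) ≠ 0 := by
  intro h2
  refine S.ne_neg (eq_neg_of_add_eq_zero_left ?_)
  rw [← two_mul, h2, zero_mul]

namespace IsTwoStringModule

section

variable (H : IsTwoStringModule N r r' q σ L Z E F α γ) (S : BlockSetting N r r' q σ L Z E F)
include H S

theorem isBasisPair_id {f : Module.End A M} (hf : f γ = E ^ r • α) : IsBasisPair k .id f := by
  refine .of_apply H.span_γ ?_ fun h => ?_
  · have := H.linearIndependent_pair S (p := (⟨0, S.pos.trans S.lt⟩, 1)) (p' := (⟨r, S.lt⟩, 0))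
      (by simp)
    simpa [hf] using this
  · rw [hf]
    exact H.end_apply_γ_mem S h

variable (H' : IsTwoStringModule N r' r q (-σ) L Z E F α' γ')
include H'

theorem exists_isBasisPair_hom : ∃ X Y : M →ₗ[A] M', X α = q ^ r' • E ^ r' • α' ∧
    X γ = E ^ r • γ' ∧ Y α = 0 ∧ Y γ = α' ∧ IsBasisPair k X Y := by
  obtain ⟨X, hXα, hXγ⟩ := H.exists_hom S (H'.partner_E_pow S)
  obtain ⟨Y, hYα, hYγ⟩ := H.exists_hom S H'.partner_α
  refine ⟨X, Y, hXα, hXγ, hYα, hYγ, .of_apply H.span_γ ?_ fun h => ?_⟩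
  · have := H'.linearIndependent_pair S.swap (p := (⟨r, S.lt⟩, 1))
      (p' := (⟨0, S.pos.trans S.lt⟩, 0)) (by simp)
    simpa [hXγ, hYγ] using this
  · rw [hXγ, hYγ]
    exact H.hom_apply_γ_mem S H' h

end

theorem nonempty_algEquiv_lambda {k : Type} [Field k] [Algebra k A] [Module k M]
    [IsScalarTower k A M] [Module k M'] [IsScalarTower k A M'] {q σ : k}
    (H : IsTwoStringModule N r r' q σ L Z E F α γ)
    (H' : IsTwoStringModule N r' r q (-σ) L Z E F α' γ') (S : BlockSetting N r r' q σ L Z E F) :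
    Nonempty (Module.End A (M × M') ≃ₐ[k] Lambda k) := by
  obtain ⟨X, Y, hXα, hXγ, hYα, hYγ, hXY⟩ := H.exists_isBasisPair_hom S H'
  obtain ⟨X', Y₁, hXα', hXγ', hYα', hYγ', hXY'⟩ :=
    H'.exists_isBasisPair_hom S.swap ((neg_neg σ).symm ▸ H)
  have hq : q ^ r ≠ 0 := pow_ne_zero _ S.q_ne_zero
  have X'Y_eq : X' ∘ₗ Y = (q ^ r • Y₁) ∘ₗ X :=
    ext_of_span_singleton_eq_top H.span_γ (by simp [*])
  have XY'_eq : X ∘ₗ (q ^ r • Y₁) = Y ∘ₗ X' :=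
    ext_of_span_singleton_eq_top H'.span_γ (by simp [*, smul_smul, S.q_pow_mul_q_pow])
  have E_pow_α (a : M) : E ^ r • E ^ r' • a = 0 := by
    rw [← mul_smul, ← pow_add, S.relations.E_pow_smul_eq_zero S.add_eq.ge]
  have E_pow_α' (a : M') : E ^ r' • E ^ r • a = 0 := by
    rw [← mul_smul, ← pow_add, S.relations.E_pow_smul_eq_zero S.swap.add_eq.ge]
  have Q : QuiverRelations X Y X' (q ^ r • Y₁) :=
    { X'_comp_X := ext_of_span_singleton_eq_top H.span_γ (by simp [*])
      X_comp_X' := ext_of_span_singleton_eq_top H'.span_γ (by simp [*])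
      Y'_comp_Y := ext_of_span_singleton_eq_top H.span_γ (by simp [*])
      Y_comp_Y' := ext_of_span_singleton_eq_top H'.span_γ (by simp [*])
      X'_comp_Y := X'Y_eq
      X_comp_Y' := XY'_eq }
  refine Q.nonempty_algEquiv_lambda S.two_ne_zero ?_ (hXY'.smul_right hq) hXY ?_
  · rw [X'Y_eq]
    exact (H.isBasisPair_id S (f := Y₁ ∘ₗ X) (by simp [*])).smul_right hq
  · rw [XY'_eq]
    exact H'.isBasisPair_id S.swap (f := Y ∘ₗ X') (by simp [*])

end IsTwoStringModule

end BlockAlgebra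

section Projective

variable {k : Type} [Field k] {n : ℕ} {q : k} {i : ℕ}

theorem sign_ne_neg_sign (h2 : (2 : k) ≠ 0) (j : ℕ) : sign k j ≠ -sign k j := by
  intro h
  rw [eq_neg_iff_add_eq_zero, ← two_mul, mul_eq_zero, or_iff_right h2] at h
  simpa [h] using sign_sq (k := k) j

theorem gam_mem_P (j : ℕ) : gam k n q i j ∈ P k n q i j := Submodule.mem_span_singleton_self _

variable (h4 : 4 ∣ n) (hn : n ≠ 0) (hq : IsPrimitiveRoot q (n ^ 2)) (hi : 1 ≤ i)
  (hi' : i ≤ n ^ 2 / 2) (j : ℕ)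
include h4 hn hq hi hi'

theorem blockSetting : BlockSetting (n ^ 2) (2 * i - 1) (n ^ 2 - 2 * i + 1) q (sign k j)
    (torusL k n q) (torusZ k n q) (E k n q) (F k n q) where
  relations := quantumRelations h4 hn hq
  adjoin_eq_top := adjoin_torus h4 hn
  primitive := hq
  odd := ⟨i - 1, by omega⟩
  odd' := ((even_sq_of_four_dvd h4).tsub (even_two_mul i)).add_one
  add_eq := by omega
  ne_neg := sign_ne_neg_sign (two_ne_zero_of_four_dvd h4 hn hq) j

theorem twoStringRelations_alpha_gam : TwoStringRelations (2 * i - 1) (n ^ 2 - 2 * i + 1) q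
    (sign k j) (torusL k n q) (torusZ k n q) (E k n q) (F k n q)
    (alpha k n q i j) (gam k n q i j) where
  F_α := F_mul_alpha hn i j
  F_γ := (gam_mem_pbw_and_F_mul_gam h4 hn hq hi hi' j).2
  L_α := torusL_smul_alpha h4 hn hq j hi
  L_γ := torusL_smul_gam h4 hn hq hi hi' j
  Z_α := torusZ_smul_alpha h4 hn hq j
  Z_γ := torusZ_smul_gam h4 hn hq hi hi' j

theorem alpha_mem_P : alpha k n q i j ∈ P k n q i j :=
  (twoStringRelations_alpha_gam h4 hn hq hi hi' j).α_mem (blockSetting h4 hn hq hi hi' j)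
    (gam_mem_P j)

theorem isTwoStringModule_P : IsTwoStringModule (n ^ 2) (2 * i - 1) (n ^ 2 - 2 * i + 1) q
    (sign k j) (torusL k n q) (torusZ k n q) (E k n q) (F k n q)
    (⟨alpha k n q i j, alpha_mem_P h4 hn hq hi hi' j⟩ : P k n q i j)
    ⟨gam k n q i j, gam_mem_P j⟩ :=
  have R := twoStringRelations_alpha_gam h4 hn hq hi hi' j
  { F_α := Subtype.ext R.F_α
    F_γ := Subtype.ext R.F_γ
    L_α := Subtype.ext R.L_α
    L_γ := Subtype.ext R.L_γ
    Z_α := Subtype.ext R.Z_α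
    Z_γ := Subtype.ext R.Z_γ
    E_pow_α_ne_zero := fun h =>
      E_pow_smul_alpha_ne_zero h4 hn hq i j (congrArg Subtype.val h)
    span_γ := by
      rw [eq_top_iff]
      rintro ⟨v, hv⟩ -
      obtain ⟨u, rfl⟩ := Submodule.mem_span_singleton.mp hv
      exact Submodule.mem_span_singleton.mpr ⟨u, rfl⟩ }

end Projective

end QFL

open QFL in
theorem statement13_general (k : Type) [Field k] (n : ℕ) (h4 : 4 ∣ n) (q : k)
    (hq : IsPrimitiveRoot q (n ^ 2)) (i : ℕ) (hi : 1 ≤ i) (hi' : i ≤ n ^ 2 / 2) :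
    Nonempty ((Module.End (U k n q)
      ((P k n q i 0) × (P k n q (n ^ 2 / 2 - i + 1) 1))) ≃ₐ[k] Lambda k) := by
  have hn : n ≠ 0 := by rintro rfl; omega
  have heven := Nat.div_two_mul_two_of_even (even_sq_of_four_dvd h4)
  have H := isTwoStringModule_P h4 hn hq hi hi' 0
  have H' := isTwoStringModule_P h4 hn hq (i := n ^ 2 / 2 - i + 1) (by omega) (by omega) 1
  have sign_one : sign k 1 = -sign k 0 := by simp [sign]
  have r_partner : 2 * (n ^ 2 / 2 - i + 1) - 1 = n ^ 2 - 2 * i + 1 := by omega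
  have r'_partner : n ^ 2 - 2 * (n ^ 2 / 2 - i + 1) + 1 = 2 * i - 1 := by omega
  rw [sign_one, r_partner, r'_partner] at H'
  exact H.nonempty_algEquiv_lambda H' (blockSetting h4 hn hq hi hi' 0)

open QFL in
/-- The basic algebra of each block: `End_u(P_{2i,0} ⊕ P_{n²-2i+2,1}) ≅ Λ` as `k`-algebras. -/
theorem statement13 (k : Type) [Field k] [IsAlgClosed k] [CharZero k]
    (n : ℕ) (hn : 0 < n) (h4 : 4 ∣ n) (q : k) (hq : IsPrimitiveRoot q (n ^ 2)) :
    ∀ i : ℕ, 1 ≤ i → i ≤ n ^ 2 / 2 →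
      Nonempty ((Module.End (U k n q)
          ((P k n q i 0) × (P k n q (n ^ 2 / 2 - i + 1) 1))) ≃ₐ[k] Lambda k) :=
  statement13_general k n h4 q hq
end
end

section
/- Let l ≥ 2 be an integer, ζ ∈ k a primitive l-th root of unity, and m a positive integer with gcd(m,l) = 1. Then the book algebra h(ζ,m) := k⟨y,x,g⟩/(x^l, y^l, g^l−1, gx−ζxg, gy−ζ^m yg, xy−yx) admits a Hopf algebra structure over k whose comultiplication, counit and antipode satisfy Δ(x) = x⊗g + 1⊗x, Δ(y) = y⊗1 + g^m⊗y, Δ(g) = g⊗g, ε(x) = ε(y) = 0, ε(g) = 1, S(x) = −xg^{-1}, S(y) = −g^{-m}y, S(g) = g^{-1}. -/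
noncomputable section

open scoped TensorProduct

namespace Book

/-- The defining relations of the book algebra `h(ζ,m)`:
generators `g = ι 0`, `x = ι 1`, `y = ι 2` with relations
`x^l = 0`, `y^l = 0`, `g^l = 1`, `gx = ζxg`, `gy = ζ^m yg`, `xy = yx`. -/
inductive BookRel (k : Type) [Field k] (l m : ℕ) (ζ : k) :
    FreeAlgebra k (Fin 3) → FreeAlgebra k (Fin 3) → Prop
  | xl : BookRel k l m ζ (FreeAlgebra.ι k (1 : Fin 3) ^ l) 0
  | yl : BookRel k l m ζ (FreeAlgebra.ι k (2 : Fin 3) ^ l) 0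
  | gl : BookRel k l m ζ (FreeAlgebra.ι k (0 : Fin 3) ^ l) 1
  | gx : BookRel k l m ζ (FreeAlgebra.ι k (0 : Fin 3) * FreeAlgebra.ι k (1 : Fin 3))
      (ζ • (FreeAlgebra.ι k (1 : Fin 3) * FreeAlgebra.ι k (0 : Fin 3)))
  | gy : BookRel k l m ζ (FreeAlgebra.ι k (0 : Fin 3) * FreeAlgebra.ι k (2 : Fin 3))
      (ζ ^ m • (FreeAlgebra.ι k (2 : Fin 3) * FreeAlgebra.ι k (0 : Fin 3)))
  | xy : BookRel k l m ζ (FreeAlgebra.ι k (1 : Fin 3) * FreeAlgebra.ι k (2 : Fin 3))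
      (FreeAlgebra.ι k (2 : Fin 3) * FreeAlgebra.ι k (1 : Fin 3))

/-- The book algebra `h(ζ,m)`. -/
abbrev H (k : Type) [Field k] (l m : ℕ) (ζ : k) := RingQuot (BookRel k l m ζ)

variable (k : Type) [Field k] (l m : ℕ) (ζ : k)

def g : H k l m ζ := RingQuot.mkAlgHom k (BookRel k l m ζ) (FreeAlgebra.ι k (0 : Fin 3))
def x : H k l m ζ := RingQuot.mkAlgHom k (BookRel k l m ζ) (FreeAlgebra.ι k (1 : Fin 3))
def y : H k l m ζ := RingQuot.mkAlgHom k (BookRel k l m ζ) (FreeAlgebra.ι k (2 : Fin 3))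

end Book

/-!
The comultiplication, the counit and the antipode are algebra maps out of `h(ζ,m)`, the last one
with values in the opposite algebra, so each of them amounts to three elements that satisfy the
defining relations. The only relations needing an idea are `Δ(x)^l = 0` and `Δ(y)^l = 0`: both
`Δ(x)` and `Δ(y)` are sums of two `q`-commuting elements, with `q = ζ` and `q = ζ^(m^2)`
respectively. As `m` is coprime to `l`, both are primitive `l`-th roots of unity; at such a `q` the
Gaussian binomials `[l choose j]_q` with `0 < j < l` vanish, so the `l`-th power is additive.

Coassociativity and the counit laws are equalities of algebra maps, hence hold once they hold on
`g`, `x` and `y`. The antipode laws are not, but an antipode that reverses products satisfies them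
on `a * b` as soon as it does on `a` and `b`.
-/

section GaussBinom

/-- The Gaussian binomial coefficient `[n choose j]_q`, defined by the `q`-Pascal recursion so that
it makes sense for every `q`, roots of unity included. -/
def gaussBinom {R : Type*} [CommSemiring R] (q : R) : ℕ → ℕ → R
  | _, 0 => 1
  | 0, _ + 1 => 0
  | n + 1, j + 1 => gaussBinom q n j + q ^ (j + 1) * gaussBinom q n (j + 1)

section CommSemiring

variable {R : Type*} [CommSemiring R] (q : R)

theorem gaussBinom_zero_right (n : ℕ) : gaussBinom q n 0 = 1 := by
  cases n <;> rfl

theorem gaussBinom_succ_succ (n j : ℕ) :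
    gaussBinom q (n + 1) (j + 1) = gaussBinom q n j + q ^ (j + 1) * gaussBinom q n (j + 1) := rfl

theorem gaussBinom_eq_zero_of_lt {n j : ℕ} (h : n < j) : gaussBinom q n j = 0 := by
  induction n generalizing j with
  | zero =>
    obtain ⟨j, rfl⟩ := Nat.exists_eq_add_one.2 h
    rfl
  | succ n ih =>
    obtain ⟨j, rfl⟩ := Nat.exists_eq_add_one.2 (Nat.zero_lt_of_lt h)
    rw [gaussBinom_succ_succ, ih (by lia), ih (by lia), mul_zero, add_zero]

theorem gaussBinom_self (n : ℕ) : gaussBinom q n n = 1 := by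
  induction n with
  | zero => rfl
  | succ n ih =>
    rw [gaussBinom_succ_succ, ih, gaussBinom_eq_zero_of_lt q n.lt_succ_self, mul_zero, add_zero]

end CommSemiring

theorem gaussBinom_succ_succ_mul_pow_sub_one {R : Type*} [CommRing R] (q : R) (n j : ℕ) :
    gaussBinom q (n + 1) (j + 1) * (q ^ (j + 1) - 1) = gaussBinom q n j * (q ^ (n + 1) - 1) := by
  induction n generalizing j with
  | zero => cases j <;> simp [gaussBinom]
  | succ n ih =>
    cases j with
    | zero =>
      have h := ih 0
      rw [gaussBinom_zero_right] at h ⊢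
      rw [gaussBinom_succ_succ, gaussBinom_zero_right]
      linear_combination q * h
    | succ j =>
      rw [gaussBinom_succ_succ q (n + 1) (j + 1)]
      linear_combination q ^ (j + 2) * ih (j + 1) + q * ih j -
        q * (q ^ (n + 1) - 1) * gaussBinom_succ_succ q n j

theorem gaussBinom_eq_zero_of_isPrimitiveRoot {R : Type*} [CommRing R] [IsDomain R] {q : R}
    {l j : ℕ} (hq : IsPrimitiveRoot q l) (hj : j ≠ 0) (hjl : j < l) : gaussBinom q l j = 0 := by
  obtain ⟨n, rfl⟩ := Nat.exists_eq_add_one.2 (Nat.zero_lt_of_lt hjl)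
  obtain ⟨i, rfl⟩ := Nat.exists_eq_add_one_of_ne_zero hj
  have h := gaussBinom_succ_succ_mul_pow_sub_one q n i
  rw [hq.pow_eq_one, sub_self, mul_zero] at h
  exact (mul_eq_zero.1 h).resolve_right (sub_ne_zero.2 (hq.pow_ne_one_of_pos_of_lt hj hjl))

end GaussBinom

/-- The elements `a` and `b` `q`-commute: moving `a` to the right past `b` costs a factor `q`. -/
def QCommute {R A : Type*} [Mul A] [SMul R A] (q : R) (a b : A) : Prop :=
  a * b = q • (b * a)

namespace QCommute

open TensorProduct MulOpposite

section Semiring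

variable {R A B : Type*} [CommSemiring R] [Semiring A] [Algebra R A] [Semiring B] [Algebra R B]
  {p q : R} {a b c : A}

protected theorem eq (h : QCommute q a b) : a * b = q • (b * a) := h

theorem one_iff : QCommute (1 : R) a b ↔ Commute a b := by
  rw [QCommute, one_smul, Commute, SemiconjBy]

theorem symm (h : QCommute q a b) (hpq : p * q = 1) : QCommute p b a := by
  rw [QCommute, h, smul_smul, hpq, one_smul]

theorem add_left (ha : QCommute q a c) (hb : QCommute q b c) : QCommute q (a + b) c := by
  rw [QCommute, add_mul, mul_add, ha, hb, smul_add]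

theorem add_right (hb : QCommute q a b) (hc : QCommute q a c) : QCommute q a (b + c) := by
  rw [QCommute, add_mul, mul_add, hb, hc, smul_add]

theorem mul_left (ha : QCommute p a c) (hb : QCommute q b c) : QCommute (p * q) (a * b) c := by
  rw [QCommute, mul_assoc, hb, mul_smul_comm, ← mul_assoc, ha, smul_mul_assoc, smul_smul,
    mul_assoc, mul_comm q]

theorem mul_right (hb : QCommute p a b) (hc : QCommute q a c) :
    QCommute (p * q) a (b * c) := by
  rw [QCommute, ← mul_assoc, hb, smul_mul_assoc, mul_assoc, hc, mul_smul_comm, smul_smul,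
    mul_assoc]

theorem pow_left (h : QCommute q a b) (n : ℕ) : QCommute (q ^ n) (a ^ n) b := by
  induction n with
  | zero => simpa only [pow_zero] using one_iff.2 (Commute.one_left b)
  | succ n ih => simpa only [pow_succ] using ih.mul_left h

theorem pow_right (h : QCommute q a b) (n : ℕ) : QCommute (q ^ n) a (b ^ n) := by
  induction n with
  | zero => simpa only [pow_zero] using one_iff.2 (Commute.one_right a)
  | succ n ih => simpa only [pow_succ] using ih.mul_right h

theorem tmul {a' b' : B} (h : QCommute p a b) (h' : QCommute q a' b') :
    QCommute (p * q) (a ⊗ₜ[R] a') (b ⊗ₜ[R] b') := by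
  rw [QCommute, Algebra.TensorProduct.tmul_mul_tmul, Algebra.TensorProduct.tmul_mul_tmul, h, h',
    smul_tmul_smul]

theorem op (h : QCommute q a b) : QCommute q (op b) (op a) := by
  rw [QCommute, ← op_mul, ← op_mul, h, op_smul]

theorem mul_pow (h : QCommute q b a) (n : ℕ) :
    (a * b) ^ n = q ^ n.choose 2 • (a ^ n * b ^ n) := by
  induction n with
  | zero => simp
  | succ n ih =>
    calc (a * b) ^ (n + 1) = q ^ n.choose 2 • (a ^ n * (b ^ n * a) * b) := by
          rw [pow_succ, ih, smul_mul_assoc]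
          simp only [mul_assoc]
      _ = (q ^ n.choose 2 * q ^ n) • (a ^ n * (a * b ^ n) * b) := by
          rw [h.pow_left n, mul_smul_comm, smul_mul_assoc, smul_smul]
      _ = q ^ (n + 1).choose 2 • (a ^ (n + 1) * b ^ (n + 1)) := by
          rw [Nat.choose_succ_succ' n 1, Nat.choose_one_right, pow_add, mul_comm (q ^ n), pow_succ,
            pow_succ]
          simp only [mul_assoc]

theorem mul_sum_pow_mul_pow (h : QCommute q b a) (n : ℕ) (c : ℕ → R) :
    b * ∑ j ∈ Finset.range (n + 1), c j • (a ^ j * b ^ (n - j)) =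
      ∑ j ∈ Finset.range (n + 1), (q ^ j * c j) • (a ^ j * b ^ (n + 1 - j)) := by
  rw [Finset.mul_sum]
  refine Finset.sum_congr rfl fun j hj => ?_
  have hj' : n + 1 - j = n - j + 1 := Nat.succ_sub (Finset.mem_range_succ_iff.1 hj)
  rw [mul_smul_comm, ← mul_assoc, h.pow_right j, smul_mul_assoc, smul_smul, hj', pow_succ' b,
    mul_assoc, mul_comm]

theorem add_pow (h : QCommute q b a) (n : ℕ) :
    (a + b) ^ n = ∑ j ∈ Finset.range (n + 1), gaussBinom q n j • (a ^ j * b ^ (n - j)) := by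
  induction n with
  | zero => simp [gaussBinom]
  | succ n ih =>
    have hb : b * (a + b) ^ n =
        ∑ j ∈ Finset.range (n + 2), (q ^ j * gaussBinom q n j) • (a ^ j * b ^ (n + 1 - j)) := by
      rw [ih, h.mul_sum_pow_mul_pow, Finset.sum_range_succ _ (n + 1),
        gaussBinom_eq_zero_of_lt q n.lt_succ_self, mul_zero, zero_smul, add_zero]
    rw [pow_succ', add_mul, hb, Finset.sum_range_succ', Finset.sum_range_succ' _ (n + 1), ih,
      Finset.mul_sum, ← add_assoc, ← Finset.sum_add_distrib]
    congr 1
    · refine Finset.sum_congr rfl fun j _ => ?_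
      rw [gaussBinom_succ_succ, add_smul, mul_smul_comm, ← mul_assoc, ← pow_succ',
        Nat.add_sub_add_right]
    · simp [gaussBinom_zero_right]

end Semiring

section Ring

variable {R A : Type*} [CommRing R] [Ring A] [Algebra R A] {q : R} {a b : A}

theorem neg_left (h : QCommute q a b) : QCommute q (-a) b := by
  rw [QCommute, neg_mul, mul_neg, h, smul_neg]

theorem add_pow_of_isPrimitiveRoot [IsDomain R] {l : ℕ} [NeZero l] (hq : IsPrimitiveRoot q l)
    (h : QCommute q b a) : (a + b) ^ l = a ^ l + b ^ l := by
  rw [h.add_pow, Finset.sum_range_succ, Finset.sum_eq_single_of_mem 0]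
  · simp [gaussBinom_zero_right, gaussBinom_self, add_comm]
  · exact Finset.mem_range.2 (NeZero.pos l)
  · intro j hj hj0
    rw [gaussBinom_eq_zero_of_isPrimitiveRoot hq hj0 (Finset.mem_range.1 hj), zero_smul]

end Ring

end QCommute

section Antipode

open MulOpposite TensorProduct

section Algebra

variable {R A : Type*} [CommSemiring R] [Semiring A] [Algebra R A] (S : A →ₐ[R] Aᵐᵒᵖ)

/-- The linear endomorphism of `A` underlying an algebra map `A → Aᵐᵒᵖ`, that is, an algebra
anti-endomorphism of `A` regarded as a linear map. -/
def antiEnd : A →ₗ[R] A :=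
  (opLinearEquiv R).symm.toLinearMap ∘ₗ S.toLinearMap

@[simp]
theorem antiEnd_apply (a : A) : antiEnd S a = unop (S a) := rfl

theorem mul'_rTensor_antiEnd_mul_tmul (u : A ⊗[R] A) (c d : A) :
    LinearMap.mul' R A ((antiEnd S).rTensor A (u * c ⊗ₜ d)) =
      antiEnd S c * LinearMap.mul' R A ((antiEnd S).rTensor A u) * d := by
  induction u with
  | zero => simp
  | tmul a b => simp [mul_assoc]
  | add u v hu hv => simp only [add_mul, map_add, hu, hv, mul_add]

theorem mul'_lTensor_antiEnd_tmul_mul (u : A ⊗[R] A) (c d : A) :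
    LinearMap.mul' R A ((antiEnd S).lTensor A (c ⊗ₜ d * u)) =
      c * LinearMap.mul' R A ((antiEnd S).lTensor A u) * antiEnd S d := by
  induction u with
  | zero => simp
  | tmul a b => simp [mul_assoc]
  | add u v hu hv => simp only [add_mul, map_add, hu, hv, mul_add]

theorem mul'_rTensor_antiEnd_mul {u : A ⊗[R] A} {e : R}
    (hu : LinearMap.mul' R A ((antiEnd S).rTensor A u) = algebraMap R A e) (v : A ⊗[R] A) :
    LinearMap.mul' R A ((antiEnd S).rTensor A (u * v)) =
      algebraMap R A e * LinearMap.mul' R A ((antiEnd S).rTensor A v) := by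
  induction v with
  | zero => simp
  | tmul c d =>
    rw [mul'_rTensor_antiEnd_mul_tmul, hu, ← Algebra.commutes, mul_assoc, LinearMap.rTensor_tmul,
      LinearMap.mul'_apply]
  | add v w hv hw => simp only [map_add, hv, hw, mul_add]

theorem mul'_lTensor_antiEnd_mul {u : A ⊗[R] A} {e : R}
    (hu : LinearMap.mul' R A ((antiEnd S).lTensor A u) = algebraMap R A e) (v : A ⊗[R] A) :
    LinearMap.mul' R A ((antiEnd S).lTensor A (v * u)) =
      LinearMap.mul' R A ((antiEnd S).lTensor A v) * algebraMap R A e := by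
  induction v with
  | zero => simp
  | tmul c d =>
    rw [mul'_lTensor_antiEnd_tmul_mul, hu, mul_assoc, Algebra.commutes, ← mul_assoc,
      LinearMap.lTensor_tmul, LinearMap.mul'_apply]
  | add v w hv hw => simp only [map_add, hv, hw, add_mul]

end Algebra

section Bialgebra

open Coalgebra

variable {R A : Type*} [CommSemiring R] [Semiring A] [Bialgebra R A] (S : A →ₐ[R] Aᵐᵒᵖ) {s : Set A}

theorem mul'_rTensor_antiEnd_comul_of_adjoin_eq_top (hs : Algebra.adjoin R s = ⊤)
    (h : ∀ a ∈ s, LinearMap.mul' R A ((antiEnd S).rTensor A (comul a)) =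
      algebraMap R A (counit a)) (a : A) :
    LinearMap.mul' R A ((antiEnd S).rTensor A (comul a)) = algebraMap R A (counit a) := by
  have ha : a ∈ Algebra.adjoin R s := hs ▸ Algebra.mem_top
  induction ha using Algebra.adjoin_induction with
  | mem a ha => exact h a ha
  | algebraMap r =>
    simp [Algebra.algebraMap_eq_smul_one, Algebra.TensorProduct.one_def]
  | add a b _ _ ha hb => simp only [map_add, ha, hb]
  | mul a b _ _ ha hb =>
    rw [Bialgebra.comul_mul, mul'_rTensor_antiEnd_mul S ha, hb, Bialgebra.counit_mul, map_mul]

theorem mul'_lTensor_antiEnd_comul_of_adjoin_eq_top (hs : Algebra.adjoin R s = ⊤)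
    (h : ∀ a ∈ s, LinearMap.mul' R A ((antiEnd S).lTensor A (comul a)) =
      algebraMap R A (counit a)) (a : A) :
    LinearMap.mul' R A ((antiEnd S).lTensor A (comul a)) = algebraMap R A (counit a) := by
  have ha : a ∈ Algebra.adjoin R s := hs ▸ Algebra.mem_top
  induction ha using Algebra.adjoin_induction with
  | mem a ha => exact h a ha
  | algebraMap r =>
    simp [Algebra.algebraMap_eq_smul_one, Algebra.TensorProduct.one_def]
  | add a b _ _ ha hb => simp only [map_add, ha, hb]
  | mul a b _ _ ha hb =>
    rw [Bialgebra.comul_mul, mul'_lTensor_antiEnd_mul S hb, ha, Bialgebra.counit_mul, map_mul]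

/-- The Hopf algebra structure on a bialgebra whose antipode is given as an algebra map to the
opposite algebra; the antipode axioms are only required on a set of algebra generators. -/
abbrev hopfAlgebraOfAdjoinEqTop (hs : Algebra.adjoin R s = ⊤)
    (hr : ∀ a ∈ s, LinearMap.mul' R A ((antiEnd S).rTensor A (comul a)) =
      algebraMap R A (counit a))
    (hl : ∀ a ∈ s, LinearMap.mul' R A ((antiEnd S).lTensor A (comul a)) =
      algebraMap R A (counit a)) : HopfAlgebra R A where
  antipode := antiEnd S
  mul_antipode_rTensor_comul :=
    LinearMap.ext (mul'_rTensor_antiEnd_comul_of_adjoin_eq_top S hs hr)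
  mul_antipode_lTensor_comul :=
    LinearMap.ext (mul'_lTensor_antiEnd_comul_of_adjoin_eq_top S hs hl)

end Bialgebra

end Antipode

namespace Book

/-- A triple `(G, X, Y)` in a `k`-algebra satisfying the defining relations of `h(ζ,m)`, i.e. the
data of an algebra map out of `h(ζ,m)`. -/
structure IsBookTriple {k A : Type*} [CommSemiring k] [Semiring A] [Algebra k A] (l m : ℕ) (ζ : k)
    (G X Y : A) : Prop where
  x_pow : X ^ l = 0
  y_pow : Y ^ l = 0
  g_pow : G ^ l = 1
  g_x : QCommute ζ G X
  g_y : QCommute (ζ ^ m) G Y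
  x_y : Commute X Y

namespace IsBookTriple

open MulOpposite TensorProduct

theorem one_zero_zero {k A : Type*} [CommSemiring k] [Semiring A] [Algebra k A] (l m : ℕ)
    [NeZero l] (ζ : k) : IsBookTriple l m ζ (1 : A) 0 0 := by
  constructor <;> simp [QCommute, NeZero.ne l]

variable {k A B : Type*} [CommRing k] [Ring A] [Algebra k A] [Ring B] [Algebra k B] {l m : ℕ}
  {ζ : k} {G X Y : A} {G' X' Y' : B}

theorem tmul [IsDomain k] [NeZero l] (hml : m.Coprime l) (hζ : IsPrimitiveRoot ζ l)
    (h : IsBookTriple l m ζ G X Y) (h' : IsBookTriple l m ζ G' X' Y') :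
    IsBookTriple l m ζ (G ⊗ₜ[k] G') (X ⊗ₜ[k] G' + 1 ⊗ₜ[k] X')
      (Y ⊗ₜ[k] 1 + (G ^ m) ⊗ₜ[k] Y') := by
  have one_left (a : A) : QCommute (1 : k) 1 a := QCommute.one_iff.2 (.one_left a)
  have one_right (b : B) : QCommute (1 : k) b 1 := QCommute.one_iff.2 (.one_right b)
  constructor
  case x_pow =>
    have hq : QCommute ζ (X ⊗ₜ[k] G') (1 ⊗ₜ[k] X') := by
      simpa using (QCommute.one_iff.2 (.one_right X)).tmul h'.g_x
    rw [add_comm, hq.add_pow_of_isPrimitiveRoot hζ]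
    simp [Algebra.TensorProduct.tmul_pow, h.x_pow, h'.x_pow]
  case y_pow =>
    have hq : QCommute ((ζ ^ m) ^ m) ((G ^ m) ⊗ₜ[k] Y') (Y ⊗ₜ[k] 1) := by
      simpa using (h.g_y.pow_left m).tmul (one_right Y')
    rw [hq.add_pow_of_isPrimitiveRoot ((hζ.pow_of_coprime m hml).pow_of_coprime m hml)]
    simp [Algebra.TensorProduct.tmul_pow, h.y_pow, h'.y_pow]
  case g_pow =>
    rw [Algebra.TensorProduct.tmul_pow, h.g_pow, h'.g_pow, Algebra.TensorProduct.one_def]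
  case g_x =>
    refine .add_right ?_ ?_
    · simpa using h.g_x.tmul (QCommute.one_iff.2 (.refl G'))
    · simpa using (QCommute.one_iff.2 (.one_right G)).tmul h'.g_x
  case g_y =>
    refine .add_right ?_ ?_
    · simpa using h.g_y.tmul (one_right G')
    · simpa using (QCommute.one_iff.2 (.self_pow G m)).tmul h'.g_y
  case x_y =>
    have hζm : ζ ^ (m * (l - 1)) * ζ ^ m = 1 := by
      rw [pow_mul, pow_sub_one_mul (NeZero.ne l), pow_right_comm, hζ.pow_eq_one, one_pow]
    have hxg : QCommute (ζ ^ (m * (l - 1))) X (G ^ m) := (h.g_x.pow_left m).symm hζm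
    refine (QCommute.one_iff (R := k)).1 (.add_left (.add_right ?_ ?_) (.add_right ?_ ?_))
    · simpa using (QCommute.one_iff.2 h.x_y).tmul (one_right G')
    · simpa only [hζm] using hxg.tmul h'.g_y
    · simpa using (one_left Y).tmul (one_right X')
    · simpa using (one_left (G ^ m)).tmul (QCommute.one_iff.2 h'.x_y)

theorem op_antipode [NeZero l] (hζ : ζ ^ l = 1) (h : IsBookTriple l m ζ G X Y) :
    IsBookTriple l m ζ (op (G ^ (l - 1))) (op (-(X * G ^ (l - 1))))
      (op (-((G ^ (l - 1)) ^ m * Y))) := by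
  set G' := G ^ (l - 1)
  have hζm : ζ ^ m * (ζ ^ m) ^ (l - 1) = 1 := by
    rw [mul_pow_sub_one (NeZero.ne l), pow_right_comm, hζ, one_pow]
  have hG'X : QCommute (ζ ^ (l - 1)) G' X := h.g_x.pow_left (l - 1)
  have hG'Y : QCommute ((ζ ^ m) ^ (l - 1)) G' Y := h.g_y.pow_left (l - 1)
  have hXG' : QCommute ζ X G' := hG'X.symm (by rw [mul_pow_sub_one (NeZero.ne l), hζ])
  have hYG' : QCommute (ζ ^ m) Y G' := hG'Y.symm hζm
  have hG'G' (n : ℕ) : Commute G' (G' ^ n) := .self_pow G' n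
  constructor
  case x_pow => rw [← op_pow, neg_pow, hG'X.mul_pow, h.x_pow]; simp
  case y_pow => rw [← op_pow, neg_pow, (hYG'.pow_right m).mul_pow, h.y_pow]; simp
  case g_pow => rw [← op_pow, pow_right_comm, h.g_pow, one_pow, op_one]
  case g_x =>
    refine (QCommute.neg_left ?_).op
    simpa using hXG'.mul_left (QCommute.one_iff.2 (.refl G'))
  case g_y =>
    refine (QCommute.neg_left ?_).op
    simpa using (QCommute.one_iff.2 (hG'G' m).symm).mul_left hYG'
  case x_y =>
    have hX : QCommute (ζ ^ m) X (G' ^ m * Y) := by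
      simpa using (hXG'.pow_right m).mul_right (QCommute.one_iff.2 h.x_y)
    have hG' : QCommute ((ζ ^ m) ^ (l - 1)) G' (G' ^ m * Y) := by
      simpa using (QCommute.one_iff.2 (hG'G' m)).mul_right hG'Y
    have hXG'Y : Commute (X * G') (G' ^ m * Y) := by
      simpa only [hζm, QCommute.one_iff] using hX.mul_left hG'
    exact hXG'Y.neg_left.neg_right.op

theorem g_pow_mul_g [NeZero l] (h : IsBookTriple l m ζ G X Y) : G ^ (l - 1) * G = 1 := by
  rw [pow_sub_one_mul (NeZero.ne l), h.g_pow]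

theorem g_mul_g_pow [NeZero l] (h : IsBookTriple l m ζ G X Y) : G * G ^ (l - 1) = 1 := by
  rw [mul_pow_sub_one (NeZero.ne l), h.g_pow]

theorem neg_x_mul_g_pow_mul_g_add_x [NeZero l] (h : IsBookTriple l m ζ G X Y) :
    -(X * G ^ (l - 1)) * G + X = 0 := by
  rw [neg_mul, mul_assoc, h.g_pow_mul_g, mul_one, neg_add_cancel]

theorem y_add_g_pow_mul_neg_g_pow_mul_y [NeZero l] (h : IsBookTriple l m ζ G X Y) :
    Y + G ^ m * -((G ^ (l - 1)) ^ m * Y) = 0 := by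
  rw [mul_neg, ← mul_assoc, ← (Commute.self_pow G (l - 1)).mul_pow, h.g_mul_g_pow, one_pow,
    one_mul, add_neg_cancel]

end IsBookTriple

section UniversalProperty

variable (k : Type) [Field k] (l m : ℕ) (ζ : k)

theorem isBookTriple_generators : IsBookTriple l m ζ (g k l m ζ) (x k l m ζ) (y k l m ζ) where
  x_pow := by simpa [x] using RingQuot.mkAlgHom_rel k (BookRel.xl (k := k) (m := m) (ζ := ζ))
  y_pow := by simpa [y] using RingQuot.mkAlgHom_rel k (BookRel.yl (k := k) (m := m) (ζ := ζ))
  g_pow := by simpa [g] using RingQuot.mkAlgHom_rel k (BookRel.gl (k := k) (m := m) (ζ := ζ))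
  g_x := by
    simpa [g, x, QCommute] using RingQuot.mkAlgHom_rel k (BookRel.gx (l := l) (m := m) (ζ := ζ))
  g_y := by
    simpa [g, y, QCommute] using RingQuot.mkAlgHom_rel k (BookRel.gy (l := l) (m := m) (ζ := ζ))
  x_y := by
    simpa [x, y, Commute, SemiconjBy] using
      RingQuot.mkAlgHom_rel k (BookRel.xy (k := k) (l := l) (m := m) (ζ := ζ))

theorem adjoin_generators : Algebra.adjoin k {g k l m ζ, x k l m ζ, y k l m ζ} = ⊤ := by
  have hrange : Set.range (RingQuot.mkAlgHom k (BookRel k l m ζ) ∘ FreeAlgebra.ι k) =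
      {g k l m ζ, x k l m ζ, y k l m ζ} := by
    ext a
    simp [Fin.exists_fin_succ, g, x, y, eq_comm]
  rw [← hrange, Set.range_comp, ← AlgHom.map_adjoin, FreeAlgebra.adjoin_range_ι,
    Algebra.map_top, AlgHom.range_eq_top]
  exact RingQuot.mkAlgHom_surjective k _

variable {k l m ζ} {A : Type*} [Semiring A] [Algebra k A]

theorem algHom_ext {f f' : H k l m ζ →ₐ[k] A} (hg : f (g k l m ζ) = f' (g k l m ζ))
    (hx : f (x k l m ζ) = f' (x k l m ζ)) (hy : f (y k l m ζ) = f' (y k l m ζ)) : f = f' :=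
  AlgHom.ext_of_adjoin_eq_top (adjoin_generators k l m ζ) <| by
    rintro _ (rfl | rfl | rfl) <;> assumption

/-- The algebra map out of `h(ζ,m)` sending the generators `g, x, y` to a given triple `G, X, Y`
satisfying the defining relations. -/
def lift {G X Y : A} (h : IsBookTriple l m ζ G X Y) : H k l m ζ →ₐ[k] A :=
  RingQuot.liftAlgHom k ⟨FreeAlgebra.lift k ![G, X, Y], fun _ _ hab => by
    cases hab <;> simp [h.x_pow, h.y_pow, h.g_pow, h.g_x.eq, h.g_y.eq, h.x_y.eq]⟩

variable {G X Y : A} (h : IsBookTriple l m ζ G X Y)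

@[simp]
theorem lift_g : lift h (g k l m ζ) = G := by simp [lift, g]

@[simp]
theorem lift_x : lift h (x k l m ζ) = X := by simp [lift, x]

@[simp]
theorem lift_y : lift h (y k l m ζ) = Y := by simp [lift, y]

end UniversalProperty

section HopfAlgebra

open MulOpposite TensorProduct

variable {k : Type} [Field k] {l m : ℕ} [NeZero l] {ζ : k}

/-- The comultiplication of `h(ζ,m)`. -/
def comul (hml : m.Coprime l) (hζ : IsPrimitiveRoot ζ l) :
    H k l m ζ →ₐ[k] H k l m ζ ⊗[k] H k l m ζ :=
  lift ((isBookTriple_generators k l m ζ).tmul hml hζ (isBookTriple_generators k l m ζ))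

/-- The counit of `h(ζ,m)`. -/
def counit : H k l m ζ →ₐ[k] k :=
  lift (.one_zero_zero l m ζ)

/-- The antipode of `h(ζ,m)`, as an algebra map to the opposite algebra. -/
def opAntipode (hζ : IsPrimitiveRoot ζ l) : H k l m ζ →ₐ[k] (H k l m ζ)ᵐᵒᵖ :=
  lift ((isBookTriple_generators k l m ζ).op_antipode hζ.pow_eq_one)

section Values

variable (hml : m.Coprime l) (hζ : IsPrimitiveRoot ζ l)

@[simp]
theorem comul_g : comul hml hζ (g k l m ζ) = g k l m ζ ⊗ₜ[k] g k l m ζ := lift_g _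

@[simp]
theorem comul_x :
    comul hml hζ (x k l m ζ) = x k l m ζ ⊗ₜ[k] g k l m ζ + 1 ⊗ₜ[k] x k l m ζ := lift_x _

@[simp]
theorem comul_y :
    comul hml hζ (y k l m ζ) = y k l m ζ ⊗ₜ[k] 1 + (g k l m ζ ^ m) ⊗ₜ[k] y k l m ζ := lift_y _

@[simp]
theorem counit_g : counit (g k l m ζ) = 1 := lift_g _

@[simp]
theorem counit_x : counit (x k l m ζ) = 0 := lift_x _

@[simp]
theorem counit_y : counit (y k l m ζ) = 0 := lift_y _

@[simp]
theorem opAntipode_g : opAntipode hζ (g k l m ζ) = op (g k l m ζ ^ (l - 1)) := lift_g _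

@[simp]
theorem opAntipode_x :
    opAntipode hζ (x k l m ζ) = op (-(x k l m ζ * g k l m ζ ^ (l - 1))) := lift_x _

@[simp]
theorem opAntipode_y :
    opAntipode hζ (y k l m ζ) = op (-((g k l m ζ ^ (l - 1)) ^ m * y k l m ζ)) := lift_y _

end Values

/-- The bialgebra structure of `h(ζ,m)`. -/
abbrev bialgebra (hml : m.Coprime l) (hζ : IsPrimitiveRoot ζ l) : Bialgebra k (H k l m ζ) :=
  .ofAlgHom (comul hml hζ) counit
    (by
      apply algHom_ext <;>
        simp [add_tmul, tmul_add, Algebra.TensorProduct.one_def,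
          Algebra.TensorProduct.tmul_pow, add_assoc])
    (by apply algHom_ext <;> simp)
    (by apply algHom_ext <;> simp)

theorem mul'_rTensor_opAntipode_comul_of_mem_generators (hml : m.Coprime l)
    (hζ : IsPrimitiveRoot ζ l) :
    ∀ a ∈ ({g k l m ζ, x k l m ζ, y k l m ζ} : Set (H k l m ζ)),
      LinearMap.mul' k (H k l m ζ)
          ((antiEnd (opAntipode hζ)).rTensor (H k l m ζ) (comul hml hζ a)) =
        algebraMap k (H k l m ζ) (counit a) := by
  rintro _ (rfl | rfl | rfl)
  · simp [(isBookTriple_generators k l m ζ).g_pow_mul_g]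
  · simpa using (isBookTriple_generators k l m ζ).neg_x_mul_g_pow_mul_g_add_x
  · simp

theorem mul'_lTensor_opAntipode_comul_of_mem_generators (hml : m.Coprime l)
    (hζ : IsPrimitiveRoot ζ l) :
    ∀ a ∈ ({g k l m ζ, x k l m ζ, y k l m ζ} : Set (H k l m ζ)),
      LinearMap.mul' k (H k l m ζ)
          ((antiEnd (opAntipode hζ)).lTensor (H k l m ζ) (comul hml hζ a)) =
        algebraMap k (H k l m ζ) (counit a) := by
  rintro _ (rfl | rfl | rfl)
  · simp [(isBookTriple_generators k l m ζ).g_mul_g_pow]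
  · simp
  · simpa using (isBookTriple_generators k l m ζ).y_add_g_pow_mul_neg_g_pow_mul_y

/-- The Hopf algebra structure of `h(ζ,m)`. -/
abbrev hopfAlgebra (hml : m.Coprime l) (hζ : IsPrimitiveRoot ζ l) : HopfAlgebra k (H k l m ζ) :=
  letI := bialgebra hml hζ
  hopfAlgebraOfAdjoinEqTop (opAntipode hζ) (adjoin_generators k l m ζ)
    (mul'_rTensor_opAntipode_comul_of_mem_generators hml hζ)
    (mul'_lTensor_opAntipode_comul_of_mem_generators hml hζ)

end HopfAlgebra

end Book

open Book in
theorem statement14_general (k : Type) [Field k] (l m : ℕ) [NeZero l] (hml : m.Coprime l) (ζ : k)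
    (hζ : IsPrimitiveRoot ζ l) :
    ∃ (comul : H k l m ζ →ₐ[k] (H k l m ζ ⊗[k] H k l m ζ))
      (counit : H k l m ζ →ₐ[k] k)
      (antipode : H k l m ζ →ₗ[k] H k l m ζ),
      (∀ a : H k l m ζ,
        (TensorProduct.assoc k (H k l m ζ) (H k l m ζ) (H k l m ζ))
            (LinearMap.rTensor (H k l m ζ) comul.toLinearMap (comul a)) =
          LinearMap.lTensor (H k l m ζ) comul.toLinearMap (comul a)) ∧
      (∀ a : H k l m ζ,
        (TensorProduct.lid k (H k l m ζ))
            (LinearMap.rTensor (H k l m ζ) counit.toLinearMap (comul a)) = a) ∧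
      (∀ a : H k l m ζ,
        (TensorProduct.rid k (H k l m ζ))
            (LinearMap.lTensor (H k l m ζ) counit.toLinearMap (comul a)) = a) ∧
      (∀ a : H k l m ζ,
        LinearMap.mul' k (H k l m ζ)
            (LinearMap.rTensor (H k l m ζ) antipode (comul a)) =
          algebraMap k (H k l m ζ) (counit a)) ∧
      (∀ a : H k l m ζ,
        LinearMap.mul' k (H k l m ζ)
            (LinearMap.lTensor (H k l m ζ) antipode (comul a)) =
          algebraMap k (H k l m ζ) (counit a)) ∧
      comul (x k l m ζ) = (x k l m ζ ⊗ₜ[k] g k l m ζ) + ((1 : H k l m ζ) ⊗ₜ[k] x k l m ζ) ∧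
      comul (y k l m ζ) = (y k l m ζ ⊗ₜ[k] (1 : H k l m ζ)) + ((g k l m ζ ^ m) ⊗ₜ[k] y k l m ζ) ∧
      comul (g k l m ζ) = g k l m ζ ⊗ₜ[k] g k l m ζ ∧
      counit (x k l m ζ) = 0 ∧
      counit (y k l m ζ) = 0 ∧
      counit (g k l m ζ) = 1 ∧
      antipode (x k l m ζ) = -(x k l m ζ * g k l m ζ ^ (l - 1)) ∧
      antipode (y k l m ζ) = -((g k l m ζ ^ (l - 1)) ^ m * y k l m ζ) ∧
      antipode (g k l m ζ) = g k l m ζ ^ (l - 1) :=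
  letI := hopfAlgebra hml hζ
  ⟨Bialgebra.comulAlgHom k (H k l m ζ), Bialgebra.counitAlgHom k (H k l m ζ),
    HopfAlgebra.antipode k, Coalgebra.coassoc_apply, fun a => by simp, fun a => by simp,
    HopfAlgebra.mul_antipode_rTensor_comul_apply, HopfAlgebra.mul_antipode_lTensor_comul_apply,
    comul_x hml hζ, comul_y hml hζ, comul_g hml hζ, counit_x, counit_y, counit_g,
    congrArg MulOpposite.unop (opAntipode_x hζ), congrArg MulOpposite.unop (opAntipode_y hζ),
    congrArg MulOpposite.unop (opAntipode_g hζ)⟩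

open Book in
/-- Andruskiewitsch–Hai book algebras: `h(ζ,m)` admits a Hopf algebra structure with the
indicated comultiplication, counit and antipode.  The Hopf algebra axioms (coassociativity,
counit law, bialgebra compatibility — `Δ` and `ε` being algebra maps — and the antipode law)
are stated explicitly. -/
theorem statement14 (k : Type) [Field k] [IsAlgClosed k] [CharZero k]
    (l m : ℕ) (hl : 2 ≤ l) (hm : 0 < m) (hgcd : Nat.gcd m l = 1)
    (ζ : k) (hζ : IsPrimitiveRoot ζ l) :
    ∃ (comul : H k l m ζ →ₐ[k] (H k l m ζ ⊗[k] H k l m ζ))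
      (counit : H k l m ζ →ₐ[k] k)
      (antipode : H k l m ζ →ₗ[k] H k l m ζ),
      -- coassociativity
      (∀ a : H k l m ζ,
        (TensorProduct.assoc k (H k l m ζ) (H k l m ζ) (H k l m ζ))
            (LinearMap.rTensor (H k l m ζ) comul.toLinearMap (comul a)) =
          LinearMap.lTensor (H k l m ζ) comul.toLinearMap (comul a)) ∧
      -- counit laws
      (∀ a : H k l m ζ,
        (TensorProduct.lid k (H k l m ζ))
            (LinearMap.rTensor (H k l m ζ) counit.toLinearMap (comul a)) = a) ∧
      (∀ a : H k l m ζ,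
        (TensorProduct.rid k (H k l m ζ))
            (LinearMap.lTensor (H k l m ζ) counit.toLinearMap (comul a)) = a) ∧
      -- antipode laws
      (∀ a : H k l m ζ,
        LinearMap.mul' k (H k l m ζ)
            (LinearMap.rTensor (H k l m ζ) antipode (comul a)) =
          algebraMap k (H k l m ζ) (counit a)) ∧
      (∀ a : H k l m ζ,
        LinearMap.mul' k (H k l m ζ)
            (LinearMap.lTensor (H k l m ζ) antipode (comul a)) =
          algebraMap k (H k l m ζ) (counit a)) ∧
      -- values on the generators
      comul (x k l m ζ) = (x k l m ζ ⊗ₜ[k] g k l m ζ) + ((1 : H k l m ζ) ⊗ₜ[k] x k l m ζ) ∧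
      comul (y k l m ζ) = (y k l m ζ ⊗ₜ[k] (1 : H k l m ζ)) + ((g k l m ζ ^ m) ⊗ₜ[k] y k l m ζ) ∧
      comul (g k l m ζ) = g k l m ζ ⊗ₜ[k] g k l m ζ ∧
      counit (x k l m ζ) = 0 ∧
      counit (y k l m ζ) = 0 ∧
      counit (g k l m ζ) = 1 ∧
      antipode (x k l m ζ) = -(x k l m ζ * g k l m ζ ^ (l - 1)) ∧
      antipode (y k l m ζ) = -((g k l m ζ ^ (l - 1)) ^ m * y k l m ζ) ∧
      antipode (g k l m ζ) = g k l m ζ ^ (l - 1) := by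
  have : NeZero l := ⟨by lia⟩
  exact statement14_general k l m hgcd ζ hζ
end
end
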